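/- For every fixed integer δ ≥ 3 there exists Δ₀ such that for every graph G of minimum degree δ and maximum degree Δ ≥ Δ₀, the inclusion chromatic index of G satisfies χ'_⊂(G) ≤ (1 + 4/δ)·Δ + 4·Δ^{2/3}·(log Δ)^4, where log denotes the natural logarithm. -/

import Mathlib

/-!
The colouring has three kinds of colours. Fix a scale `n` with `n ^ 16 ≤ Δ`, roughly
`n = Δ ^ (1 / 16)`, call a vertex small if its degree is less than `D = n`, and take `M = n ^ 2`
blocks. Every vertex gets a type: one bit for each block. Every edge with a large end is put either
in a block or in the main part, an edge between two large vertices only in blocks in which their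
bits agree. Each block has two sets of colours, one for each value of the bit of the large end of
an edge; the main part has its own colours; by Vizing's theorem each of these classes needs just
one colour more than its maximum degree. Edges between small vertices are coloured with
`O(n ^ 4)` further colours, read off a proper colouring of the square of the graph of small
vertices (`index_le_of_blocks`).

Consequently, an edge `xy` in block `i` with `x` large has a colour absent at a large vertex `z` as
soon as `τ x i ≠ τ z i`. This certifies that palettes are not included in each other:

* between adjacent large `x` and `z`, `x` needs one edge in a block where `x` and `z` have different
  bits; it has at least `n` edges with almost independent blocks, so this fails with exponentially
  small probability;
* a small `u` without small neighbours needs, for each neighbour `v`, an edge to some `x` in a block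
  where `x` and `v` differ. It suffices that two edges at `u` to vertices with different bits share
  a block, or, at degree three, that the blocks of the edges tell the neighbours cyclically apart
  (`config_law_four`, `config_law_three`);
* a small `u` with small neighbours `v` and `w` is told from `v` by the colour of the edge `uw`,
  because of the colouring of the square. If `v` is its only small neighbour, some edge of `u`
  is put in a block where `u` has bit `false` and `v` has bit `true`, while all blocks used at
  `v` are blocks where `v` has bit `false` (`leaf_law`);
* the remaining pairs follow by comparing degrees, or from an edge between small vertices.

Types are random bits, and a first application of the local lemma (`exists_types`) makes all
patterns on at most four vertices of a closed neighbourhood occur in nearly the expected number of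
blocks. Given the types, the blocks are chosen by independent agents: a small vertex for the edges
joining it to large vertices, and each edge between large vertices for itself. The law of an agent
starts with the few edges needed for its certificate and is then completed (`exists_completion`),
so that each single edge uses every block with probability at most `c / M`, or at most
`2 c / M` when only half of the blocks are available, and stays in the main part with probability
at most `1 - f`. A second application of the local lemma (`exists_blocks`) keeps all loads near
their means. With `c = 17 / (5 δ)` and `f = min 1 (49 c / 50)` the main part takes about
`(1 - f) Δ` colours and the blocks about `2 c Δ`, altogether less than `(1 + 4 / δ) Δ`
by a margin linear in `Δ`, so the lower-order terms are absorbed for large `Δ`.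
-/

/-- The palette of a vertex `v` under an edge colouring `c` of `G`:
the set of colours appearing on edges incident with `v`. -/
def palette {V : Type*} (G : SimpleGraph V) (c : Sym2 V → ℕ) (v : V) : Set ℕ :=
  {n : ℕ | ∃ u : V, G.Adj v u ∧ c s(v, u) = n}

/-- `c` is a proper edge colouring of `G`: adjacent edges receive distinct colours. -/
def IsProperEdgeColoring {V : Type*} (G : SimpleGraph V) (c : Sym2 V → ℕ) : Prop :=
  ∀ u v w : V, G.Adj u v → G.Adj u w → v ≠ w → c s(u, v) ≠ c s(u, w)

/-- `c` is an inclusion-free colouring of `G`: a proper edge colouring such that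
for every edge `uv`, the palette of `u` is not contained in the palette of `v`. -/
def IsInclusionFree {V : Type*} (G : SimpleGraph V) (c : Sym2 V → ℕ) : Prop :=
  IsProperEdgeColoring G c ∧ ∀ u v : V, G.Adj u v → ¬ palette G c u ⊆ palette G c v

/-- The inclusion chromatic index: the least number of colours admitting an
inclusion-free colouring of `G`. -/
noncomputable def inclusionChromaticIndex {V : Type*} (G : SimpleGraph V) : ℕ :=
  sInf {k : ℕ | ∃ c : Sym2 V → ℕ, IsInclusionFree G c ∧ ∀ e ∈ G.edgeSet, c e < k}

/-! ### Vizing's theorem -/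

/-- `c` assigns distinct values to any two edges of `H` sharing a vertex. -/
def ProperOn {V κ : Type*} (H : SimpleGraph V) (c : Sym2 V → κ) : Prop :=
  ∀ u v w : V, H.Adj u v → H.Adj u w → v ≠ w → c s(u, v) ≠ c s(u, w)

/-- The colour `α` is missing at `v`. -/
def Miss {V κ : Type*} (H : SimpleGraph V) (c : Sym2 V → κ) (v : V) (α : κ) : Prop :=
  ∀ w, H.Adj v w → c s(v, w) ≠ α

/-- Vizing fans centred at `x`, listed from the last vertex back to the uncoloured end `y`: the
colour of the edge from `x` to each entry is missing at the next entry of the list. -/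
inductive Fan {V κ : Type*} (H : SimpleGraph V) (c : Sym2 V → κ) (x y : V) : List V → Prop
  | base : Fan H c x y [y]
  | cons (z z' : V) (t : List V) : z ∉ z' :: t → H.Adj x z → Miss H c z' (c s(x, z)) →
      Fan H c x y (z' :: t) → Fan H c x y (z :: z' :: t)

section Vizing

variable {V κ : Type*} {H : SimpleGraph V} {c : Sym2 V → κ} {x y : V}

theorem Fan.ne_center (hxy : x ≠ y) {l : List V} (h : Fan H c x y l) : ∀ w ∈ l, w ≠ x := by
  induction h with
  | base => intro w hw; simp at hw; subst hw; exact hxy.symm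
  | cons z z' t hz hadj hm hf ih =>
    intro w hw
    rcases List.mem_cons.1 hw with rfl | hw
    · exact hadj.ne'
    · exact ih w hw

theorem Fan.suffix {l : List V} (h : Fan H c x y l) : ∀ w ∈ l, ∃ t, Fan H c x y (w :: t) := by
  induction h with
  | base => intro w hw; simp at hw; subst hw; exact ⟨[], .base⟩
  | cons z z' t hz hadj hm hf ih =>
    intro w hw
    rcases List.mem_cons.1 hw with rfl | hw
    · exact ⟨_, .cons _ _ _ hz hadj hm hf⟩
    · exact ih w hw

theorem Fan.congr {c' : Sym2 V → κ} {l : List V} (h : Fan H c x y l)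
    (hc : ∀ w ∈ l, c' s(x, w) = c s(x, w))
    (hm : ∀ w ∈ l, ∀ α, Miss H c w α → Miss H c' w α) : Fan H c' x y l := by
  induction h with
  | base => exact .base
  | cons z z' t hz hadj hm' hf ih =>
    refine .cons z z' t hz hadj ?_ (ih (fun w hw => hc w (List.mem_cons_of_mem _ hw))
      (fun w hw => hm w (List.mem_cons_of_mem _ hw)))
    rw [hc z (by simp)]
    exact hm z' (by simp) _ hm'

/-- If one colour is missing both at the centre and at the last vertex of a fan, shifting the
colours along the fan frees a colour for the edge `xy`. -/
theorem Fan.shift [DecidableEq V] (hxy : x ≠ y) (hn : ¬ H.Adj x y) :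
    ∀ (l : List V) (z : V) (c : Sym2 V → κ) (α : κ), ProperOn H c → Fan H c x y (z :: l) →
      Miss H c x α → Miss H c z α →
      ∃ c' : Sym2 V → κ, ProperOn (H ⊔ SimpleGraph.edge x y) c' := by
  intro l
  induction l with
  | nil =>
    intro z c α hp hf hx hz
    cases hf
    refine ⟨Function.update c s(x, y) α, ?_⟩
    intro u v w huv huw hvw
    have key : ∀ v, H.Adj u v → Function.update c s(x, y) α s(u, v) = c s(u, v) := by
      intro v h
      rw [Function.update_of_ne]
      intro h'
      have : s(x, y) ∈ H.edgeSet := h' ▸ h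
      exact hn this
    have key2 : ∀ v w, H.Adj u v → s(u, w) = s(x, y) → Function.update c s(x, y) α s(u, v) ≠
        Function.update c s(x, y) α s(u, w) := by
      intro v w h h'
      rw [key v h, h', Function.update_self]
      rcases Sym2.eq_iff.1 h' with ⟨rfl, rfl⟩ | ⟨rfl, rfl⟩
      · exact hx v h
      · exact hz v h
    have tr : ∀ v, (H ⊔ SimpleGraph.edge x y).Adj u v → H.Adj u v ∨ s(u, v) = s(x, y) := by
      intro v h
      rcases h with h | h
      · exact .inl h
      · rw [SimpleGraph.edge_adj] at h
        right; rw [Sym2.eq_iff]; exact h.1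
    rcases tr v huv with h1 | h1 <;> rcases tr w huw with h2 | h2
    · rw [key v h1, key w h2]; exact hp u v w h1 h2 hvw
    · exact key2 v w h1 h2
    · exact (key2 w v h2 h1).symm
    · exact absurd (Sym2.congr_right.1 (h1.trans h2.symm)) hvw
  | cons z' t ih =>
    intro z c α hp hf hx hz
    have hne := hf.ne_center hxy
    cases hf with
    | cons _ _ _ hzt hadj hm hf' =>
    have hzx : z ≠ x := hadj.ne'
    have off : ∀ v w, v ≠ x → v ≠ z → Function.update c s(x, z) α s(v, w) = c s(v, w) := by
      intro v w h1 h2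
      rw [Function.update_of_ne]
      intro h
      rcases Sym2.eq_iff.1 h with ⟨h, _⟩ | ⟨h, _⟩
      · exact h1 h
      · exact h2 h
    have offx : ∀ w, w ≠ z → Function.update c s(x, z) α s(x, w) = c s(x, w) := by
      intro w h
      rw [Function.update_of_ne]
      intro h'
      exact h (Sym2.congr_right.1 h')
    refine ih z' (Function.update c s(x, z) α) (c s(x, z)) ?_ ?_ ?_ ?_
    · intro u v w huv huw hvw
      have key : ∀ v w, H.Adj u v → H.Adj u w → v ≠ w → s(u, w) = s(x, z) →
          Function.update c s(x, z) α s(u, v) ≠ Function.update c s(x, z) α s(u, w) := by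
        intro v w h h1 hvw h'
        rw [h', Function.update_self, Function.update_of_ne]
        · rcases Sym2.eq_iff.1 h' with ⟨rfl, rfl⟩ | ⟨rfl, rfl⟩
          · exact hx v h
          · exact hz v h
        · rw [← h']; intro h2; exact hvw (Sym2.congr_right.1 h2)
      by_cases h1 : s(u, v) = s(x, z)
      · exact (key w v huw huv hvw.symm h1).symm
      by_cases h2 : s(u, w) = s(x, z)
      · exact key v w huv huw hvw h2
      rw [Function.update_of_ne h1, Function.update_of_ne h2]
      exact hp u v w huv huw hvw
    · refine hf'.congr (fun w hw => offx w (by rintro rfl; exact hzt hw)) ?_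
      intro w hw β hβ v hv
      rw [off w v (hne w (List.mem_cons_of_mem _ hw)) (by rintro rfl; exact hzt hw)]
      exact hβ v hv
    · intro w hw
      by_cases h : w = z
      · subst h; rw [Function.update_self]; exact (hx w hw).symm
      · rw [offx w h]; exact hp x w z hw hadj h
    · intro w hw
      rw [off z' w (hne z' (by simp)) (by rintro rfl; exact hzt (by simp))]
      exact hm w hw

end Vizing

/-- A connected graph of maximum degree at most two has at most two vertices of degree at most
one. -/
theorem three_ends {W : Type*} [Fintype W] (K : SimpleGraph W) [DecidableRel K.Adj]
    (hK : K.Connected) (h2 : ∀ v, K.degree v ≤ 2) (a b d : W) (hab : a ≠ b) (had : a ≠ d)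
    (hbd : b ≠ d) (ha : K.degree a ≤ 1) (hb : K.degree b ≤ 1) (hd : K.degree d ≤ 1) : False := by
  classical
  have h1 := hK.card_vert_le_card_edgeSet_add_one
  have h3 := K.sum_degrees_eq_twice_card_edges
  rw [Nat.card_eq_fintype_card, Nat.card_eq_fintype_card, ← SimpleGraph.edgeFinset_card] at h1
  have h4 : ∑ v, (K.degree v + if v ∈ ({a, b, d} : Finset W) then 1 else 0) ≤ ∑ v : W, 2 := by
    refine Finset.sum_le_sum fun v _ => ?_
    split_ifs with h
    · simp at h
      rcases h with rfl | rfl | rfl <;> omega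
    · exact h2 v
  rw [Finset.sum_add_distrib, h3, Finset.sum_boole] at h4
  have h5 : (Finset.univ.filter fun v => v ∈ ({a, b, d} : Finset W)).card = 3 := by
    rw [Finset.filter_mem_eq_inter, Finset.univ_inter]
    exact Finset.card_eq_three.2 ⟨a, b, d, hab, had, hbd, rfl⟩
  simp only [Nat.cast_id] at h4
  rw [h5] at h4
  simp at h4
  omega

section Vizing2

variable {V κ : Type*} {H : SimpleGraph V} {c : Sym2 V → κ}

/-- The subgraph of `H` formed by the edges of colours `α` and `β`. -/
def kempe (H : SimpleGraph V) (c : Sym2 V → κ) (α β : κ) : SimpleGraph V where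
  Adj u v := H.Adj u v ∧ (c s(u, v) = α ∨ c s(u, v) = β)
  symm := ⟨fun u v h => ⟨h.1.symm, by rw [Sym2.eq_swap]; exact h.2⟩⟩
  loopless := ⟨fun u h => H.loopless.irrefl u h.1⟩

theorem kempe_not_three [Fintype V] (hp : ProperOn H c) {α β : κ} {a b d : V} (hab : a ≠ b)
    (had : a ≠ d) (hbd : b ≠ d) (ha : Miss H c a α) (hb : Miss H c b β) (hd : Miss H c d β)
    (h1 : (kempe H c α β).Reachable a b) (h2 : (kempe H c α β).Reachable a d) : False := by
  classical
  set K := kempe H c α β with hKdef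
  let C := K.connectedComponentMk a
  have degle : ∀ (v : C) (s : Finset κ), (∀ w, K.Adj v w → c s((v : V), w) ∈ s) →
      C.toSimpleGraph.degree v ≤ s.card := by
    intro v s hs
    rw [← SimpleGraph.card_neighborFinset_eq_degree]
    refine Finset.card_le_card_of_injOn (fun w => c s((v : V), (w : V))) ?_ ?_
    · intro w hw
      simp only [Finset.mem_coe, SimpleGraph.mem_neighborFinset] at hw
      exact hs w hw
    · intro w hw w' hw' he
      simp only [Finset.mem_coe, SimpleGraph.mem_neighborFinset] at hw hw'
      by_contra hne
      have hw1 : K.Adj v w := hw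
      have hw2 : K.Adj v w' := hw'
      exact hp v w w' hw1.1 hw2.1 (fun h => hne (Subtype.ext h)) he
  have ma : a ∈ C := rfl
  have mb : b ∈ C := SimpleGraph.ConnectedComponent.sound h1.symm
  have md : d ∈ C := SimpleGraph.ConnectedComponent.sound h2.symm
  refine three_ends C.toSimpleGraph C.connected_toSimpleGraph (fun v => ?_)
    ⟨a, ma⟩ ⟨b, mb⟩ ⟨d, md⟩ (by simpa using hab) (by simpa using had) (by simpa using hbd)
    ?_ ?_ ?_
  · refine (degle v {α, β} fun w hw => ?_).trans (Finset.card_le_two)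
    simpa using hw.2
  · refine (degle ⟨a, ma⟩ {β} fun w hw => ?_).trans (by simp)
    rcases hw.2 with h | h
    · exact absurd h (ha w hw.1)
    · simpa using h
  · refine (degle ⟨b, mb⟩ {α} fun w hw => ?_).trans (by simp)
    rcases hw.2 with h | h
    · simpa using h
    · exact absurd h (hb w hw.1)
  · refine (degle ⟨d, md⟩ {α} fun w hw => ?_).trans (by simp)
    rcases hw.2 with h | h
    · simpa using h
    · exact absurd h (hd w hw.1)

/-- Interchanging two colours on one Kempe component keeps the colouring proper, and changes the
missing colours exactly by the interchange inside the component. -/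
theorem kempe_swap (hp : ProperOn H c) (α β : κ) (z : V) [DecidableEq κ] :
    ∃ c' : Sym2 V → κ, ProperOn H c' ∧
      (∀ v w, H.Adj v w → (kempe H c α β).Reachable z v →
        c' s(v, w) = Equiv.swap α β (c s(v, w))) ∧
      (∀ v w, H.Adj v w → ¬ (kempe H c α β).Reachable z v → c' s(v, w) = c s(v, w)) := by
  classical
  set K := kempe H c α β with hK
  let c' : Sym2 V → κ := fun e => if ∀ v ∈ e, K.Reachable z v then Equiv.swap α β (c e) else c e
  have hin : ∀ v w, H.Adj v w → K.Reachable z v → c' s(v, w) = Equiv.swap α β (c s(v, w)) := by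
    intro v w h hv
    by_cases hw : K.Reachable z w
    · simp only [c']
      rw [if_pos]
      intro u hu
      rcases Sym2.mem_iff.1 hu with rfl | rfl <;> assumption
    · simp only [c']
      rw [if_neg (fun h' => hw (h' w (by simp)))]
      have : ¬ K.Adj v w := fun h' => hw (hv.trans h'.reachable)
      have h3 : ¬ (c s(v, w) = α ∨ c s(v, w) = β) := fun h' => this ⟨h, h'⟩
      push Not at h3
      rw [Equiv.swap_apply_of_ne_of_ne h3.1 h3.2]
  have hout : ∀ v w, H.Adj v w → ¬ K.Reachable z v → c' s(v, w) = c s(v, w) := by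
    intro v w h hv
    simp only [c']
    rw [if_neg (fun h' => hv (h' v (by simp)))]
  refine ⟨c', ?_, hin, hout⟩
  intro u v w huv huw hvw
  by_cases hu : K.Reachable z u
  · rw [hin u v huv hu, hin u w huw hu]
    exact fun h => hp u v w huv huw hvw ((Equiv.swap α β).injective h)
  · rw [hout u v huv hu, hout u w huw hu]
    exact hp u v w huv huw hvw

/-- The inductive step of Vizing's theorem: if every vertex misses a colour, one more edge can be
coloured. -/
theorem vizing_step [Fintype V] {x y : V} (hp : ProperOn H c) (hxy : x ≠ y) (hn : ¬ H.Adj x y)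
    (hmiss : ∀ v, ∃ α, Miss H c v α) :
    ∃ c' : Sym2 V → κ, ProperOn (H ⊔ SimpleGraph.edge x y) c' := by
  classical
  by_contra hcon
  -- no colour is missing at the centre and at a fan vertex simultaneously
  have hno : ∀ z t α, Fan H c x y (z :: t) → Miss H c x α → ¬ Miss H c z α :=
    fun z t α hf hx hz => hcon (Fan.shift hxy hn t z c α hp hf hx hz)
  -- the ends of fans; the colour `m z` missing at such an end `z` occurs at `x`, on an edge to
  -- another end, which is never `y`: so two ends miss the same colour
  let R : Set V := {z | ∃ t, Fan H c x y (z :: t)}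
  choose m hm using hmiss
  have hpz : ∀ z : R, ∃ w : R, (w : V) ≠ y ∧ H.Adj x w ∧ c s(x, (w : V)) = m z := by
    rintro ⟨z, t, hf⟩
    have : ¬ Miss H c x (m z) := fun h => hno z t _ hf h (hm z)
    simp only [Miss] at this
    push Not at this
    obtain ⟨w, hw, hc⟩ := this
    refine ⟨⟨w, ?_⟩, ?_, hw, hc⟩
    · by_cases hmem : w ∈ z :: t
      · exact hf.suffix w hmem
      · exact ⟨_, .cons w z t hmem hw (by rw [hc]; exact hm z) hf⟩
    · intro h; exact hn (h ▸ hw)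
  choose p hp1 hp2 hp3 using hpz
  have hninj : ¬ Function.Injective p := by
    intro hinj
    obtain ⟨w, hw⟩ := (Finite.surjective_of_injective hinj) ⟨y, [], .base⟩
    exact hp1 w (by rw [hw])
  have hpair : ∃ z z' : R, z ≠ z' ∧ m z = m z' := by
    simp only [Function.Injective] at hninj
    push Not at hninj
    obtain ⟨z, z', h, hne⟩ := hninj
    exact ⟨z, z', hne, by rw [← hp3 z, ← hp3 z', h]⟩
  obtain ⟨z, z', hne, hmm⟩ := hpair
  have hz'β : Miss H c z' (m z) := hmm ▸ hm z'
  set α := m x with hα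
  set β := m z with hβ
  have hRx : ∀ w : R, x ≠ w := by
    rintro ⟨w, t, hf⟩
    exact (hf.ne_center hxy w (by simp)).symm
  -- `x` and these two ends cannot all be ends of one Kempe chain, so a shortest fan exists whose end
  -- misses `β` and lies off the chain of `x`; swapping the chain of that end keeps the fan
  have hexists : ∃ n, ∃ w t, Fan H c x y (w :: t) ∧ t.length = n ∧ Miss H c w β ∧
      ¬ (kempe H c α β).Reachable x w := by
    by_contra hall
    push Not at hall
    obtain ⟨t, ht⟩ := z.2
    obtain ⟨t', ht'⟩ := z'.2
    exact kempe_not_three hp (hRx z) (hRx z') (fun h => hne (Subtype.ext h)) (hm x) (hm z)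
      hz'β (hall _ z t ht rfl (hm z)) (hall _ z' t' ht' rfl hz'β)
  obtain ⟨w, t, hf, hlen, hwβ, hwx⟩ := Nat.find_spec hexists
  have hmin : ∀ w' t', Fan H c x y (w' :: t') → t'.length < t.length → Miss H c w' β →
      (kempe H c α β).Reachable x w' := by
    intro w' t' hf' hl hm'
    by_contra hr
    exact Nat.find_min hexists (hlen ▸ hl) ⟨w', t', hf', rfl, hm', hr⟩
  obtain ⟨c', hp', hin, hout⟩ := kempe_swap hp α β w
  have hxC : ¬ (kempe H c α β).Reachable w x := fun h => hwx h.symm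
  have hfan : ∀ l, Fan H c x y l → l.length ≤ t.length + 1 → Fan H c' x y l := by
    intro l hl
    induction hl with
    | base => intro _; exact .base
    | cons a a' s h1 h2 h3 h4 ih =>
      intro hls
      simp only [List.length_cons] at hls
      refine .cons a a' s h1 h2 ?_ (ih (by simp; omega))
      rw [hout x a h2 hxC]
      intro v hv
      by_cases hr : (kempe H c α β).Reachable w a'
      · rw [hin a' v hv hr]
        have e1 : c s(x, a) ≠ α := hm x a h2
        have e2 : c s(x, a) ≠ β := by
          intro he
          have := hmin a' s h4 (by omega) (he ▸ h3)
          exact hwx (this.trans hr.symm)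
        intro he
        rw [Equiv.swap_apply_eq_iff, Equiv.swap_apply_of_ne_of_ne e1 e2] at he
        exact h3 v hv he
      · rw [hout a' v hv hr]; exact h3 v hv
  refine hcon (Fan.shift hxy hn t w c' α hp' (hfan _ hf (by simp)) ?_ ?_)
  · intro v hv
    rw [hout x v hv hxC]; exact hm x v hv
  · intro v hv he
    rw [hin w v hv (SimpleGraph.Reachable.refl _), Equiv.swap_apply_eq_iff,
      Equiv.swap_apply_left] at he
    exact hwβ v hv he

end Vizing2

/-- Vizing's theorem, by induction on the number of edges. -/
theorem vizing {V : Type*} [Fintype V] (k : ℕ) (G : SimpleGraph V)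
    (hG : ∀ v, (G.neighborSet v).ncard ≤ k) : ∃ c : Sym2 V → Fin (k + 1), ProperOn G c := by
  classical
  induction hn : G.edgeSet.ncard using Nat.strong_induction_on generalizing G with
  | _ n ih =>
  by_cases hE : ∃ x y, G.Adj x y
  · obtain ⟨x, y, hxy⟩ := hE
    set H := G.deleteEdges {s(x, y)} with hH
    have hle : H ≤ G := SimpleGraph.deleteEdges_le _
    have hdeg : ∀ v, (H.neighborSet v).ncard ≤ k := fun v =>
      (Set.ncard_le_ncard (fun w hw => hle hw) (Set.toFinite _)).trans (hG v)
    obtain ⟨c, hc⟩ := ih H.edgeSet.ncard (by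
      rw [← hn]
      refine Set.ncard_lt_ncard ?_ (Set.toFinite _)
      rw [hH, SimpleGraph.edgeSet_deleteEdges]
      refine ⟨Set.sdiff_subset, fun h => ?_⟩
      have := h (show s(x, y) ∈ G.edgeSet from hxy)
      simp at this) H hdeg rfl
    obtain ⟨c', hc'⟩ := vizing_step (x := x) (y := y) hc hxy.ne (by simp [hH]) (by
      intro v
      by_contra hcon
      simp only [Miss] at hcon
      push Not at hcon
      have : (Set.univ : Set (Fin (k + 1))) ⊆
          Set.image (fun w => c s(v, w)) (H.neighborSet v) := by
        intro α _
        obtain ⟨w, hw, he⟩ := hcon α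
        exact ⟨w, hw, he⟩
      have h1 := Set.ncard_le_ncard this (Set.toFinite _)
      have h2 := Set.ncard_image_le (f := fun w => c s(v, w)) (Set.toFinite (H.neighborSet v))
      have h3 := hdeg v
      rw [Set.ncard_univ, Nat.card_eq_fintype_card, Fintype.card_fin] at h1
      omega)
    refine ⟨c', fun u v w huv huw hvw => hc' u v w ?_ ?_ hvw⟩
    all_goals
      rw [SimpleGraph.sup_adj, SimpleGraph.edge_adj, hH, SimpleGraph.deleteEdges_adj]
    · by_cases h : s(u, v) = s(x, y)
      · right; exact ⟨Sym2.eq_iff.1 h, huv.ne⟩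
      · left; exact ⟨huv, h⟩
    · by_cases h : s(u, w) = s(x, y)
      · right; exact ⟨Sym2.eq_iff.1 h, huw.ne⟩
      · left; exact ⟨huw, h⟩
  · push Not at hE
    exact ⟨fun _ => 0, fun u v w h => absurd h (hE u v)⟩

/-! ### Finite product probability, a Chernoff bound and the local lemma -/

open Finset in
/-- Expectation of `F` when the coordinates `ω a` are independent, `ω a` having law `p a`. -/
noncomputable def EE {A Ω : Type*} [Fintype A] [DecidableEq A] [Fintype Ω] (p : A → Ω → ℝ)
    (F : (A → Ω) → ℝ) : ℝ := ∑ ω, (∏ a, p a (ω a)) * F ω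

/-- Probability of the event `B` under the product law. -/
noncomputable def PP {A Ω : Type*} [Fintype A] [DecidableEq A] [Fintype Ω] (p : A → Ω → ℝ)
    (B : Set (A → Ω)) : ℝ := EE p (B.indicator 1)

/-- A probability mass function on a finite type. -/
structure IsLaw {Ω : Type*} [Fintype Ω] (p : Ω → ℝ) : Prop where
  nonneg : ∀ o, 0 ≤ p o
  sum_one : ∑ o, p o = 1

section Prob

variable {A Ω : Type*} [Fintype A] [DecidableEq A] [Fintype Ω] {p : A → Ω → ℝ}

theorem EE_add (F G : (A → Ω) → ℝ) : EE p (fun ω => F ω + G ω) = EE p F + EE p G := by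
  simp [EE, mul_add, Finset.sum_add_distrib]

theorem EE_const_mul (r : ℝ) (F : (A → Ω) → ℝ) : EE p (fun ω => r * F ω) = r * EE p F := by
  simp only [EE, Finset.mul_sum]
  exact Finset.sum_congr rfl fun ω _ => by ring

theorem EE_sum {ι : Type*} (s : Finset ι) (F : ι → (A → Ω) → ℝ) :
    EE p (fun ω => ∑ i ∈ s, F i ω) = ∑ i ∈ s, EE p (F i) := by
  simp only [EE, Finset.mul_sum]
  exact Finset.sum_comm

theorem EE_mono (hp : ∀ a, IsLaw (p a)) {F G : (A → Ω) → ℝ} (h : ∀ ω, F ω ≤ G ω) :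
    EE p F ≤ EE p G :=
  Finset.sum_le_sum fun ω _ =>
    mul_le_mul_of_nonneg_left (h ω) (Finset.prod_nonneg fun a _ => (hp a).nonneg _)

theorem EE_prod (φ : A → Ω → ℝ) :
    EE p (fun ω => ∏ a, φ a (ω a)) = ∏ a, ∑ o, p a o * φ a o := by
  classical
  rw [Finset.prod_univ_sum]
  simp [EE, Finset.prod_mul_distrib, Fintype.piFinset_univ]

theorem EE_one (hp : ∀ a, IsLaw (p a)) : EE p (fun _ => 1) = 1 := by
  have := EE_prod (p := p) (fun _ _ => 1)
  simpa [(hp _).sum_one] using this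

theorem EE_nonneg (hp : ∀ a, IsLaw (p a)) {F : (A → Ω) → ℝ} (h : ∀ ω, 0 ≤ F ω) : 0 ≤ EE p F :=
  Finset.sum_nonneg fun ω _ => mul_nonneg (Finset.prod_nonneg fun a _ => (hp a).nonneg _) (h ω)

theorem EE_coord (hp : ∀ a, IsLaw (p a)) (a : A) (φ : Ω → ℝ) :
    EE p (fun ω => φ (ω a)) = ∑ o, p a o * φ o := by
  have := EE_prod (p := p) (fun b o => if b = a then φ o else 1)
  simp only [Finset.prod_ite_eq', Finset.mem_univ, if_true] at this
  rw [this, Finset.prod_eq_single a]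
  · simp
  · intro b _ hb
    simp [hb, (hp b).sum_one]
  · simp

/-- Functions of disjoint sets of coordinates are uncorrelated. -/
theorem EE_mul (hp : ∀ a, IsLaw (p a)) {F G : (A → Ω) → ℝ} {S T : Set A} (hF : DependsOn F S)
    (hG : DependsOn G T) (hST : Disjoint S T) :
    EE p (fun ω => F ω * G ω) = EE p F * EE p G := by
  classical
  have h1 : EE p F * EE p G = ∑ q : (A → Ω) × (A → Ω),
      ((∏ a, p a (q.1 a)) * F q.1) * ((∏ a, p a (q.2 a)) * G q.2) := by
    rw [EE, EE, Finset.sum_mul_sum, ← Finset.univ_product_univ, Finset.sum_product]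
  have h2 : EE p (fun ω => F ω * G ω) = ∑ q : (A → Ω) × (A → Ω),
      ((∏ a, p a (q.1 a)) * (F q.1 * G q.1)) * ((∏ a, p a (q.2 a)) * 1) := by
    have h3 : EE p (fun ω => F ω * G ω) = EE p (fun ω => F ω * G ω) * EE p (fun _ => 1) := by
      rw [EE_one hp, mul_one]
    rw [h3, EE, EE, Finset.sum_mul_sum, ← Finset.univ_product_univ, Finset.sum_product]
  rw [h1, h2]
  -- exchange the coordinates outside `S` between the two independent copies
  let σ : (A → Ω) × (A → Ω) → (A → Ω) × (A → Ω) :=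
    fun q => (S.piecewise q.1 q.2, S.piecewise q.2 q.1)
  have hσ : Function.Involutive σ := by
    rintro ⟨a, b⟩
    simp only [σ, Prod.mk.injEq]
    constructor <;> ext i <;> by_cases hi : i ∈ S <;> simp [Set.piecewise, hi]
  refine Fintype.sum_equiv hσ.toPerm _ _ ?_
  rintro ⟨a, b⟩
  simp only [Function.Involutive.coe_toPerm, σ]
  have hFa : F (S.piecewise a b) = F a := hF fun i hi => by simp [Set.piecewise, hi]
  have hGa : G (S.piecewise b a) = G a := hG fun i hi => by
    have : i ∉ S := fun h => Set.disjoint_left.1 hST h hi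
    simp [Set.piecewise, this]
  have hw : (∏ i, p i (S.piecewise a b i)) * (∏ i, p i (S.piecewise b a i)) =
      (∏ i, p i (a i)) * (∏ i, p i (b i)) := by
    rw [← Finset.prod_mul_distrib, ← Finset.prod_mul_distrib]
    refine Finset.prod_congr rfl fun i _ => ?_
    by_cases hi : i ∈ S
    · simp [Set.piecewise, hi]
    · simp [Set.piecewise, hi, mul_comm]
  rw [hFa, hGa]
  linear_combination (-(F a * G a)) * hw

theorem EE_prod_indep {ι : Type*} (hp : ∀ a, IsLaw (p a)) (s : Finset ι)
    (F : ι → (A → Ω) → ℝ) (T : ι → Set A) (hF : ∀ k ∈ s, DependsOn (F k) (T k))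
    (hT : ∀ k ∈ s, ∀ l ∈ s, k ≠ l → Disjoint (T k) (T l)) :
    EE p (fun ω => ∏ k ∈ s, F k ω) = ∏ k ∈ s, EE p (F k) := by
  classical
  induction s using Finset.induction_on with
  | empty => simpa using EE_one hp
  | insert k s hk ih =>
    simp only [Finset.prod_insert hk]
    rw [← ih (fun l hl => hF l (by simp [hl]))
      (fun l hl l' hl' => hT l (by simp [hl]) l' (by simp [hl']))]
    refine EE_mul (S := T k) (T := ⋃ l ∈ s, T l) hp (hF k (by simp)) ?_ ?_
    · intro a b hab
      refine Finset.prod_congr rfl fun l hl => hF l (by simp [hl]) fun i hi => hab i ?_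
      exact Set.mem_biUnion hl hi
    · rw [Set.disjoint_iUnion₂_right]
      intro l hl
      exact hT k (by simp) l (by simp [hl]) (by rintro rfl; exact hk hl)

/-- A Chernoff bound for sums of independent `[0,1]`-valued variables. -/
theorem chernoff {ι : Type*} (hp : ∀ a, IsLaw (p a)) (s : Finset ι)
    (X : ι → (A → Ω) → ℝ) (T : ι → Set A) (hX : ∀ k ∈ s, DependsOn (X k) (T k))
    (hT : ∀ k ∈ s, ∀ l ∈ s, k ≠ l → Disjoint (T k) (T l))
    (h01 : ∀ k ∈ s, ∀ ω, 0 ≤ X k ω ∧ X k ω ≤ 1) {m t N : ℝ} (hm : ∑ k ∈ s, EE p (X k) ≤ m)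
    (hmN : m ≤ N) (ht : 0 < t) (htN : t ≤ 2 * N) :
    PP p {ω | m + t ≤ ∑ k ∈ s, X k ω} ≤ Real.exp (-(t ^ 2 / (4 * N))) := by
  have hN : 0 < N := by linarith
  set r := t / (2 * N) with hr
  have hr0 : 0 < r := by positivity
  have hr1 : r ≤ 1 := by rw [hr, div_le_one (by positivity)]; exact htN
  have hexp : Real.exp r - 1 ≤ r + r ^ 2 := by
    have := Real.abs_exp_sub_one_sub_id_le (x := r) (by rw [abs_of_pos hr0]; exact hr1)
    have := (abs_le.1 this).2
    linarith
  have hexp0 : 0 ≤ Real.exp r - 1 := by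
    have := Real.add_one_le_exp r
    linarith
  have hm0 : 0 ≤ m := le_trans (Finset.sum_nonneg fun k hk =>
    EE_nonneg hp fun ω => (h01 k hk ω).1) hm
  have hterm : ∀ k ∈ s, EE p (fun ω => Real.exp (r * X k ω)) ≤
      Real.exp ((Real.exp r - 1) * EE p (X k)) := by
    intro k hk
    have h1 : EE p (fun ω => Real.exp (r * X k ω)) ≤
        EE p (fun ω => 1 + (Real.exp r - 1) * X k ω) := by
      refine EE_mono hp fun ω => ?_
      obtain ⟨h0, h1⟩ := h01 k hk ω
      have := convexOn_exp.2 (Set.mem_univ 0) (Set.mem_univ r) (sub_nonneg.2 h1) h0 (by ring)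
      simp only [smul_eq_mul, mul_zero, zero_add, Real.exp_zero, mul_one] at this
      rw [mul_comm r]
      linarith
    rw [EE_add (fun _ => 1), EE_one hp, EE_const_mul] at h1
    have h2 := Real.add_one_le_exp ((Real.exp r - 1) * EE p (X k))
    linarith
  have hmgf : EE p (fun ω => ∏ k ∈ s, Real.exp (r * X k ω)) ≤ Real.exp ((r + r ^ 2) * m) := by
    rw [EE_prod_indep hp s _ T (fun k hk a b hab => by simp only [hX k hk hab]) hT]
    calc _ ≤ ∏ k ∈ s, Real.exp ((Real.exp r - 1) * EE p (X k)) :=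
          Finset.prod_le_prod (fun k _ => EE_nonneg hp fun ω => (Real.exp_pos _).le) hterm
      _ = Real.exp ((Real.exp r - 1) * ∑ k ∈ s, EE p (X k)) := by
          rw [← Real.exp_sum, Finset.mul_sum]
      _ ≤ _ := Real.exp_le_exp.2 (by
          calc _ ≤ (Real.exp r - 1) * m := mul_le_mul_of_nonneg_left hm hexp0
            _ ≤ _ := mul_le_mul_of_nonneg_right hexp hm0)
  have hmark : PP p {ω | m + t ≤ ∑ k ∈ s, X k ω} ≤
      EE p (fun ω => Real.exp (-(r * (m + t))) * ∏ k ∈ s, Real.exp (r * X k ω)) := by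
    refine EE_mono hp fun ω => ?_
    by_cases h : ω ∈ {ω | m + t ≤ ∑ k ∈ s, X k ω}
    · rw [Set.indicator_of_mem h, ← Real.exp_sum, ← Real.exp_add, ← Finset.mul_sum]
      refine Real.one_le_exp ?_
      have := mul_le_mul_of_nonneg_left h.out hr0.le
      linarith
    · rw [Set.indicator_of_notMem h]
      exact mul_nonneg (Real.exp_pos _).le (Finset.prod_nonneg fun k _ => (Real.exp_pos _).le)
  rw [EE_const_mul] at hmark
  refine hmark.trans ((mul_le_mul_of_nonneg_left hmgf (Real.exp_pos _).le).trans ?_)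
  rw [← Real.exp_add]
  refine Real.exp_le_exp.2 ?_
  have e1 : r ^ 2 * m ≤ r ^ 2 * N := mul_le_mul_of_nonneg_left hmN (by positivity)
  have e2 : r ^ 2 * N = t ^ 2 / (4 * N) := by rw [hr]; field_simp; ring
  have e3 : r * t = 2 * (t ^ 2 / (4 * N)) := by rw [hr]; field_simp; ring
  linarith

theorem PP_mono (hp : ∀ a, IsLaw (p a)) {B C : Set (A → Ω)} (h : B ⊆ C) : PP p B ≤ PP p C := by
  refine EE_mono hp fun ω => ?_
  exact Set.indicator_le_indicator_of_subset h (fun _ => zero_le_one) ω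

theorem PP_nonneg (hp : ∀ a, IsLaw (p a)) (B : Set (A → Ω)) : 0 ≤ PP p B :=
  EE_nonneg hp fun ω => Set.indicator_nonneg (fun _ _ => zero_le_one) ω

theorem PP_univ (hp : ∀ a, IsLaw (p a)) : PP p Set.univ = 1 := by
  rw [PP, Set.indicator_univ]; exact EE_one hp

theorem PP_biUnion_le {ι : Type*} (hp : ∀ a, IsLaw (p a)) (s : Finset ι)
    (B : ι → Set (A → Ω)) : PP p (⋃ i ∈ s, B i) ≤ ∑ i ∈ s, PP p (B i) := by
  rw [PP]
  simp only [PP]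
  rw [← EE_sum]
  refine EE_mono hp fun ω => ?_
  by_cases h : ω ∈ ⋃ i ∈ s, B i
  · rw [Set.indicator_of_mem h]
    obtain ⟨i, hi, hω⟩ := Set.mem_iUnion₂.1 h
    refine le_trans ?_ (Finset.single_le_sum (f := fun i => (B i).indicator 1 ω)
      (fun j _ => Set.indicator_nonneg (fun _ _ => zero_le_one) ω) hi)
    rw [Set.indicator_of_mem hω]
  · rw [Set.indicator_of_notMem h]
    exact Finset.sum_nonneg fun j _ => Set.indicator_nonneg (fun _ _ => zero_le_one) ω

theorem PP_union_le (hp : ∀ a, IsLaw (p a)) (B C : Set (A → Ω)) :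
    PP p (B ∪ C) ≤ PP p B + PP p C := by
  rw [PP, PP, PP, ← EE_add]
  refine EE_mono hp fun ω => ?_
  by_cases h : ω ∈ B <;> by_cases h' : ω ∈ C <;> simp [h, h']

theorem PP_sdiff (B C : Set (A → Ω)) : PP p (C \ B) = PP p C - PP p (B ∩ C) := by
  rw [eq_sub_iff_add_eq, PP, PP, PP, ← EE_add]
  congr 1
  ext ω
  by_cases h : ω ∈ B <;> by_cases h' : ω ∈ C <;> simp [h, h']

theorem PP_inter (hp : ∀ a, IsLaw (p a)) {B C : Set (A → Ω)} {S T : Set A}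
    (hB : DependsOn (· ∈ B) S) (hC : DependsOn (· ∈ C) T) (hST : Disjoint S T) :
    PP p (B ∩ C) = PP p B * PP p C := by
  have key : ∀ {B : Set (A → Ω)} {S : Set A}, DependsOn (· ∈ B) S →
      DependsOn (B.indicator (1 : (A → Ω) → ℝ)) S := by
    intro B S h a b hab
    have := h hab
    simp only [eq_iff_iff] at this
    by_cases ha : a ∈ B
    · rw [Set.indicator_of_mem ha, Set.indicator_of_mem (this.1 ha)]; rfl
    · rw [Set.indicator_of_notMem ha, Set.indicator_of_notMem (fun h => ha (this.2 h))]
  rw [PP, PP, PP, ← EE_mul hp (key hB) (key hC) hST]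
  congr 1
  ext ω
  by_cases h : ω ∈ B <;> by_cases h' : ω ∈ C <;> simp [h, h']

/-- The symmetric Lovász local lemma for events depending on few coordinates. The outcome found has
positive probability in every coordinate. -/
theorem local_lemma {U : Type*} [Fintype U] (hp : ∀ a, IsLaw (p a))
    (B : U → Set (A → Ω)) (T : U → Set A) (hB : ∀ u, DependsOn (· ∈ B u) (T u)) {q g : ℝ}
    (hg : ∀ u, ({u' | u' ≠ u ∧ ¬ Disjoint (T u) (T u')}.ncard : ℝ) ≤ g)
    (hq : ∀ u, PP p (B u) ≤ q) (hgq : 4 * g * q ≤ 1) (hq4 : q ≤ 1 / 4) :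
    ∃ ω, (∀ a, 0 < p a (ω a)) ∧ ∀ u, ω ∉ B u := by
  classical
  -- `none S`: no event of `S` occurs
  let none : Finset U → Set (A → Ω) := fun S => {ω | ∀ u ∈ S, ω ∉ B u}
  have claim : ∀ n : ℕ, ∀ S : Finset U, S.card = n → ∀ u,
      PP p (B u ∩ none S) ≤ 2 * q * PP p (none S) := by
    intro n
    induction n using Nat.strong_induction_on with
    | _ n ih =>
    intro S hS u
    have hq0 : 0 ≤ q := (PP_nonneg hp _).trans (hq u)
    by_cases huS : u ∈ S
    · have : B u ∩ none S = ∅ := by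
        ext ω; simp only [Set.mem_inter_iff, Set.mem_empty_iff_false, iff_false]
        rintro ⟨h1, h2⟩; exact h2 u huS h1
      rw [this]
      have h0 : PP p (∅ : Set (A → Ω)) = 0 := by simp [PP, EE]
      rw [h0]
      exact mul_nonneg (by positivity) (PP_nonneg hp _)
    set S1 := S.filter fun s => ¬ Disjoint (T u) (T s) with hS1
    set S2 := S.filter fun s => Disjoint (T u) (T s) with hS2
    have hind : PP p (B u ∩ none S2) = PP p (B u) * PP p (none S2) := by
      refine PP_inter (T := ⋃ s ∈ S2, T s) hp (hB u) ?_ ?_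
      · intro a b hab
        simp only [none, Set.mem_ofPred_eq]
        refine propext (forall₂_congr fun s hs => ?_)
        have := hB s (fun i hi => hab i (Set.mem_biUnion (s := (S2 : Set U)) hs hi))
        simpa using not_congr (Eq.to_iff this)
      · rw [Set.disjoint_iUnion₂_right]
        intro s hs
        exact (Finset.mem_filter.1 hs).2
    have hmono : PP p (B u ∩ none S) ≤ q * PP p (none S2) := by
      calc _ ≤ PP p (B u ∩ none S2) := PP_mono hp fun ω h =>
            ⟨h.1, fun s hs => h.2 s (Finset.mem_filter.1 hs).1⟩
        _ ≤ _ := by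
          rw [hind]; exact mul_le_mul_of_nonneg_right (hq u) (PP_nonneg hp _)
    have hhalf : PP p (none S2) ≤ 2 * PP p (none S) := by
      rcases S1.eq_empty_or_nonempty with he | hne
      · have : S2 = S := by
          rw [hS2, Finset.filter_eq_self]
          intro s hs
          by_contra h
          have : s ∈ S1 := Finset.mem_filter.2 ⟨hs, h⟩
          simp [he] at this
        rw [this]; linarith [PP_nonneg hp (none S)]
      have hcard : S2.card < n := by
        rw [← hS]
        refine Finset.card_lt_card (Finset.filter_ssubset.2 ?_)
        obtain ⟨s, hs⟩ := hne
        exact ⟨s, (Finset.mem_filter.1 hs).1, (Finset.mem_filter.1 hs).2⟩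
      have hsub : none S2 ⊆ none S ∪ ⋃ s ∈ S1, (B s ∩ none S2) := by
        intro ω hω
        by_cases h : ω ∈ none S
        · exact .inl h
        · right
          simp only [none, Set.mem_ofPred_eq] at h
          push Not at h
          obtain ⟨s, hs, hb⟩ := h
          refine Set.mem_biUnion (x := s) ?_ ⟨hb, hω⟩
          by_contra hs1
          have : s ∈ S2 := by
            rw [hS2, Finset.mem_filter]
            refine ⟨hs, ?_⟩
            by_contra h'
            exact hs1 (Finset.mem_coe.2 (Finset.mem_filter.2 ⟨hs, h'⟩))
          exact hω s this hb
      have h1 := (PP_mono hp hsub).trans (PP_union_le hp _ _)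
      have h2 := PP_biUnion_le hp S1 (fun s => B s ∩ none S2)
      have h3 : ∑ s ∈ S1, PP p (B s ∩ none S2) ≤ ∑ s ∈ S1, 2 * q * PP p (none S2) :=
        Finset.sum_le_sum fun s _ => ih _ hcard S2 rfl s
      rw [Finset.sum_const, nsmul_eq_mul] at h3
      have h4 : (S1.card : ℝ) ≤ g := by
        refine le_trans ?_ (hg u)
        rw [← Set.ncard_coe_finset]
        refine Nat.cast_le.2 (Set.ncard_le_ncard (fun s hs => ?_) (Set.toFinite _))
        have hs' := Finset.mem_filter.1 (Finset.mem_coe.1 hs)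
        exact ⟨by rintro rfl; exact huS hs'.1, hs'.2⟩
      have h5 : (S1.card : ℝ) * (2 * q * PP p (none S2)) ≤ g * (2 * q * PP p (none S2)) :=
        mul_le_mul_of_nonneg_right h4 (mul_nonneg (by positivity) (PP_nonneg hp _))
      have h6 : (4 * g * q) * PP p (none S2) ≤ 1 * PP p (none S2) :=
        mul_le_mul_of_nonneg_right hgq (PP_nonneg hp _)
      linarith
    calc _ ≤ _ := hmono
      _ ≤ q * (2 * PP p (none S)) := mul_le_mul_of_nonneg_left hhalf hq0
      _ = _ := by ring
  have hpos : ∀ S : Finset U, 0 < PP p (none S) := by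
    intro S
    induction S using Finset.induction_on with
    | empty =>
      have : none ∅ = Set.univ := by ext; simp [none]
      rw [this, PP_univ hp]; exact one_pos
    | insert u S hu ih =>
      have : none (insert u S) = none S \ B u := by
        ext ω; simp [none, and_comm]
      rw [this, PP_sdiff]
      have := claim _ S rfl u
      nlinarith
  obtain ⟨ω, -, hω⟩ := Finset.exists_ne_zero_of_sum_ne_zero (hpos Finset.univ).ne'
  refine ⟨ω, fun a => ?_, fun u hu => ?_⟩
  · refine lt_of_le_of_ne ((hp a).nonneg _) fun h => left_ne_zero_of_mul hω ?_
    exact Finset.prod_eq_zero (Finset.mem_univ a) h.symm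
  · refine right_ne_zero_of_mul hω (Set.indicator_of_notMem (fun h => ?_) _)
    exact h u (Finset.mem_univ _) hu

end Prob

/-! ### The deterministic construction -/

/-- Greedy vertex colouring. -/
theorem greedy_coloring {V : Type*} [Fintype V] (Q : SimpleGraph V) (k : ℕ)
    (hQ : ∀ v, (Q.neighborSet v).ncard ≤ k) :
    ∃ φ : V → Fin (k + 1), ∀ u v, Q.Adj u v → φ u ≠ φ v := by
  classical
  have key : ∀ s : Finset V, ∃ φ : V → Fin (k + 1), ∀ u ∈ s, ∀ v ∈ s, Q.Adj u v → φ u ≠ φ v := by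
    intro s
    induction s using Finset.induction_on with
    | empty => exact ⟨fun _ => 0, by simp⟩
    | insert a s ha ih =>
      obtain ⟨φ, hφ⟩ := ih
      obtain ⟨γ, hγ⟩ : ∃ γ, γ ∉ Set.image φ (Q.neighborSet a) := by
        by_contra hcon
        push Not at hcon
        have h1 := Set.ncard_le_ncard (fun γ (_ : γ ∈ Set.univ) => hcon γ) (Set.toFinite _)
        have h2 := Set.ncard_image_le (f := φ) (Set.toFinite (Q.neighborSet a))
        have h3 := hQ a
        rw [Set.ncard_univ, Nat.card_eq_fintype_card, Fintype.card_fin] at h1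
        omega
      have hγ' : ∀ w, Q.Adj a w → φ w ≠ γ := fun w hw he => hγ ⟨w, hw, he⟩
      refine ⟨Function.update φ a γ, ?_⟩
      intro u hu v hv huv
      by_cases h1 : u = a
      · subst h1
        rw [Function.update_self, Function.update_of_ne huv.ne']
        exact (hγ' v huv).symm
      · by_cases h2 : v = a
        · subst h2
          rw [Function.update_self, Function.update_of_ne h1]
          exact hγ' u huv.symm
        · rw [Function.update_of_ne h1, Function.update_of_ne h2]
          exact hφ u (by simpa [h1] using hu) v (by simpa [h2] using hv) huv
  obtain ⟨φ, hφ⟩ := key Finset.univ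
  exact ⟨φ, fun u v => hφ u (by simp) v (by simp)⟩

/-- Inclusion-free colourings with values in an arbitrary finite set bound the inclusion chromatic
index. -/
theorem index_le_card {V C : Type*} [Fintype C] (G : SimpleGraph V) (col : Sym2 V → C)
    (hp : ProperOn G col)
    (hf : ∀ u v, G.Adj u v → ∃ w, G.Adj u w ∧ ∀ w', G.Adj v w' → col s(v, w') ≠ col s(u, w)) :
    inclusionChromaticIndex G ≤ Fintype.card C := by
  refine Nat.sInf_le ⟨fun e => (Fintype.equivFin C (col e) : ℕ), ⟨?_, ?_⟩, fun e _ => Fin.is_lt _⟩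
  · intro u v w huv huw hvw he
    exact hp u v w huv huw hvw ((Fintype.equivFin C).injective (Fin.ext he))
  · intro u v huv hsub
    obtain ⟨w, hw, hw'⟩ := hf u v huv
    obtain ⟨w', hadj, he⟩ := hsub ⟨w, hw, rfl⟩
    exact hw' w' hadj ((Fintype.equivFin C).injective (Fin.ext he))

/-- The deterministic part of the argument. Vertices of degree less than `D` are small. Each vertex
has a type, a bit for each of `M` blocks, and each edge with a large end is put in a block or in
the main part (`none`). Under the listed conditions the edges of each block can be coloured,
separately for each value of the bit of their large ends, such that no palette contains that of a
neighbour. -/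
theorem index_le_of_blocks {V : Type*} [Fintype V] (G : SimpleGraph V) [DecidableRel G.Adj]
    (D M W W0 : ℕ)
    (hDW : D ≤ W) (hDW0 : D ≤ W0) (τ : V → Fin M → Bool) (b : Sym2 V → Option (Fin M))
    (hagree : ∀ x y i, G.Adj x y → D ≤ G.degree x → D ≤ G.degree y → b s(x, y) = some i →
      τ x i = τ y i)
    (hload : ∀ x i, D ≤ G.degree x → {y | G.Adj x y ∧ b s(x, y) = some i}.ncard ≤ W)
    (hload0 : ∀ x, D ≤ G.degree x → {y | G.Adj x y ∧ b s(x, y) = none}.ncard ≤ W0)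
    (hconf : ∀ u, G.degree u < D → (∀ w, G.Adj u w → D ≤ G.degree w) → ∀ v, G.Adj u v →
      ∃ x i, G.Adj u x ∧ b s(u, x) = some i ∧ τ x i ≠ τ v i)
    (hS1 : ∀ u w x i, G.degree u < D → G.Adj u w → G.degree w < D → G.Adj u x → D ≤ G.degree x →
      b s(u, x) = some i → τ u i = false)
    (hleaf : ∀ u v, G.degree u < D → G.Adj u v → G.degree v < D →
      (∀ w, G.Adj u w → G.degree w < D → w = v) →
      ∃ x i, G.Adj u x ∧ D ≤ G.degree x ∧ b s(u, x) = some i ∧ τ v i = true)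
    (hcert : ∀ x z, G.Adj x z → D ≤ G.degree x → D ≤ G.degree z →
      ∃ y i, G.Adj x y ∧ b s(x, y) = some i ∧ τ x i ≠ τ z i) :
    inclusionChromaticIndex G ≤ (W0 + 1) + (M * (2 * (W + 1)) + (D ^ 2 + 1) ^ 2) := by
  classical
  have hcard : ∀ v, (G.neighborSet v).ncard = G.degree v := fun v => by
    rw [← SimpleGraph.card_neighborFinset_eq_degree, ← Set.ncard_coe_finset,
      SimpleGraph.coe_neighborFinset]
  -- `φ` separates small vertices at distance at most two along small vertices
  let Q : SimpleGraph V :=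
    { Adj := fun u v => u ≠ v ∧ G.degree u < D ∧ G.degree v < D ∧
        (G.Adj u v ∨ ∃ w, G.degree w < D ∧ G.Adj u w ∧ G.Adj w v)
      symm := ⟨fun u v h => ⟨h.1.symm, h.2.2.1, h.2.1, h.2.2.2.imp (fun h => h.symm)
        (fun ⟨w, h1, h2, h3⟩ => ⟨w, h1, h3.symm, h2.symm⟩)⟩⟩
      loopless := ⟨fun u h => h.1 rfl⟩ }
  have hQdeg : ∀ v, (Q.neighborSet v).ncard ≤ D ^ 2 := by
    intro v
    by_cases hv : G.degree v < D
    · have hsub : Q.neighborSet v ⊆ ((G.neighborFinset v ∪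
          ((G.neighborFinset v).filter fun w => G.degree w < D).biUnion
            fun w => G.neighborFinset w : Finset V) : Set V) := by
        intro u hu
        rcases hu.2.2.2 with h | ⟨w, h1, h2, h3⟩
        · simp [h]
        · simp only [Finset.coe_union, Set.mem_union]
          right
          simp only [Finset.coe_biUnion, Set.mem_iUnion]
          exact ⟨w, by simp [h1, h2], by simpa using h3⟩
      refine (Set.ncard_le_ncard hsub (Finset.finite_toSet _)).trans ?_
      rw [Set.ncard_coe_finset]
      refine (Finset.card_union_le _ _).trans ?_
      have h1 : (((G.neighborFinset v).filter fun w => G.degree w < D).biUnion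
            fun w => G.neighborFinset w).card ≤ (G.neighborFinset v).card * (D - 1) := by
        refine (Finset.card_biUnion_le_card_mul _ _ (D - 1) fun w hw => ?_).trans
          (Nat.mul_le_mul_right _ (Finset.card_filter_le _ _))
        have := (Finset.mem_filter.1 hw).2
        rw [SimpleGraph.card_neighborFinset_eq_degree]; omega
      rw [SimpleGraph.card_neighborFinset_eq_degree] at h1 ⊢
      obtain ⟨E, rfl⟩ : ∃ E, D = E + 1 := ⟨D - 1, by omega⟩
      have : G.degree v ≤ E := by omega
      simp only [Nat.add_sub_cancel] at h1
      nlinarith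
    · have : Q.neighborSet v = ∅ := by
        ext u; simp only [SimpleGraph.mem_neighborSet, Set.mem_empty_iff_false, iff_false]
        exact fun h => hv h.2.1
      rw [this]; simp
  obtain ⟨φ, hφ⟩ := greedy_coloring Q (D ^ 2) hQdeg
  let sml : Sym2 V → Prop := fun e => ∀ v ∈ e, G.degree v < D
  have hsml : ∀ u v, sml s(u, v) ↔ G.degree u < D ∧ G.degree v < D := by
    intro u v; simp [sml]
  -- the common bit in block `i` of the large ends of an edge
  let bit : Sym2 V → Fin M → Bool := fun e i => decide (∃ x ∈ e, D ≤ G.degree x ∧ τ x i = true)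
  have hbit : ∀ x y i, G.Adj x y → D ≤ G.degree x → b s(x, y) = some i →
      bit s(x, y) i = τ x i := by
    intro x y i hxy hx hb
    simp only [bit]
    cases hτ : τ x i with
    | true => simpa using .inl ⟨hx, hτ⟩
    | false =>
      simp only [decide_eq_false_iff_not]
      rintro ⟨z, hz, hzL, hzτ⟩
      rcases Sym2.mem_iff.1 hz with rfl | rfl
      · rw [hτ] at hzτ; exact Bool.false_ne_true hzτ
      · have := hagree x z i hxy hx hzL hb
        rw [hτ, hzτ] at this; exact Bool.false_ne_true this
  -- the edges of a block with a given bit form a graph coloured with its own `W + 1` colours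
  let H : Option (Fin M) → Bool → SimpleGraph V := fun o β =>
    { Adj := fun u v => G.Adj u v ∧ ¬ sml s(u, v) ∧ b s(u, v) = o ∧
        ∀ i, o = some i → bit s(u, v) i = β
      symm := ⟨fun u v h => by rw [Sym2.eq_swap]; exact ⟨h.1.symm, h.2⟩⟩
      loopless := ⟨fun u h => G.loopless.irrefl u h.1⟩ }
  have hle : ∀ o β v, ((H o β).neighborSet v).ncard ≤ G.degree v := by
    intro o β v
    rw [← hcard]
    exact Set.ncard_le_ncard (fun w hw => hw.1) (Set.toFinite _)
  have hc0 : ∃ c : Sym2 V → Fin (W0 + 1), ProperOn (H none false) c := by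
    refine vizing W0 _ fun v => ?_
    by_cases hv : G.degree v < D
    · have := hle none false v; omega
    · refine le_trans (Set.ncard_le_ncard ?_ (Set.toFinite _)) (hload0 v (not_lt.1 hv))
      exact fun w hw => ⟨hw.1, hw.2.2.1⟩
  have hc1 : ∀ i β, ∃ c : Sym2 V → Fin (W + 1), ProperOn (H (some i) β) c := by
    intro i β
    refine vizing W _ fun v => ?_
    by_cases hv : G.degree v < D
    · have := hle (some i) β v; omega
    · refine le_trans (Set.ncard_le_ncard ?_ (Set.toFinite _)) (hload v i (not_lt.1 hv))
      exact fun w hw => ⟨hw.1, hw.2.2.1⟩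
  obtain ⟨c0, hc0⟩ := hc0
  choose c1 hc1 using hc1
  let col : Sym2 V → Fin (W0 + 1) ⊕ ((Fin M × Bool × Fin (W + 1)) ⊕ Sym2 (Fin (D ^ 2 + 1))) :=
    fun e => if sml e then .inr (.inr (e.map φ)) else
      match b e with
      | none => .inl (c0 e)
      | some i => .inr (.inl (i, bit e i, c1 i (bit e i) e))
  have colS : ∀ e, sml e → col e = .inr (.inr (e.map φ)) := fun e he => by
    simp only [col, if_pos he]
  have col0 : ∀ e, ¬ sml e → b e = none → col e = .inl (c0 e) := fun e he hb => by
    simp only [col, if_neg he, hb]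
  have col1 : ∀ e i, ¬ sml e → b e = some i →
      col e = .inr (.inl (i, bit e i, c1 i (bit e i) e)) := fun e i he hb => by
    simp only [col, if_neg he, hb]
  -- what an edge sharing its colour with an edge of a given kind looks like
  have invS : ∀ e e', sml e → col e = col e' → sml e' ∧ e.map φ = e'.map φ := by
    intro e e' he h
    rw [colS e he] at h
    by_cases he' : sml e'
    · rw [colS e' he'] at h
      exact ⟨he', by simpa using h⟩
    · cases hb : b e' with
      | none => rw [col0 e' he' hb] at h; simp at h
      | some i => rw [col1 e' i he' hb] at h; simp at h
  have inv0 : ∀ e e', ¬ sml e → b e = none → col e = col e' →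
      ¬ sml e' ∧ b e' = none ∧ c0 e = c0 e' := by
    intro e e' he hb h
    rw [col0 e he hb] at h
    by_cases he' : sml e'
    · rw [colS e' he'] at h; simp at h
    · cases hb : b e' with
      | none => rw [col0 e' he' hb] at h; exact ⟨he', rfl, by simpa using h⟩
      | some i => rw [col1 e' i he' hb] at h; simp at h
  have inv1 : ∀ e e' i, ¬ sml e → b e = some i → col e = col e' →
      ¬ sml e' ∧ b e' = some i ∧ bit e i = bit e' i ∧
        c1 i (bit e i) e = c1 i (bit e i) e' := by
    intro e e' i he hb h
    rw [col1 e i he hb] at h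
    by_cases he' : sml e'
    · rw [colS e' he'] at h; simp at h
    · cases hb' : b e' with
      | none => rw [col0 e' he' hb'] at h; simp at h
      | some j =>
        rw [col1 e' j he' hb'] at h
        simp only [Sum.inr.injEq, Sum.inl.injEq, Prod.mk.injEq] at h
        obtain ⟨rfl, h1, h2⟩ := h
        exact ⟨he', rfl, h1, by rw [h2, h1]⟩
  have hproper : ProperOn G col := by
    intro u v w huv huw hvw he
    by_cases h : sml s(u, v)
    · obtain ⟨h', hm⟩ := invS _ _ h he
      simp only [Sym2.map_mk] at hm
      rw [hsml] at h h'
      exact hφ v w ⟨hvw, h.2, h'.2, .inr ⟨u, h.1, huv.symm, huw⟩⟩ (Sym2.congr_right.1 hm)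
    · cases hb : b s(u, v) with
      | none =>
        obtain ⟨h', hb', hc⟩ := inv0 _ _ h hb he
        exact hc0 u v w ⟨huv, h, hb, by simp⟩ ⟨huw, h', hb', by simp⟩ hvw hc
      | some i =>
        obtain ⟨h', hb', hβ, hc⟩ := inv1 _ _ i h hb he
        refine hc1 i (bit s(u, v) i) u v w ⟨huv, h, hb, ?_⟩ ⟨huw, h', hb', ?_⟩ hvw hc
        · rintro j hj; cases hj; rfl
        · rintro j hj; cases hj; exact hβ.symm
  have hfree : ∀ u v, G.Adj u v →
      ∃ w, G.Adj u w ∧ ∀ w', G.Adj v w' → col s(v, w') ≠ col s(u, w) := by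
    intro u v huv
    by_cases hu : G.degree u < D <;> by_cases hv : G.degree v < D
    · by_cases hw : ∃ w, G.Adj u w ∧ G.degree w < D ∧ w ≠ v
      · obtain ⟨w, huw, hwD, hwv⟩ := hw
        refine ⟨w, huw, fun w' hw' he => ?_⟩
        obtain ⟨h', hm⟩ := invS _ _ ((hsml _ _).2 ⟨hu, hwD⟩) he.symm
        simp only [Sym2.map_mk] at hm
        have n1 : φ v ≠ φ u := hφ v u ⟨huv.ne', hv, hu, .inl huv.symm⟩
        have n2 : φ v ≠ φ w := hφ v w ⟨hwv.symm, hv, hwD, .inr ⟨u, hu, huv.symm, huw⟩⟩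
        rcases Sym2.eq_iff.1 hm with ⟨h1, -⟩ | ⟨-, h1⟩
        · exact n1 h1.symm
        · exact n2 h1.symm
      -- `v` is the only small neighbour of `u`
      · push Not at hw
        obtain ⟨x, i, hux, hx, hb, hτ⟩ := hleaf u v hu huv hv hw
        have hns : ¬ sml s(u, x) := fun h => absurd ((hsml _ _).1 h).2 (not_lt.2 hx)
        refine ⟨x, hux, fun w' hw' he => ?_⟩
        obtain ⟨h', hb', -⟩ := inv1 _ _ i hns hb he.symm
        have hw'L : D ≤ G.degree w' := not_lt.1 fun h => h' ((hsml _ _).2 ⟨hv, h⟩)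
        have := hS1 v u w' i hv huv.symm hu hw' hw'L hb'
        rw [hτ] at this; exact Bool.false_ne_true this.symm
    · by_cases hw : ∃ w, G.Adj u w ∧ G.degree w < D
      · obtain ⟨w, huw, hwD⟩ := hw
        refine ⟨w, huw, fun w' hw' he => ?_⟩
        obtain ⟨h', -⟩ := invS _ _ ((hsml _ _).2 ⟨hu, hwD⟩) he.symm
        exact hv ((hsml _ _).1 h').1
      · push Not at hw
        obtain ⟨x, i, hux, hb, hτ⟩ := hconf u hu hw v huv
        have hns : ¬ sml s(u, x) := fun h => absurd ((hsml _ _).1 h).2 (not_lt.2 (hw x hux))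
        refine ⟨x, hux, fun w' hw' he => ?_⟩
        obtain ⟨h', hb', hβ, -⟩ := inv1 _ _ i hns hb he.symm
        rw [hbit v w' i hw' (not_lt.1 hv) hb', Sym2.eq_swap,
          hbit x u i hux.symm (hw x hux) (by rw [Sym2.eq_swap]; exact hb)] at hβ
        exact hτ hβ
    -- a large palette does not fit in a small one
    · by_contra hcon
      push Not at hcon
      choose! f hf1 hf2 using hcon
      have : G.degree u ≤ G.degree v := by
        rw [← SimpleGraph.card_neighborFinset_eq_degree, ← SimpleGraph.card_neighborFinset_eq_degree]
        refine Finset.card_le_card_of_injOn f ?_ ?_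
        · intro w hw
          simp only [Finset.mem_coe, SimpleGraph.mem_neighborFinset] at hw ⊢
          exact hf1 w hw
        · intro w hw w' hw' he
          simp only [Finset.mem_coe, SimpleGraph.mem_neighborFinset] at hw hw'
          by_contra hne
          exact hproper u w w' hw hw' hne (by rw [← hf2 w hw, ← hf2 w' hw', he])
      omega
    · obtain ⟨y, i, hxy, hb, hτ⟩ := hcert u v huv (not_lt.1 hu) (not_lt.1 hv)
      have hns : ∀ w, ¬ sml s(u, w) := fun w h => hu ((hsml _ _).1 h).1
      refine ⟨y, hxy, fun w' hw' he => ?_⟩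
      obtain ⟨h', hb', hβ, -⟩ := inv1 _ _ i (hns y) hb he.symm
      rw [hbit v w' i hw' (not_lt.1 hv) hb', hbit u y i hxy (not_lt.1 hu) hb] at hβ
      exact hτ hβ
  refine (index_le_card G col hproper hfree).trans ?_
  have : Fintype.card (Sym2 (Fin (D ^ 2 + 1))) ≤ (D ^ 2 + 1) ^ 2 := by
    refine (Fintype.card_le_of_surjective (fun q : Fin (D ^ 2 + 1) × Fin (D ^ 2 + 1) =>
      s(q.1, q.2)) ?_).trans (by simp [sq])
    intro e
    induction e with | _ a b => exact ⟨(a, b), rfl⟩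
  simp only [Fintype.card_sum, Fintype.card_prod, Fintype.card_fin, Fintype.card_bool]
  omega

/-! ### Random types -/

/-- The closed neighbourhood of `u` as a finset. -/
def closedNbhd {V : Type*} [Fintype V] [DecidableEq V] (G : SimpleGraph V) [DecidableRel G.Adj]
    (u : V) : Finset V := insert u (G.neighborFinset u)

section Types

variable {V : Type*} [Fintype V] [DecidableEq V] {G : SimpleGraph V} [DecidableRel G.Adj] {Δ : ℕ}

theorem card_closedNbhd_le (hΔ : ∀ v, G.degree v ≤ Δ) (u : V) : (closedNbhd G u).card ≤ Δ + 1 := by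
  refine (Finset.card_insert_le _ _).trans ?_
  have := hΔ u
  rw [SimpleGraph.card_neighborFinset_eq_degree]
  omega

theorem mem_closedNbhd {u v : V} : v ∈ closedNbhd G u ↔ v = u ∨ G.Adj u v := by
  simp [closedNbhd]

/-- Events located in closed neighbourhoods have at most `(Δ + 1)²` dependencies. -/
theorem ncard_close_le (hΔ : ∀ v, G.degree v ≤ Δ) {A : Type*} (T : V → Set A)
    (hT : ∀ u u', ¬ Disjoint (T u) (T u') → ∃ w, w ∈ closedNbhd G u ∧ w ∈ closedNbhd G u') (u : V) :
    (({u' | u' ≠ u ∧ ¬ Disjoint (T u) (T u')}.ncard : ℕ) : ℝ) ≤ ((Δ : ℝ) + 1) ^ 2 := by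
  have hsub : {u' | u' ≠ u ∧ ¬ Disjoint (T u) (T u')} ⊆
      (((closedNbhd G u).biUnion fun w => closedNbhd G w : Finset V) : Set V) := by
    rintro u' ⟨-, h⟩
    obtain ⟨w, h1, h2⟩ := hT u u' h
    simp only [Finset.coe_biUnion, Set.mem_iUnion]
    refine ⟨w, h1, ?_⟩
    rw [Finset.mem_coe, mem_closedNbhd]
    rcases mem_closedNbhd.1 h2 with h | h
    · exact .inl h.symm
    · exact .inr h.symm
  have h1 := Set.ncard_le_ncard hsub (Finset.finite_toSet _)
  rw [Set.ncard_coe_finset] at h1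
  have h2 := Finset.card_biUnion_le_card_mul (closedNbhd G u) (fun w => closedNbhd G w) (Δ + 1)
    (fun w _ => card_closedNbhd_le hΔ w)
  have h3 : {u' | u' ≠ u ∧ ¬ Disjoint (T u) (T u')}.ncard ≤ (Δ + 1) * (Δ + 1) :=
    h1.trans (h2.trans (Nat.mul_le_mul_right _ (card_closedNbhd_le hΔ u)))
  rw [sq]
  exact_mod_cast h3

/-- The uniform law of the type bits. -/
theorem coin_law {A : Type*} : ∀ _ : A, IsLaw (fun _ : Bool => (1 / 2 : ℝ)) := fun _ =>
  ⟨fun _ => by norm_num, by simp⟩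

/-- Random types: every bit pattern on at most four vertices of a closed neighbourhood occurs in
almost the expected number of blocks, and sums of functions of a bit over a neighbourhood do not
exceed their mean by much. -/
theorem exists_types (hΔ : ∀ v, G.degree v ≤ Δ) (hΔ1 : 1 ≤ Δ) (M : ℕ) (hM : 1 ≤ M) (ε θ : ℝ)
    (hε : 0 < ε) (hε1 : ε ≤ 1) (hθ : 0 < θ) (hθ1 : θ ≤ 1) (h : V → Bool → Bool → ℝ)
    (h0 : ∀ v β γ, 0 ≤ h v β γ) (h1 : ∀ v β γ, h v β γ ≤ 1)
    (hh : ∀ v β, h v β true + h v β false ≤ 1)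
    (hnum : 4 * ((Δ : ℝ) + 1) ^ 2 * (80 * ((Δ : ℝ) + 1) ^ 4 * Real.exp (-(ε ^ 2 * M / 1024)) +
      2 * M * Real.exp (-(θ ^ 2 * Δ / 4))) ≤ 1) :
    ∃ τ : V → Fin M → Bool,
      (∀ u, ∀ s ⊆ closedNbhd G u, s.card ≤ 4 → ∀ t ⊆ s,
        (1 - ε) * M / 2 ^ s.card ≤
          ((Finset.univ.filter fun i => ∀ v ∈ s, (τ v i = true ↔ v ∈ t)).card : ℝ)) ∧
      (∀ x i β, ∑ y ∈ G.neighborFinset x, h y β (τ y i) ≤ (1 / 2 + θ) * Δ) := by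
  classical
  let p : V × Fin M → Bool → ℝ := fun _ _ => 1 / 2
  have hp : ∀ a, IsLaw (p a) := coin_law
  have hMpos : (0 : ℝ) < M := by exact_mod_cast hM
  have hΔpos : (0 : ℝ) < Δ := by exact_mod_cast hΔ1
  -- the two kinds of bad events
  let B1 : Finset V → Finset V → Set (V × Fin M → Bool) := fun s t => {ω |
    (M : ℝ) * (1 - 1 / 2 ^ s.card) + ε * M / 2 ^ s.card ≤
      ∑ i : Fin M, if ∀ v ∈ s, (ω (v, i) = true ↔ v ∈ t) then (0 : ℝ) else 1}
  let B2 : V → Fin M → Bool → Set (V × Fin M → Bool) := fun x i β => {ω |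
    (Δ : ℝ) / 2 + θ * Δ ≤ ∑ y ∈ G.neighborFinset x, h y β (ω (y, i))}
  have hB1 : ∀ s t, s.card ≤ 4 → PP p (B1 s t) ≤ Real.exp (-(ε ^ 2 * M / 1024)) := by
    intro s t hs
    have hE : ∀ i : Fin M, EE p (fun ω => if ∀ v ∈ s, (ω (v, i) = true ↔ v ∈ t) then (0 : ℝ)
        else 1) = 1 - 1 / 2 ^ s.card := by
      intro i
      have e1 : (fun ω : V × Fin M → Bool => if ∀ v ∈ s, (ω (v, i) = true ↔ v ∈ t) then (0 : ℝ)
          else 1) = fun ω => 1 + (-1) * ∏ v ∈ s, if (ω (v, i) = true ↔ v ∈ t) then (1 : ℝ) else 0 := by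
        ext ω
        rw [Finset.prod_ite_zero]
        split_ifs <;> simp
      rw [e1, EE_add (fun _ => 1), EE_one hp, EE_const_mul, EE_prod_indep hp s _
        (fun v => {(v, i)})]
      · have : ∀ v ∈ s, EE p (fun ω => if (ω (v, i) = true ↔ v ∈ t) then (1 : ℝ) else 0) = 1 / 2 := by
          intro v _
          rw [EE_coord hp (v, i) (fun o => if (o = true ↔ v ∈ t) then (1 : ℝ) else 0)]
          by_cases hv : v ∈ t <;> simp [p, hv]
        rw [Finset.prod_congr rfl this, Finset.prod_const, one_div, inv_pow]
        ring
      · intro v _ a b hab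
        simp only [hab (v, i) (by simp)]
      · intro v _ w _ hvw
        simp [hvw]
    have h2s : (1 : ℝ) ≤ 2 ^ s.card := one_le_pow₀ (by norm_num)
    have hpow : (2 : ℝ) ^ s.card ≤ 16 := by
      calc (2 : ℝ) ^ s.card ≤ 2 ^ 4 := pow_le_pow_right₀ (by norm_num) hs
        _ = 16 := by norm_num
    have hεM : ε * M / 2 ^ s.card ≤ 2 * M := by
      rw [div_le_iff₀ (by positivity)]
      nlinarith
    refine (chernoff hp Finset.univ (fun i ω => if ∀ v ∈ s, (ω (v, i) = true ↔ v ∈ t)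
      then (0 : ℝ) else 1) (fun i => {a | a.2 = i}) ?_ ?_ ?_ (N := M) ?_ ?_ ?_ hεM).trans ?_
    · intro i _ a b hab
      have : (∀ v ∈ s, (a (v, i) = true ↔ v ∈ t)) ↔ (∀ v ∈ s, (b (v, i) = true ↔ v ∈ t)) :=
        forall₂_congr fun v _ => by rw [hab (v, i) rfl]
      simp only [this]
    · intro i _ j _ hij
      rw [Set.disjoint_left]
      rintro a ha hb
      exact hij (ha.symm.trans hb)
    · intro i _ ω
      split_ifs <;> simp
    · rw [Finset.sum_congr rfl fun i _ => hE i, Finset.sum_const, nsmul_eq_mul, Finset.card_univ,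
        Fintype.card_fin]
    · have : (0 : ℝ) < 1 / 2 ^ s.card := by positivity
      nlinarith
    · positivity
    · rw [Real.exp_le_exp, neg_le_neg_iff, div_pow, div_div,
        div_le_div_iff₀ (by norm_num) (by positivity)]
      have : ((2 : ℝ) ^ s.card) ^ 2 ≤ 16 ^ 2 := pow_le_pow_left₀ (by positivity) hpow 2
      have h3 : (0 : ℝ) ≤ ε ^ 2 * M * (4 * M) := by positivity
      nlinarith [mul_le_mul_of_nonneg_left this h3]
  have hB2 : ∀ x i β, PP p (B2 x i β) ≤ Real.exp (-(θ ^ 2 * Δ / 4)) := by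
    intro x i β
    have hdx : ((G.neighborFinset x).card : ℝ) ≤ Δ := by
      rw [SimpleGraph.card_neighborFinset_eq_degree]; exact_mod_cast hΔ x
    refine (chernoff hp (G.neighborFinset x) (fun y ω => h y β (ω (y, i))) (fun y => {(y, i)})
      ?_ ?_ ?_ (N := Δ) ?_ ?_ ?_ ?_).trans ?_
    · intro y _ a b hab
      simp only [hab (y, i) (by simp)]
    · intro v _ w _ hvw
      simp [hvw]
    · intro y _ ω
      exact ⟨h0 _ _ _, h1 _ _ _⟩
    · calc _ ≤ ∑ y ∈ G.neighborFinset x, (1 / 2 : ℝ) := by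
            refine Finset.sum_le_sum fun y _ => ?_
            rw [EE_coord hp (y, i) (h y β)]
            simp only [p, Fintype.sum_bool]
            linarith [hh y β]
        _ ≤ _ := by
            rw [Finset.sum_const, nsmul_eq_mul]; linarith
    · linarith
    · positivity
    · nlinarith
    · rw [Real.exp_le_exp, neg_le_neg_iff]
      have : (θ * Δ) ^ 2 / (4 * Δ) = θ ^ 2 * Δ / 4 := by field_simp
      rw [this]
  let pats : V → Finset (Finset V × Finset V) := fun u =>
    (Finset.range 5).biUnion fun j => ((closedNbhd G u).powersetCard j).biUnion fun s =>
      s.powerset.image fun t => (s, t)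
  have hpats : ∀ u, ∀ q ∈ pats u, q.1 ⊆ closedNbhd G u ∧ q.1.card ≤ 4 := by
    rintro u ⟨s, t⟩ hq
    simp only [pats, Finset.mem_biUnion, Finset.mem_range, Finset.mem_powersetCard,
      Finset.mem_image, Prod.mk.injEq] at hq
    obtain ⟨j, hj, s', ⟨h1, h2⟩, t', -, rfl, rfl⟩ := hq
    exact ⟨h1, by simp only; omega⟩
  have hpatsc : ∀ u, ((pats u).card : ℝ) ≤ 80 * ((Δ : ℝ) + 1) ^ 4 := by
    intro u
    have h1 : (pats u).card ≤ (Finset.range 5).card * ((Δ + 1) ^ 4 * 16) := by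
      refine Finset.card_biUnion_le_card_mul _ _ _ fun j hj => ?_
      refine (Finset.card_biUnion_le_card_mul _ _ 16 fun s hs => ?_).trans
        (Nat.mul_le_mul_right _ ?_)
      · refine Finset.card_image_le.trans ?_
        rw [Finset.card_powerset, (Finset.mem_powersetCard.1 hs).2]
        calc 2 ^ j ≤ 2 ^ 4 := Nat.pow_le_pow_right (by norm_num)
              (by have := Finset.mem_range.1 hj; omega)
          _ = 16 := by norm_num
      · rw [Finset.card_powersetCard]
        refine (Nat.choose_le_pow _ _).trans ?_
        refine (Nat.pow_le_pow_left (card_closedNbhd_le hΔ u) j).trans ?_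
        exact Nat.pow_le_pow_right (by omega) (by have := Finset.mem_range.1 hj; omega)
    simp only [Finset.card_range] at h1
    have h2 : ((pats u).card : ℝ) ≤ ((5 * ((Δ + 1) ^ 4 * 16) : ℕ) : ℝ) := by exact_mod_cast h1
    push_cast at h2
    linarith
  let B : V → Set (V × Fin M → Bool) := fun u =>
    (⋃ q ∈ pats u, B1 q.1 q.2) ∪ ⋃ r ∈ (Finset.univ : Finset (Fin M × Bool)), B2 u r.1 r.2
  let T : V → Set (V × Fin M) := fun u => {a | a.1 ∈ closedNbhd G u}
  have hdep : ∀ u, DependsOn (· ∈ B u) (T u) := by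
    intro u a b hab
    have e1 : ∀ q ∈ pats u, (a ∈ B1 q.1 q.2 ↔ b ∈ B1 q.1 q.2) := by
      intro q hq
      simp only [B1, Set.mem_ofPred_eq]
      have : ∀ i : Fin M, (∀ v ∈ q.1, (a (v, i) = true ↔ v ∈ q.2)) ↔
          (∀ v ∈ q.1, (b (v, i) = true ↔ v ∈ q.2)) := fun i =>
        forall₂_congr fun v hv => by rw [hab (v, i) ((hpats u q hq).1 hv)]
      simp only [this]
    have e2 : ∀ i β, (a ∈ B2 u i β ↔ b ∈ B2 u i β) := by
      intro i β
      simp only [B2, Set.mem_ofPred_eq]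
      have : ∑ y ∈ G.neighborFinset u, h y β (a (y, i)) =
          ∑ y ∈ G.neighborFinset u, h y β (b (y, i)) := by
        refine Finset.sum_congr rfl fun y hy => ?_
        rw [hab (y, i) (Finset.mem_insert_of_mem hy)]
      rw [this]
    simp only [B, Set.mem_union, Set.mem_iUnion, eq_iff_iff]
    refine or_congr (exists_congr fun q => ?_) (exists_congr fun r => exists_congr fun _ => e2 _ _)
    constructor
    · rintro ⟨hq, hm⟩; exact ⟨hq, (e1 q hq).1 hm⟩
    · rintro ⟨hq, hm⟩; exact ⟨hq, (e1 q hq).2 hm⟩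
  set q : ℝ := 80 * ((Δ : ℝ) + 1) ^ 4 * Real.exp (-(ε ^ 2 * M / 1024)) +
      2 * M * Real.exp (-(θ ^ 2 * Δ / 4)) with hq
  have hq0 : 0 ≤ q := by positivity
  have hPB : ∀ u, PP p (B u) ≤ q := by
    intro u
    refine (PP_union_le hp _ _).trans (add_le_add ?_ ?_)
    · refine (PP_biUnion_le hp (pats u) _).trans ?_
      refine (Finset.sum_le_sum fun r hr => hB1 r.1 r.2 (hpats u r hr).2).trans ?_
      rw [Finset.sum_const, nsmul_eq_mul]
      exact mul_le_mul_of_nonneg_right (hpatsc u) (Real.exp_pos _).le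
    · refine (PP_biUnion_le hp _ (fun r : Fin M × Bool => B2 u r.1 r.2)).trans ?_
      refine (Finset.sum_le_sum fun r _ => hB2 u r.1 r.2).trans ?_
      rw [Finset.sum_const, nsmul_eq_mul, Finset.card_univ, Fintype.card_prod, Fintype.card_fin,
        Fintype.card_bool]
      push_cast
      rw [mul_comm (M : ℝ) 2]
  obtain ⟨ω, -, hω⟩ := local_lemma hp B T hdep (g := ((Δ : ℝ) + 1) ^ 2) (q := q)
    (ncard_close_le hΔ T fun u u' hd => by
      rw [Set.not_disjoint_iff] at hd
      obtain ⟨a, h1, h2⟩ := hd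
      exact ⟨a.1, h1, h2⟩) hPB (by linarith) (by
        have : (1 : ℝ) ≤ ((Δ : ℝ) + 1) ^ 2 := one_le_pow₀ (by linarith)
        nlinarith)
  refine ⟨fun v i => ω (v, i), ?_, ?_⟩
  · intro u s hs hs4 t ht
    have hmem : (s, t) ∈ pats u := by
      simp only [pats, Finset.mem_biUnion, Finset.mem_range, Finset.mem_powersetCard,
        Finset.mem_image, Prod.mk.injEq, Finset.mem_powerset]
      exact ⟨s.card, by omega, s, ⟨hs, rfl⟩, t, ht, rfl, rfl⟩
    have hnot : ω ∉ B1 s t := fun hb => hω u (.inl (Set.mem_biUnion (x := (s, t)) hmem hb))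
    simp only [B1, Set.mem_ofPred_eq, not_le] at hnot
    have hsum : ∑ i : Fin M, (if ∀ v ∈ s, (ω (v, i) = true ↔ v ∈ t) then (0 : ℝ) else 1) =
        M - ((Finset.univ.filter fun i => ∀ v ∈ s, (ω (v, i) = true ↔ v ∈ t)).card : ℝ) := by
      have e : ∀ i : Fin M, (if ∀ v ∈ s, (ω (v, i) = true ↔ v ∈ t) then (0 : ℝ) else 1) =
          1 - if ∀ v ∈ s, (ω (v, i) = true ↔ v ∈ t) then (1 : ℝ) else 0 := by
        intro i; split_ifs <;> simp
      simp only [e, Finset.sum_sub_distrib, Finset.sum_boole]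
      simp
    rw [hsum] at hnot
    have : (1 - ε) * M / 2 ^ s.card = M * (1 / 2 ^ s.card) - ε * M / 2 ^ s.card := by ring
    rw [this]
    linarith
  · intro x i β
    have hnot : ω ∉ B2 x i β := fun hb => hω x (.inr (Set.mem_biUnion (x := (i, β))
      (by simp) hb))
    simp only [B2, Set.mem_ofPred_eq, not_le] at hnot
    linarith

end Types

/-! ### Completing partial random assignments -/

/-- Under the weights `q`, the total weight of the outcomes `k` whose assignment `o k` gives the
value `a` at `e`. -/
noncomputable def marg {K E α : Type*} [Fintype K] [DecidableEq α] (q : K → ℝ) (o : K → E → α)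
    (e : E) (a : α) : ℝ := ∑ k, q k * if o k e = a then 1 else 0

section Marg

variable {K E ι : Type*} [Fintype K] [Fintype ι] [DecidableEq ι]

theorem marg_nonneg {α : Type*} [DecidableEq α] {q : K → ℝ} (hq : ∀ k, 0 ≤ q k) (o : K → E → α)
    (e : E) (a : α) : 0 ≤ marg q o e a :=
  Finset.sum_nonneg fun k _ => mul_nonneg (hq k) (by split_ifs <;> simp)

theorem marg_total {q : K → ℝ} (hq : IsLaw q) (o : K → E → Option ι) (e : E) :
    marg q o e none + ∑ i, marg q o e (some i) = 1 := by
  rw [← Fintype.sum_option (fun a => marg q o e a)]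
  simp only [marg]
  rw [Finset.sum_comm]
  refine Eq.trans ?_ hq.sum_one
  refine Finset.sum_congr rfl fun k _ => ?_
  simp

/-- Completing a random partial assignment `o` to a random total assignment whose one-coordinate
laws obey the capacities `cap`, leaving each coordinate unassigned with probability at most
`1 - f`. -/
theorem exists_completion [Fintype E] [DecidableEq E] (q : K → ℝ) (hq : IsLaw q)
    (o : K → E → Option ι) (cap : ι → ℝ) (f : ℝ) (hf1 : f ≤ 1) (hfcap : f ≤ ∑ i, cap i)
    (hcap : ∀ e i, marg q o e (some i) ≤ cap i)
    (ha : ∀ e, ∑ i, marg q o e (some i) ≤ f) :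
    ∃ r : (E → Option ι) → ℝ, IsLaw r ∧
      (∀ ω, 0 < r ω → ∃ k, 0 < q k ∧ ∀ e i, o k e = some i → ω e = some i) ∧
      (∀ e i, marg r (fun ω => ω) e (some i) ≤ cap i) ∧
      (∀ e, marg r (fun ω => ω) e none ≤ 1 - f) := by
  classical
  set a : E → ℝ := fun e => ∑ i, marg q o e (some i) with hadef
  have ha0 : ∀ e, 0 ≤ a e := fun e => Finset.sum_nonneg fun i _ => marg_nonneg hq.nonneg _ _ _
  set C := ∑ i, cap i with hC
  -- an unassigned `e` draws from the leftover capacities, scaled so that the total is `f`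
  let lam : E → ℝ := fun e => (f - a e) / (C - a e)
  have hlam0 : ∀ e, 0 ≤ lam e := fun e => div_nonneg (by linarith [ha e]) (by linarith [ha e])
  have hlam1 : ∀ e, lam e ≤ 1 := fun e => div_le_one_of_le₀ (by linarith) (by linarith [ha e])
  have hlamC : ∀ e, (C - a e) * lam e = f - a e := by
    intro e
    by_cases h : C - a e = 0
    · have : f = a e := by linarith [ha e]
      rw [h, this]; simp
    · simp only [lam]; field_simp
  let bs : E → ι → ℝ := fun e i => (cap i - marg q o e (some i)) * lam e / (1 - a e)
  have hbs0 : ∀ e i, 0 ≤ bs e i := fun e i =>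
    div_nonneg (mul_nonneg (by linarith [hcap e i]) (hlam0 e)) (by linarith [ha e])
  have hbsum : ∀ e, ∑ i, bs e i = (f - a e) / (1 - a e) := by
    intro e
    simp only [bs]
    rw [← Finset.sum_div, ← Finset.sum_mul, Finset.sum_sub_distrib, ← hlamC e]
  let base : E → Option ι → ℝ := fun e x => match x with
    | none => 1 - ∑ i, bs e i
    | some i => bs e i
  have hbase : ∀ e, IsLaw (base e) := by
    intro e
    constructor
    · rintro (_ | i)
      · simp only [base]
        rw [hbsum, sub_nonneg]
        exact div_le_one_of_le₀ (by linarith) (by linarith [ha e])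
      · exact hbs0 e i
    · rw [Fintype.sum_option]
      simp only [base]
      ring
  let r1 : K → E → Option ι → ℝ := fun k e x =>
    if o k e = none then base e x else if x = o k e then 1 else 0
  have hr1 : ∀ k e, IsLaw (r1 k e) := by
    intro k e
    by_cases h : o k e = none
    · have : r1 k e = base e := by ext x; simp only [r1, if_pos h]
      rw [this]; exact hbase e
    · have : r1 k e = fun x => if x = o k e then 1 else 0 := by ext x; simp only [r1, if_neg h]
      rw [this]
      exact ⟨fun x => by split_ifs <;> simp, by simp⟩
  let r : (E → Option ι) → ℝ := fun ω => ∑ k, q k * ∏ e, r1 k e (ω e)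
  have hr0 : ∀ ω, 0 ≤ r ω := fun ω => Finset.sum_nonneg fun k _ =>
    mul_nonneg (hq.nonneg k) (Finset.prod_nonneg fun e _ => (hr1 k e).nonneg _)
  have hrE : ∀ F : (E → Option ι) → ℝ, ∑ ω, r ω * F ω = ∑ k, q k * EE (r1 k) F := by
    intro F
    simp only [r, EE, Finset.sum_mul, Finset.mul_sum]
    rw [Finset.sum_comm]
    refine Finset.sum_congr rfl fun k _ => Finset.sum_congr rfl fun ω _ => by ring
  have hrm : ∀ e x, marg r (fun ω => ω) e x = ∑ k, q k * r1 k e x := by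
    intro e x
    simp only [marg]
    rw [hrE]
    refine Finset.sum_congr rfl fun k _ => ?_
    rw [EE_coord (hr1 k) e (fun y => if y = x then (1 : ℝ) else 0)]
    simp
  have hnone : ∀ e, marg q o e none = 1 - a e := fun e => by
    have := marg_total hq o e
    simp only [a]; linarith
  refine ⟨r, ⟨hr0, ?_⟩, ?_, ?_, ?_⟩
  · have := hrE (fun _ => 1)
    simp only [mul_one] at this
    rw [this]
    refine Eq.trans ?_ hq.sum_one
    exact Finset.sum_congr rfl fun k _ => by rw [EE_one (hr1 k), mul_one]
  · intro ω hω
    obtain ⟨k, -, hk⟩ := Finset.exists_ne_zero_of_sum_ne_zero hω.ne'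
    refine ⟨k, lt_of_le_of_ne (hq.nonneg k) (left_ne_zero_of_mul hk).symm, fun e i he => ?_⟩
    by_contra hne
    refine right_ne_zero_of_mul hk (Finset.prod_eq_zero (Finset.mem_univ e) ?_)
    simp [r1, he, hne]
  · intro e i
    have : marg r (fun ω => ω) e (some i) = marg q o e (some i) + marg q o e none * bs e i := by
      rw [hrm]
      simp only [marg]
      rw [Finset.sum_mul, ← Finset.sum_add_distrib]
      refine Finset.sum_congr rfl fun k _ => ?_
      by_cases h : o k e = none
      · simp [r1, h, base]
      · simp [r1, h, eq_comm]
    rw [this, hnone]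
    by_cases h1 : 1 - a e = 0
    · rw [h1]; simpa using hcap e i
    · have : (1 - a e) * bs e i = (cap i - marg q o e (some i)) * lam e := by
        simp only [bs]; field_simp
      rw [this]
      have h2 : 0 ≤ cap i - marg q o e (some i) := by linarith [hcap e i]
      nlinarith [hlam1 e]
  · intro e
    have : marg r (fun ω => ω) e none = marg q o e none * (1 - ∑ i, bs e i) := by
      rw [hrm]
      simp only [marg]
      rw [Finset.sum_mul]
      refine Finset.sum_congr rfl fun k _ => ?_
      by_cases h : o k e = none
      · simp [r1, h, base]
      · simp [r1, h, eq_comm]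
    rw [this, hnone, hbsum]
    by_cases h1 : 1 - a e = 0
    · rw [h1]; simp; linarith
    · have : (1 - a e) * (1 - (f - a e) / (1 - a e)) = 1 - f := by field_simp; ring
      rw [this]

end Marg

/-! ### Laws at small vertices -/

/-- Every pattern of bits on at most four vertices of `N` occurs in almost the expected number of
blocks. -/
def Rich {V : Type*} [DecidableEq V] {M : ℕ} (τ : V → Fin M → Bool) (N : Finset V) (ε : ℝ) : Prop :=
  ∀ s ⊆ N, s.card ≤ 4 → ∀ t ⊆ s, (1 - ε) * M / 2 ^ s.card ≤
    ((Finset.univ.filter fun i => ∀ v ∈ s, (τ v i = true ↔ v ∈ t)).card : ℝ)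

section Config

variable {V : Type*} [DecidableEq V] {M : ℕ} {τ : V → Fin M → Bool} {N : Finset V} {ε : ℝ}

theorem Rich.mono {N' : Finset V} (h : Rich τ N ε) (hN : N' ⊆ N) : Rich τ N' ε :=
  fun s hs => h s (hs.trans hN)

theorem Rich.sum_ge (h : Rich τ N ε) {k : ℕ} (hk : k ≤ 4) (g : Fin k → V)
    (hg : Function.Injective g) (hN : ∀ j, g j ∈ N) (F : (Fin k → Bool) → ℝ) (hF : ∀ π, 0 ≤ F π) :
    (∑ π, F π) * ((1 - ε) * M / 2 ^ k) ≤ ∑ i, F (fun j => τ (g j) i) := by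
  have e1 : ∑ i, F (fun j => τ (g j) i) =
      ∑ π, F π * ((Finset.univ.filter fun i => (fun j => τ (g j) i) = π).card : ℝ) := by
    have : ∀ i, F (fun j => τ (g j) i) = ∑ π, F π * if (fun j => τ (g j) i) = π then 1 else 0 := by
      intro i; simp
    rw [Finset.sum_congr rfl fun i _ => this i, Finset.sum_comm]
    refine Finset.sum_congr rfl fun π _ => ?_
    rw [← Finset.mul_sum, Finset.sum_boole]
  rw [e1, Finset.sum_mul]
  refine Finset.sum_le_sum fun π _ => mul_le_mul_of_nonneg_left ?_ (hF π)
  have hcard : (Finset.univ.image g).card = k := by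
    rw [Finset.card_image_of_injective _ hg]; simp
  have := h (Finset.univ.image g) (by simpa [Finset.subset_iff] using hN) (by omega)
    ((Finset.univ.filter fun j => π j = true).image g)
    (Finset.image_subset_image (Finset.filter_subset _ _))
  rw [hcard] at this
  refine this.trans (Nat.cast_le.2 (Finset.card_le_card ?_))
  intro i hi
  simp only [Finset.mem_filter, Finset.mem_univ, true_and, Finset.mem_image] at hi ⊢
  ext j
  have hj := hi (g j) ⟨j, rfl⟩
  rw [Bool.eq_iff_iff, hj]
  constructor
  · rintro ⟨j', h1, h2⟩; exact hg h2 ▸ h1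
  · exact fun h => ⟨j, h, rfl⟩

theorem Rich.card_ge (h : Rich τ N ε) {k : ℕ} (hk : k ≤ 4) (g : Fin k → V)
    (hg : Function.Injective g) (hN : ∀ j, g j ∈ N) (P : (Fin k → Bool) → Prop)
    [DecidablePred P] :
    ((Finset.univ.filter P).card : ℝ) * ((1 - ε) * M / 2 ^ k) ≤
      ((Finset.univ.filter fun i => P (fun j => τ (g j) i)).card : ℝ) := by
  have := h.sum_ge hk g hg hN (fun π => if P π then 1 else 0) (fun π => by split_ifs <;> simp)
  simpa only [Finset.sum_boole] using this

/-- The number of vertices of `N` whose bit in block `i` is `β`. -/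
def cnt (τ : V → Fin M → Bool) (N : Finset V) (i : Fin M) (β : Bool) : ℕ :=
  (N.filter fun x => τ x i = β).card

theorem cnt_add (i : Fin M) : cnt τ N i true + cnt τ N i false = N.card := by
  rw [cnt, cnt, ← Finset.card_filter_add_card_filter_not (s := N) (fun x => τ x i = true)]
  simp

/-- The weight of the choice of a block `i` and of two vertices of `N` with bits `true` and `false`
there. -/
noncomputable def pairW (τ : V → Fin M → Bool) (N : Finset V) (k : Fin M × V × V) : ℝ :=
  if k.2.1 ∈ N ∧ k.2.2 ∈ N ∧ τ k.2.1 k.1 = true ∧ τ k.2.2 k.1 = false then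
    ((max (cnt τ N k.1 true) (cnt τ N k.1 false) : ℕ) : ℝ)⁻¹ else 0

/-- The partial assignment putting the edges from `y` to the two chosen vertices in block `i`. -/
def pairO (y : V) (k : Fin M × V × V) (e : Sym2 V) : Option (Fin M) :=
  if e = s(y, k.2.1) ∨ e = s(y, k.2.2) then some k.1 else none

variable [Fintype V]

theorem pairW_nonneg (k : Fin M × V × V) : 0 ≤ pairW τ N k := by
  rw [pairW]; split_ifs <;> positivity

theorem sum_pairW :
    ∑ k, pairW τ N k = ∑ i, ((min (cnt τ N i true) (cnt τ N i false) : ℕ) : ℝ) := by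
  rw [Fintype.sum_prod_type]
  refine Finset.sum_congr rfl fun i _ => ?_
  have e : ∀ q : V × V, pairW τ N (i, q) =
      ((max (cnt τ N i true) (cnt τ N i false) : ℕ) : ℝ)⁻¹ *
        if q ∈ (N.filter fun x => τ x i = true) ×ˢ (N.filter fun x => τ x i = false)
          then 1 else 0 := by
    intro q
    simp only [pairW, Finset.mem_product, Finset.mem_filter, mul_ite, mul_one, mul_zero]
    congr 1
    rw [eq_iff_iff]; tauto
  rw [Finset.sum_congr rfl fun q _ => e q, ← Finset.mul_sum, Finset.sum_boole,
    Finset.filter_mem_eq_inter, Finset.univ_inter, Finset.card_product]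
  change ((max (cnt τ N i true) (cnt τ N i false) : ℕ) : ℝ)⁻¹ *
    ((cnt τ N i true * cnt τ N i false : ℕ) : ℝ) = _
  rw [← min_mul_max (cnt τ N i true) (cnt τ N i false)]
  push_cast
  by_cases h : max (cnt τ N i true : ℝ) (cnt τ N i false : ℝ) = 0
  · have h1 : (0 : ℝ) ≤ cnt τ N i true := by positivity
    have h2 := min_le_left (cnt τ N i true : ℝ) (cnt τ N i false : ℝ)
    have h3 := le_max_left (cnt τ N i true : ℝ) (cnt τ N i false : ℝ)
    have h4 : (0 : ℝ) ≤ min (cnt τ N i true : ℝ) (cnt τ N i false : ℝ) :=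
      le_min (by positivity) (by positivity)
    rw [h]; simp; linarith
  · field_simp

theorem marg_pairW_le (y x : V) (i : Fin M) :
    marg (pairW τ N) (pairO y) s(y, x) (some i) ≤
      ((max (cnt τ N i true) (cnt τ N i false) : ℕ) : ℝ)⁻¹ * cnt τ N i (!τ x i) := by
  set m := ((max (cnt τ N i true) (cnt τ N i false) : ℕ) : ℝ)⁻¹ with hm
  have hm0 : 0 ≤ m := by positivity
  have e : ∀ k : Fin M × V × V, pairW τ N k * (if pairO y k s(y, x) = some i then 1 else 0) ≤
      m * if k ∈ ((N.filter fun z => τ z i = !τ x i).image fun z =>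
        if τ x i then (i, x, z) else (i, z, x)) then 1 else 0 := by
    rintro ⟨j, a, b⟩
    by_cases hw : a ∈ N ∧ b ∈ N ∧ τ a j = true ∧ τ b j = false
    · by_cases ho : pairO y (j, a, b) s(y, x) = some i
      · rw [if_pos ho]
        simp only [pairO, Option.ite_none_right_eq_some, Option.some.injEq,
          Sym2.congr_right] at ho
        obtain ⟨hx, rfl⟩ := ho
        simp only [pairW, if_pos hw]
        rw [if_pos]
        rw [Finset.mem_image]
        rcases hx with rfl | rfl
        · refine ⟨b, by simp [hw], by simp [hw]⟩
        · refine ⟨a, by simp [hw], by simp [hw]⟩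
      · rw [if_neg ho]
        split_ifs <;> simp [hm0]
    · have : pairW τ N (j, a, b) = 0 := by simp only [pairW, if_neg hw]
      rw [this, zero_mul]
      split_ifs <;> simp [hm0]
  refine (Finset.sum_le_sum fun k _ => e k).trans ?_
  rw [← Finset.mul_sum, Finset.sum_boole, Finset.filter_mem_eq_inter, Finset.univ_inter]
  refine mul_le_mul_of_nonneg_left ?_ hm0
  exact Nat.cast_le.2 Finset.card_image_le

theorem marg_pairW_le_one (y x : V) (i : Fin M) :
    marg (pairW τ N) (pairO y) s(y, x) (some i) ≤ 1 := by
  refine (marg_pairW_le y x i).trans ?_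
  rw [inv_mul_eq_div]
  refine div_le_one_of_le₀ ?_ (by positivity)
  cases τ x i
  · exact Nat.cast_le.2 (le_max_left _ _)
  · exact Nat.cast_le.2 (le_max_right _ _)

theorem marg_pairW_eq_zero (y : V) (i : Fin M) (e : Sym2 V) (he : ∀ x, e ≠ s(y, x)) :
    marg (pairW τ N) (pairO y) e (some i) = 0 := by
  refine Finset.sum_eq_zero fun k _ => ?_
  simp [pairO, he]

theorem pair_good (y : V) (k : Fin M × V × V) (hk : 0 < pairW τ N k) (ω : Sym2 V → Option (Fin M))
    (hω : ∀ e i, pairO y k e = some i → ω e = some i) (v : V) :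
    ∃ x i, x ∈ N ∧ ω s(y, x) = some i ∧ τ x i ≠ τ v i := by
  obtain ⟨i, a, b⟩ := k
  have hw : a ∈ N ∧ b ∈ N ∧ τ a i = true ∧ τ b i = false := by
    by_contra h
    simp [pairW, if_neg h] at hk
  cases hv : τ v i
  · exact ⟨a, i, hw.1, hω _ _ (by simp [pairO]), by simp [hw, hv]⟩
  · exact ⟨b, i, hw.2.1, hω _ _ (by simp [pairO]), by simp [hw, hv]⟩

end Config

section Config

variable {V : Type*} [DecidableEq V] {M : ℕ} {τ : V → Fin M → Bool} {N : Finset V} {ε : ℝ}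

/-- Averaging over the windows of four consecutive vertices in a cyclic order of `N`: the minority
bit occurs on average at least `5/16` of the time, as it does for four independent bits. -/
theorem sum_min_cnt_ge (h : Rich τ N ε) (hd : 4 ≤ N.card) :
    5 / 16 * ((1 - ε) * N.card * M) ≤ ∑ i, ((min (cnt τ N i true) (cnt τ N i false) : ℕ) : ℝ) := by
  obtain ⟨m, hm⟩ : ∃ m, N.card = m + 4 := ⟨N.card - 4, by omega⟩
  let e : Fin (m + 4) ≃ N := (N.equivFinOfCardEq hm).symm
  let g : Fin (m + 4) → Fin 4 → V := fun j l => e (j + Fin.castLE (by omega) l)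
  have hg : ∀ j, Function.Injective (g j) := by
    intro j l l' hl
    simpa using e.injective (Subtype.ext hl)
  have hgN : ∀ j l, g j l ∈ N := fun j l => (e _).2
  let F : (Fin 4 → Bool) → ℝ := fun π =>
    ((min (Finset.univ.filter fun l => π l = true).card
      (Finset.univ.filter fun l => π l = false).card : ℕ) : ℝ)
  have hF : ∑ π, F π = 20 := by
    have : ∑ π : Fin 4 → Bool, min (Finset.univ.filter fun l => π l = true).card
      (Finset.univ.filter fun l => π l = false).card = 20 := by decide
    simp only [F]
    exact_mod_cast this
  have h1 : ∀ j, 20 * ((1 - ε) * M / 2 ^ 4) ≤ ∑ i, F (fun l => τ (g j l) i) := by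
    intro j
    have := h.sum_ge le_rfl (g j) (hg j) (hgN j) F (fun π => by simp only [F]; positivity)
    rwa [hF] at this
  have h2 : ∀ i β, ∑ j, (Finset.univ.filter fun l => τ (g j l) i = β).card = 4 * cnt τ N i β := by
    intro i β
    have e1 : ∀ j, (Finset.univ.filter fun l => τ (g j l) i = β).card =
        ∑ l, if τ (g j l) i = β then 1 else 0 := fun j => by rw [Finset.sum_boole]; simp
    rw [Finset.sum_congr rfl fun j _ => e1 j, Finset.sum_comm]
    have e2 : ∀ l : Fin 4, (∑ j, if τ (g j l) i = β then 1 else 0) = cnt τ N i β := by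
      intro l
      refine (Equiv.sum_comp (Equiv.addRight (Fin.castLE (by omega) l : Fin (m + 4)))
        (fun j => if τ (e j) i = β then 1 else 0)).trans ?_
      rw [Equiv.sum_comp e
        (fun x : N => if τ x i = β then 1 else 0), Finset.sum_coe_sort N
        (fun x => if τ x i = β then 1 else 0), Finset.sum_boole, cnt]
      simp
    rw [Finset.sum_congr rfl fun l _ => e2 l]; simp
  have h3 : ∀ i, ∑ j, F (fun l => τ (g j l) i) ≤
      4 * ((min (cnt τ N i true) (cnt τ N i false) : ℕ) : ℝ) := by
    intro i
    have : ∑ j, min (Finset.univ.filter fun l => τ (g j l) i = true).card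
        (Finset.univ.filter fun l => τ (g j l) i = false).card ≤
        4 * min (cnt τ N i true) (cnt τ N i false) := by
      have a1 := (Finset.sum_le_sum fun j (_ : j ∈ Finset.univ) =>
        min_le_left (Finset.univ.filter fun l => τ (g j l) i = true).card
        (Finset.univ.filter fun l => τ (g j l) i = false).card).trans_eq (h2 i true)
      have a2 := (Finset.sum_le_sum fun j (_ : j ∈ Finset.univ) =>
        min_le_right (Finset.univ.filter fun l => τ (g j l) i = true).card
        (Finset.univ.filter fun l => τ (g j l) i = false).card).trans_eq (h2 i false)
      omega
    simp only [F]
    exact_mod_cast this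
  have h4 := Finset.sum_le_sum fun j (_ : j ∈ (Finset.univ : Finset (Fin (m + 4)))) => h1 j
  rw [Finset.sum_comm] at h4
  have h5 := h4.trans (Finset.sum_le_sum fun i _ => h3 i)
  rw [← Finset.mul_sum, ← Finset.mul_sum] at h5
  simp only [Finset.sum_const, Finset.card_univ, Fintype.card_fin, nsmul_eq_mul] at h5
  rw [hm]
  push_cast at h5 ⊢
  linarith

variable [Fintype V]

/-- The law at a small vertex `y` all of whose neighbours, forming `N`, are large, when there are at
least four of them: a random block splitting `N` and a random pair split by it. -/
theorem config_law_four (y : V) (h : Rich τ N ε) (hd : 4 ≤ N.card) (hM : 0 < M) (hε : ε < 1)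
    (c f : ℝ) (hf : 16 / (5 * (1 - ε) * N.card) ≤ f) (hfc : f ≤ c) (hf1 : f ≤ 1) :
    ∃ r : (Sym2 V → Option (Fin M)) → ℝ, IsLaw r ∧
      (∀ ω, 0 < r ω → ∀ v ∈ N, ∃ x i, x ∈ N ∧ ω s(y, x) = some i ∧ τ x i ≠ τ v i) ∧
      (∀ e i, marg r (fun ω => ω) e (some i) ≤ c / M) ∧
      (∀ e, marg r (fun ω => ω) e none ≤ 1 - f) := by
  have hM' : (0 : ℝ) < M := by exact_mod_cast hM
  have hd' : (0 : ℝ) < N.card := by exact_mod_cast (by omega : 0 < N.card)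
  have hε' : 0 < 1 - ε := by linarith
  set Z := ∑ k, pairW τ N k with hZ
  have hZge : 5 / 16 * ((1 - ε) * N.card * M) ≤ Z := by
    rw [hZ, sum_pairW]; exact sum_min_cnt_ge h hd
  have hZ0 : 0 < Z := lt_of_lt_of_le (by positivity) hZge
  have hZi : Z⁻¹ ≤ f / M := by
    rw [le_div_iff₀ hM']
    refine le_trans ?_ hf
    rw [inv_mul_eq_div, div_le_div_iff₀ hZ0 (by positivity)]
    nlinarith
  have hmarg : ∀ e i, marg (fun k => pairW τ N k / Z) (pairO y) e (some i) ≤ Z⁻¹ := by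
    intro e i
    have e1 : marg (fun k => pairW τ N k / Z) (pairO y) e (some i) =
        marg (pairW τ N) (pairO y) e (some i) * Z⁻¹ := by
      simp only [marg, Finset.sum_mul]
      exact Finset.sum_congr rfl fun k _ => by ring
    rw [e1]
    have : marg (pairW τ N) (pairO y) e (some i) ≤ 1 := by
      by_cases he : ∃ x, e = s(y, x)
      · obtain ⟨x, rfl⟩ := he
        exact marg_pairW_le_one y x i
      · push Not at he
        rw [marg_pairW_eq_zero y i e he]; exact zero_le_one
    calc _ ≤ 1 * Z⁻¹ := by gcongr
      _ = _ := one_mul _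
  obtain ⟨r, hr, hs, hc, hn⟩ := exists_completion (fun k => pairW τ N k / Z)
    ⟨fun k => div_nonneg (pairW_nonneg k) hZ0.le, by rw [← Finset.sum_div, div_self hZ0.ne']⟩
    (pairO y) (fun _ => c / M) f hf1 (by simp; field_simp; exact hfc)
    (fun e i => (hmarg e i).trans (hZi.trans (by gcongr)))
    (fun e => by
      refine (Finset.sum_le_sum fun i _ => (hmarg e i).trans hZi).trans ?_
      simp; field_simp; exact le_rfl)
  refine ⟨r, hr, fun ω hω v _ => ?_, hc, hn⟩
  obtain ⟨k, hk, ho⟩ := hs ω hω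
  refine pair_good y k ?_ ω ho v
  exact (div_pos_iff_of_pos_right hZ0).1 hk

/-- The law at a vertex none of whose edges needs a prescribed block. -/
theorem free_law (cap : Fin M → ℝ) (h0 : ∀ i, 0 ≤ cap i) (f : ℝ) (hf0 : 0 ≤ f) (hf1 : f ≤ 1)
    (hf : f ≤ ∑ i, cap i) :
    ∃ r : (Sym2 V → Option (Fin M)) → ℝ, IsLaw r ∧
      (∀ e i, marg r (fun ω => ω) e (some i) ≤ cap i) ∧
      (∀ e, marg r (fun ω => ω) e none ≤ 1 - f) := by
  obtain ⟨r, hr, -, hc, hn⟩ := exists_completion (K := Unit) (E := Sym2 V) (fun _ => 1)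
    ⟨fun _ => zero_le_one, by simp⟩ (fun _ _ => none) cap f hf1 hf (by simp [marg, h0])
    (by simp [marg, hf0])
  exact ⟨r, hr, hc, hn⟩

/-- A law putting at least one of the edges from `u` to `N` in a block of `A`. It is used for a small
vertex `u` with a single small neighbour, `N` being the set of its large neighbours. -/
theorem leaf_law (u : V) (A : Finset (Fin M)) (hA : A.Nonempty) (hN : N.Nonempty)
    (cap : Fin M → ℝ) (h0 : ∀ i, 0 ≤ cap i) (f : ℝ) (hf1 : f ≤ 1)
    (hf : f ≤ ∑ i, cap i) (hcap : ∀ i ∈ A, 1 / (N.card * A.card) ≤ cap i)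
    (hNf : 1 / (N.card : ℝ) ≤ f) :
    ∃ r : (Sym2 V → Option (Fin M)) → ℝ, IsLaw r ∧
      (∀ ω, 0 < r ω → ∃ x i, x ∈ N ∧ i ∈ A ∧ ω s(u, x) = some i) ∧
      (∀ e i, marg r (fun ω => ω) e (some i) ≤ cap i) ∧
      (∀ e, marg r (fun ω => ω) e none ≤ 1 - f) := by
  have hA' : (0 : ℝ) < A.card := by exact_mod_cast hA.card_pos
  have hN' : (0 : ℝ) < N.card := by exact_mod_cast hN.card_pos
  let q : V × Fin M → ℝ := fun k => if k ∈ N ×ˢ A then 1 / ((N.card : ℝ) * A.card) else 0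
  let o : V × Fin M → Sym2 V → Option (Fin M) := fun k e => if e = s(u, k.1) then some k.2 else none
  have hq : IsLaw q := by
    constructor
    · intro k; simp only [q]; split_ifs <;> positivity
    · simp only [q]
      rw [Finset.sum_ite_mem, Finset.univ_inter, Finset.sum_const, Finset.card_product,
        nsmul_eq_mul]
      push_cast
      field_simp
  have hm : ∀ e i, marg q o e (some i) ≤ if i ∈ A then 1 / ((N.card : ℝ) * A.card) else 0 := by
    intro e i
    by_cases he : ∃ x, e = s(u, x)
    · obtain ⟨x, rfl⟩ := he
      have : marg q o s(u, x) (some i) = q (x, i) := by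
        simp only [marg]
        rw [Finset.sum_eq_single (x, i)]
        · simp [o]
        · rintro ⟨a, b⟩ - hab
          have : ¬ (o (a, b) s(u, x) = some i) := by
            simp only [o]
            intro hh
            simp only [Option.ite_none_right_eq_some, Option.some.injEq, Sym2.congr_right] at hh
            exact hab (by rw [hh.1, hh.2])
          simp [this]
        · simp
      rw [this]
      simp only [q, Finset.mem_product]
      split_ifs <;> first | exact le_rfl | positivity | tauto
    · push Not at he
      have : marg q o e (some i) = 0 := by simp [marg, o, he]
      rw [this]; split_ifs <;> positivity
  obtain ⟨r, hr, hs, hc, hn⟩ := exists_completion q hq o cap f hf1 hf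
    (fun e i => (hm e i).trans (by split_ifs with hi; exacts [hcap i hi, h0 i]))
    (fun e => by
      refine (Finset.sum_le_sum fun i _ => hm e i).trans ?_
      rw [Finset.sum_ite_mem, Finset.univ_inter, Finset.sum_const, nsmul_eq_mul]
      refine le_trans (le_of_eq ?_) hNf
      field_simp)
  refine ⟨r, hr, fun ω hω => ?_, hc, hn⟩
  obtain ⟨⟨x, i⟩, hk, ho⟩ := hs ω hω
  have hmem : (x, i) ∈ N ×ˢ A := by
    by_contra hh
    simp only [q, if_neg hh, lt_irrefl] at hk
  rw [Finset.mem_product] at hmem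
  exact ⟨x, i, hmem.1, hmem.2, ho _ _ (by simp [o])⟩

end Config

/-! ### The law at a vertex of degree three -/

section ConfigThree

/-- The two nontrivial rotations of a triple. -/
def rot (s : Bool) : Fin 3 := if s then 1 else 2

variable {V : Type*} [DecidableEq V] {M : ℕ}

/-- The blocks in which, of the three vertices `g 0, g 1, g 2`, the odd one out is the image of
`g j` under the rotation `s`. -/
def oddBlocks (τ : V → Fin M → Bool) (g : Fin 3 → V) (s : Bool) (j : Fin 3) : Finset (Fin M) :=
  Finset.univ.filter fun i => τ (g j) i ≠ τ (g (j + rot s)) i ∧ τ (g j) i = τ (g (j + rot (!s))) i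

variable [Fintype V] {τ : V → Fin M → Bool} {ε : ℝ}

theorem cnt_image {g : Fin 3 → V} (hg : Function.Injective g) (i : Fin M) (β : Bool) :
    cnt τ (Finset.univ.image g) i β = (Finset.univ.filter fun j => τ (g j) i = β).card := by
  rw [cnt, Finset.filter_image, Finset.card_image_of_injective _ hg]

theorem marg_pairW_odd {g : Fin 3 → V} (hg : Function.Injective g) (y : V) {s : Bool} {j : Fin 3}
    {i : Fin M} (hi : i ∈ oddBlocks τ g s j) :
    marg (pairW τ (Finset.univ.image g)) (pairO y) s(y, g j) (some i) ≤ 1 / 2 := by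
  refine (marg_pairW_le y (g j) i).trans ?_
  rw [cnt_image hg, cnt_image hg, cnt_image hg]
  simp only [oddBlocks, Finset.mem_filter, Finset.mem_univ, true_and] at hi
  have key : ∀ (s : Bool) (j : Fin 3) (π : Fin 3 → Bool), π j ≠ π (j + rot s) →
      π j = π (j + rot (!s)) →
      max (Finset.univ.filter fun j => π j = true).card
        (Finset.univ.filter fun j => π j = false).card = 2 ∧
      (Finset.univ.filter fun j' => π j' = !π j).card = 1 := by
    decide
  obtain ⟨h1, h2⟩ := key s j (fun j => τ (g j) i) hi.1 hi.2
  rw [h1, h2]; norm_num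

theorem card_oddBlocks {g : Fin 3 → V} (hg : Function.Injective g)
    (h : Rich τ (Finset.univ.image g) ε) (s : Bool) (j : Fin 3) :
    (1 - ε) * M / 4 ≤ ((oddBlocks τ g s j).card : ℝ) := by
  have := h.card_ge (k := 3) (by norm_num) g hg (fun j => Finset.mem_image_of_mem g (Finset.mem_univ j))
    (fun π => π j ≠ π (j + rot s) ∧ π j = π (j + rot (!s)))
  have key : ∀ (s : Bool) (j : Fin 3), (Finset.univ.filter fun π : Fin 3 → Bool =>
    π j ≠ π (j + rot s) ∧ π j = π (j + rot (!s))).card = 2 := by decide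
  rw [key] at this
  refine le_trans (le_of_eq ?_) this
  push_cast; ring

/-- The law at a small vertex `y` with exactly three neighbours, forming `N`, all of them large. With
probability `3/4` a random block splitting `N` and a random pair split by it is used; otherwise the
three edges are put in blocks telling the three neighbours cyclically apart. The mixture uses no
block more often than the uniform law, up to the factor `1 / (1 - ε)`. -/
theorem config_law_three (y : V) {N : Finset V} (h : Rich τ N ε) (hd : N.card = 3) (hM : 0 < M)
    (hε0 : 0 ≤ ε) (hε : ε < 1) (c : ℝ) (hc : 1 / (1 - ε) ≤ c) :
    ∃ r : (Sym2 V → Option (Fin M)) → ℝ, IsLaw r ∧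
      (∀ ω, 0 < r ω → ∀ v ∈ N, ∃ x i, x ∈ N ∧ ω s(y, x) = some i ∧ τ x i ≠ τ v i) ∧
      (∀ e i, marg r (fun ω => ω) e (some i) ≤ c / M) ∧
      (∀ e, marg r (fun ω => ω) e none ≤ 1 - 1) := by
  obtain ⟨g, hg, rfl⟩ : ∃ g : Fin 3 → V, Function.Injective g ∧ N = Finset.univ.image g := by
    let e := (N.equivFinOfCardEq hd).symm
    refine ⟨fun j => e j, fun a b hab => e.injective (Subtype.ext hab), ?_⟩
    ext x
    simp only [Finset.mem_image, Finset.mem_univ, true_and]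
    exact ⟨fun hx => ⟨e.symm ⟨x, hx⟩, by simp⟩, by rintro ⟨j, rfl⟩; exact (e j).2⟩
  have hM' : (0 : ℝ) < M := by exact_mod_cast hM
  have hε' : 0 < 1 - ε := by linarith
  set N := Finset.univ.image g with hN
  have hgN : ∀ j, g j ∈ N := fun j => Finset.mem_image_of_mem g (Finset.mem_univ j)
  set Z := ∑ k, pairW τ N k with hZ
  have hZge : 3 / 4 * ((1 - ε) * M) ≤ Z := by
    rw [hZ, sum_pairW]
    have := h.sum_ge (k := 3) (by norm_num) g hg hgN
      (fun π => ((min (Finset.univ.filter fun j => π j = true).card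
        (Finset.univ.filter fun j => π j = false).card : ℕ) : ℝ)) (fun π => by positivity)
    have key : ∑ π : Fin 3 → Bool, min (Finset.univ.filter fun j => π j = true).card
        (Finset.univ.filter fun j => π j = false).card = 6 := by decide
    rw [← Nat.cast_sum, key] at this
    simp only [hN, cnt_image hg]
    refine le_trans (le_of_eq ?_) this
    push_cast; ring
  have hZ0 : 0 < Z := lt_of_lt_of_le (by positivity) hZge
  have hB0 : ∀ s j, (0 : ℝ) < (oddBlocks τ g s j).card := fun s j =>
    lt_of_lt_of_le (by positivity) (card_oddBlocks hg h s j)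
  let bl : Bool → Fin 3 → Fin M → ℝ := fun s j i =>
    if i ∈ oddBlocks τ g s j then 1 / ((oddBlocks τ g s j).card : ℝ) else 0
  have hbl : ∀ s j, IsLaw (bl s j) := by
    intro s j
    constructor
    · intro i; simp only [bl]; split_ifs <;> positivity
    · simp only [bl]
      rw [Finset.sum_ite_mem, Finset.univ_inter, Finset.sum_const, nsmul_eq_mul, mul_one_div,
        div_self (hB0 s j).ne']
  let oB : Bool × (Fin 3 → Fin M) → Sym2 V → Option (Fin M) := fun k e =>
    if hx : ∃ j, e = s(y, g j) then some (k.2 hx.choose) else none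
  have hoB : ∀ k j, oB k s(y, g j) = some (k.2 j) := by
    intro k j
    have hx : ∃ j', s(y, g j) = s(y, g j') := ⟨j, rfl⟩
    have h1 : hx.choose = j := by
      have := hx.choose_spec
      rw [Sym2.congr_right] at this
      exact (hg this).symm
    simp only [oB, dif_pos hx, h1]
  let q : (Fin M × V × V) ⊕ (Bool × (Fin 3 → Fin M)) → ℝ :=
    Sum.elim (fun k => 3 / 4 / Z * pairW τ N k) (fun k => 1 / 8 * ∏ j, bl k.1 j (k.2 j))
  let o : (Fin M × V × V) ⊕ (Bool × (Fin 3 → Fin M)) → Sym2 V → Option (Fin M) :=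
    Sum.elim (pairO y) oB
  have hsumB : ∀ s, ∑ h : Fin 3 → Fin M, ∏ j, bl s j (h j) = 1 := by
    intro s
    have := EE_one (hbl s)
    simpa [EE] using this
  have hq : IsLaw q := by
    constructor
    · rintro (k | k)
      · exact mul_nonneg (by positivity) (pairW_nonneg k)
      · exact mul_nonneg (by norm_num) (Finset.prod_nonneg fun j _ => (hbl _ j).nonneg _)
    · rw [Fintype.sum_sum_type]
      simp only [q, Sum.elim_inl, Sum.elim_inr]
      rw [← Finset.mul_sum, ← hZ, Fintype.sum_prod_type]
      simp only [← Finset.mul_sum, hsumB]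
      rw [div_mul_cancel₀ _ hZ0.ne']
      norm_num
  have hmsplit : ∀ e i, marg q o e (some i) = 3 / 4 / Z * marg (pairW τ N) (pairO y) e (some i) +
      ∑ s, 1 / 8 * ∑ h : Fin 3 → Fin M, (∏ j, bl s j (h j)) *
        if oB (s, h) e = some i then 1 else 0 := by
    intro e i
    simp only [marg]
    rw [Fintype.sum_sum_type]
    simp only [q, o, Sum.elim_inl, Sum.elim_inr]
    simp only [Finset.mul_sum, mul_assoc]
    congr 1
    exact Fintype.sum_prod_type _
  have hAle : 3 / 4 / Z ≤ 1 / ((1 - ε) * M) := by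
    rw [div_le_div_iff₀ hZ0 (by positivity)]; linarith
  have hBle : ∀ s j i, bl s j i ≤ 4 / ((1 - ε) * M) := by
    intro s j i
    simp only [bl]
    split_ifs
    · rw [div_le_div_iff₀ (hB0 s j) (by positivity)]
      linarith [card_oddBlocks hg h s j]
    · positivity
  have hcM : 1 / ((1 - ε) * M) ≤ c / M := by
    rw [← div_div]; gcongr
  have hmarg : ∀ e i, marg q o e (some i) ≤ c / M := by
    intro e i
    refine le_trans ?_ hcM
    rw [hmsplit]
    by_cases he : ∃ j, e = s(y, g j)
    · obtain ⟨j, rfl⟩ := he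
      have e1 : ∀ s, ∑ h : Fin 3 → Fin M, (∏ j, bl s j (h j)) *
          (if oB (s, h) s(y, g j) = some i then (1 : ℝ) else 0) = bl s j i := by
        intro s
        have := EE_coord (hbl s) j (fun i' => if i' = i then (1 : ℝ) else 0)
        simp only [EE, mul_ite, mul_one, mul_zero, Finset.sum_ite_eq', Finset.mem_univ,
          if_true] at this
        rw [← this]
        simp [hoB]
      rw [Finset.sum_congr rfl fun s _ => by rw [e1 s]]
      have hk : (0 : ℝ) < 1 / ((1 - ε) * M) := by positivity
      have h4 : 4 / ((1 - ε) * M) = 4 * (1 / ((1 - ε) * M)) := by ring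
      simp only [Fintype.sum_bool]
      by_cases hs : ∃ s, i ∈ oddBlocks τ g s j
      · obtain ⟨s, hs⟩ := hs
        have hns : i ∉ oddBlocks τ g (!s) j := by
          simp only [oddBlocks, Finset.mem_filter, Finset.mem_univ, true_and, Bool.not_not] at hs ⊢
          exact fun hh => hh.1 hs.2
        have hz : bl (!s) j i = 0 := by simp only [bl, if_neg hns]
        have h1 : bl true j i + bl false j i ≤ 4 / ((1 - ε) * M) := by
          cases s
          · have := hBle false j i
            simp only [Bool.not_false] at hz; linarith
          · have := hBle true j i
            simp only [Bool.not_true] at hz; linarith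
        have h2 := marg_pairW_odd hg y hs
        have h3 : 3 / 4 / Z * marg (pairW τ N) (pairO y) s(y, g j) (some i) ≤
            1 / ((1 - ε) * M) * (1 / 2) :=
          mul_le_mul hAle h2 (marg_nonneg pairW_nonneg _ _ _) hk.le
        rw [h4] at h1
        linarith
      · push Not at hs
        have hz : ∀ s, bl s j i = 0 := fun s => by simp only [bl, if_neg (hs s)]
        rw [hz, hz]
        have h3 : 3 / 4 / Z * marg (pairW τ N) (pairO y) s(y, g j) (some i) ≤
            1 / ((1 - ε) * M) * 1 :=
          mul_le_mul hAle (marg_pairW_le_one y (g j) i) (marg_nonneg pairW_nonneg _ _ _) hk.le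
        linarith
    · have e1 : ∀ k, ¬ (oB k e = some i) := fun k => by simp only [oB, dif_neg he]; simp
      simp only [e1, if_false, mul_zero, Finset.sum_const_zero, add_zero]
      have hle : marg (pairW τ N) (pairO y) e (some i) ≤ 1 := by
        by_cases he' : ∃ x, e = s(y, x)
        · obtain ⟨x, rfl⟩ := he'
          exact marg_pairW_le_one y x i
        · push Not at he'
          rw [marg_pairW_eq_zero y i e he']; exact zero_le_one
      calc _ ≤ 1 / ((1 - ε) * M) * 1 :=
            mul_le_mul hAle hle (marg_nonneg pairW_nonneg _ _ _) (by positivity)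
        _ = _ := mul_one _
  have h1c : 1 ≤ c := le_trans (by rw [le_div_iff₀ hε']; linarith) hc
  obtain ⟨r, hr, hs, hcc, hn⟩ := exists_completion q hq o (fun _ => c / M) 1 le_rfl
    (by simp; field_simp; exact h1c) hmarg (fun e => by
      have := marg_total hq o e
      linarith [marg_nonneg hq.nonneg o e none])
  refine ⟨r, hr, fun ω hω v hv => ?_, hcc, hn⟩
  obtain ⟨k | ⟨s, t⟩, hk, ho⟩ := hs ω hω
  · have hk' : 0 < 3 / 4 / Z * pairW τ N k := hk
    exact pair_good y k (pos_of_mul_pos_right hk' (by positivity)) ω ho v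
  · have hk' : 0 < 1 / 8 * ∏ j, bl s j (t j) := hk
    obtain ⟨j', -, rfl⟩ := Finset.mem_image.1 hv
    have hb : t (j' - rot s) ∈ oddBlocks τ g s (j' - rot s) := by
      by_contra hb
      have : ∏ j, bl s j (t j) = 0 :=
        Finset.prod_eq_zero (Finset.mem_univ (j' - rot s)) (by simp only [bl, if_neg hb])
      rw [this] at hk'; simp at hk'
    refine ⟨g (j' - rot s), t (j' - rot s), hgN _, ho _ _ (hoB (s, t) _), ?_⟩
    simp only [oddBlocks, Finset.mem_filter, Finset.mem_univ, true_and, sub_add_cancel] at hb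
    exact hb.1

end ConfigThree

/-! ### Random blocks -/

section StageOne

variable {V : Type*} [Fintype V] [DecidableEq V] {G : SimpleGraph V} [DecidableRel G.Adj]
  {A : Type*} [Fintype A] [DecidableEq A] {M : ℕ}

/-- The Chernoff bound for the number of edges from `x` to `s` whose assigned value has property `P`,
when these edges have different agents. -/
theorem agent_chernoff (ag : Sym2 V → A) (p : A → (Sym2 V → Option (Fin M)) → ℝ)
    (hp : ∀ a, IsLaw (p a)) (x : V) (s : Finset V)
    (hinj : ∀ y ∈ s, ∀ y' ∈ s, ag s(x, y) = ag s(x, y') → y = y')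
    (P : Option (Fin M) → Prop) [DecidablePred P] {m t N : ℝ}
    (hm : ∑ y ∈ s, ∑ k, p (ag s(x, y)) k * (if P (k s(x, y)) then 1 else 0) ≤ m)
    (hmN : m ≤ N) (ht : 0 < t) (htN : t ≤ 2 * N) :
    PP p {ω | m + t ≤ ((s.filter fun y => P (ω (ag s(x, y)) s(x, y))).card : ℝ)} ≤
      Real.exp (-(t ^ 2 / (4 * N))) := by
  have := chernoff hp s (fun y ω => if P (ω (ag s(x, y)) s(x, y)) then (1 : ℝ) else 0)
    (fun y => {ag s(x, y)}) (fun y _ a b hab => by simp only [hab _ rfl])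
    (fun y hy y' hy' hne => by
      rw [Set.disjoint_singleton]
      exact fun h => hne (hinj y hy y' hy' h))
    (fun y _ ω => by split_ifs <;> simp)
    (m := m) (t := t) (N := N) (by
      refine le_trans (le_of_eq (Finset.sum_congr rfl fun y _ => ?_)) hm
      exact EE_coord hp (ag s(x, y)) (fun k => if P (k s(x, y)) then (1 : ℝ) else 0)) hmN ht htN
  simpa only [Finset.sum_boole] using this

/-- The random assignment of blocks. Each edge at a large vertex is handled by an agent, the agents
act independently with laws `p`, and with positive probability all block loads are close to their
means and every two adjacent large vertices are told apart. -/
theorem exists_blocks {Δ D : ℕ} (hΔ : ∀ v, G.degree v ≤ Δ) (hΔ1 : 1 ≤ Δ) (hD : 2 ≤ D)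
    (τ : V → Fin M → Bool) (ag : Sym2 V → A) (p : A → (Sym2 V → Option (Fin M)) → ℝ)
    (hp : ∀ a, IsLaw (p a))
    (hinj : ∀ x y y', D ≤ G.degree x → G.Adj x y → G.Adj x y' → ag s(x, y) = ag s(x, y') → y = y')
    (hloc : ∀ x y x' y', D ≤ G.degree x → D ≤ G.degree x' → G.Adj x y → G.Adj x' y' →
      ag s(x, y) = ag s(x', y') → ∃ w, w ∈ closedNbhd G x ∧ w ∈ closedNbhd G x')
    {m1 t1 N1 m0 t0 η : ℝ} (hmN1 : m1 ≤ N1) (ht1 : 0 < t1) (htN1 : t1 ≤ 2 * N1)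
    (hm1 : ∀ x i, D ≤ G.degree x →
      ∑ y ∈ G.neighborFinset x, marg (p (ag s(x, y))) (fun ω => ω) s(x, y) (some i) ≤ m1)
    (hmN0 : m0 ≤ Δ) (ht0 : 0 < t0) (htN0 : t0 ≤ 2 * Δ)
    (hm0 : ∀ x, D ≤ G.degree x →
      ∑ y ∈ G.neighborFinset x, marg (p (ag s(x, y))) (fun ω => ω) s(x, y) none ≤ m0)
    (hη : 0 < η) (hη1 : η ≤ 1)
    (hcert : ∀ x y z, D ≤ G.degree x → D ≤ G.degree z → G.Adj x y → G.Adj x z → y ≠ z →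
      ∑ k, p (ag s(x, y)) k *
        (if (∃ i, k s(x, y) = some i ∧ τ x i ≠ τ z i) then 0 else 1) ≤ 1 - η)
    (hnum : 4 * ((Δ : ℝ) + 1) ^ 2 * (M * Real.exp (-(t1 ^ 2 / (4 * N1))) +
      Real.exp (-(t0 ^ 2 / (4 * Δ))) + Δ * Real.exp (-(η ^ 2 * ((D : ℝ) - 1) / 4))) ≤ 1) :
    ∃ ω : A → Sym2 V → Option (Fin M), (∀ a, 0 < p a (ω a)) ∧ ∀ x, D ≤ G.degree x →
      (∀ i, (((G.neighborFinset x).filter fun y => ω (ag s(x, y)) s(x, y) = some i).card : ℝ) <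
        m1 + t1) ∧
      (((G.neighborFinset x).filter fun y => ω (ag s(x, y)) s(x, y) = none).card : ℝ) < m0 + t0 ∧
      ∀ z, G.Adj x z → D ≤ G.degree z →
        ∃ y i, G.Adj x y ∧ ω (ag s(x, y)) s(x, y) = some i ∧ τ x i ≠ τ z i := by
  -- bad events: too many edges in a block, too many outside the blocks, and `x` not told from `z`
  let B1 : V → Fin M → Set (A → Sym2 V → Option (Fin M)) := fun x i =>
    {ω | m1 + t1 ≤ (((G.neighborFinset x).filter fun y =>
      ω (ag s(x, y)) s(x, y) = some i).card : ℝ)}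
  let B0 : V → Set (A → Sym2 V → Option (Fin M)) := fun x =>
    {ω | m0 + t0 ≤ (((G.neighborFinset x).filter fun y =>
      ω (ag s(x, y)) s(x, y) = none).card : ℝ)}
  let B2 : V → V → Set (A → Sym2 V → Option (Fin M)) := fun x z =>
    {ω | ∀ y ∈ (G.neighborFinset x).erase z,
      ¬ ∃ i, ω (ag s(x, y)) s(x, y) = some i ∧ τ x i ≠ τ z i}
  have hB1 : ∀ x i, D ≤ G.degree x → PP p (B1 x i) ≤ Real.exp (-(t1 ^ 2 / (4 * N1))) := by
    intro x i hx
    exact agent_chernoff ag p hp x _ (fun y hy y' hy' h => hinj x y y' hx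
      ((G.mem_neighborFinset _ _).1 hy) ((G.mem_neighborFinset _ _).1 hy') h)
      (fun a => a = some i) (hm1 x i hx) hmN1 ht1 htN1
  have hB0 : ∀ x, D ≤ G.degree x → PP p (B0 x) ≤ Real.exp (-(t0 ^ 2 / (4 * Δ))) := by
    intro x hx
    exact agent_chernoff ag p hp x _ (fun y hy y' hy' h => hinj x y y' hx
      ((G.mem_neighborFinset _ _).1 hy) ((G.mem_neighborFinset _ _).1 hy') h)
      (fun a => a = none) (hm0 x hx) hmN0 ht0 htN0
  have hB2 : ∀ x z, D ≤ G.degree x → G.Adj x z → D ≤ G.degree z →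
      PP p (B2 x z) ≤ Real.exp (-(η ^ 2 * ((D : ℝ) - 1) / 4)) := by
    intro x z hx hxz hz
    set s := (G.neighborFinset x).erase z with hs
    have hsc : ((s.card : ℕ) : ℝ) + 1 = G.degree x := by
      have := Finset.card_erase_add_one ((G.mem_neighborFinset x z).2 hxz)
      rw [SimpleGraph.card_neighborFinset_eq_degree] at this
      exact_mod_cast this
    have hDx : (D : ℝ) ≤ G.degree x := by exact_mod_cast hx
    have hD' : (2 : ℝ) ≤ D := by exact_mod_cast hD
    have hs0 : (0 : ℝ) < s.card := by linarith
    have hsadj : ∀ y ∈ s, y ≠ z ∧ G.Adj x y := fun y hy => by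
      simpa [hs] using hy
    have := agent_chernoff ag p hp x s
      (fun y hy y' hy' h => hinj x y y' hx (hsadj y hy).2 (hsadj y' hy').2 h)
      (fun a => ¬ ∃ i, a = some i ∧ τ x i ≠ τ z i) (m := (1 - η) * s.card) (t := η * s.card)
      (N := s.card) (by
        refine (Finset.sum_le_sum fun y hy => ?_).trans (b := ∑ _y ∈ s, (1 - η)) ?_
        · refine le_trans (le_of_eq ?_)
            (hcert x y z hx hz (hsadj y hy).2 hxz (hsadj y hy).1)
          exact Finset.sum_congr rfl fun k _ => by rw [ite_not]
        · rw [Finset.sum_const, nsmul_eq_mul, mul_comm]) (by nlinarith) (by positivity)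
      (by nlinarith)
    refine (PP_mono hp ?_).trans (this.trans ?_)
    · intro ω hω
      simp only [B2, Set.mem_ofPred_eq] at hω ⊢
      rw [Finset.filter_true_of_mem hω]
      linarith
    · rw [Real.exp_le_exp, neg_le_neg_iff]
      have : (η * s.card) ^ 2 / (4 * s.card) = η ^ 2 * s.card / 4 := by field_simp
      rw [this]
      have : (D : ℝ) - 1 ≤ s.card := by linarith
      gcongr
  let B : V → Set (A → Sym2 V → Option (Fin M)) := fun x =>
    if D ≤ G.degree x then ((⋃ i ∈ (Finset.univ : Finset (Fin M)), B1 x i) ∪ B0 x) ∪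
      ⋃ z ∈ (G.neighborFinset x).filter (fun z => D ≤ G.degree z), B2 x z else ∅
  let T : V → Set A := fun x => {a | D ≤ G.degree x ∧ ∃ y, G.Adj x y ∧ a = ag s(x, y)}
  set q : ℝ := M * Real.exp (-(t1 ^ 2 / (4 * N1))) +
      Real.exp (-(t0 ^ 2 / (4 * Δ))) + Δ * Real.exp (-(η ^ 2 * ((D : ℝ) - 1) / 4)) with hq
  have hq0 : 0 ≤ q := by positivity
  have hPB : ∀ x, PP p (B x) ≤ q := by
    intro x
    by_cases hx : D ≤ G.degree x
    · simp only [B, if_pos hx]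
      refine (PP_union_le hp _ _).trans (add_le_add ((PP_union_le hp _ _).trans
        (add_le_add ?_ (hB0 x hx))) ?_)
      · refine (PP_biUnion_le hp _ _).trans ?_
        refine (Finset.sum_le_sum fun i _ => hB1 x i hx).trans ?_
        simp
      · refine (PP_biUnion_le hp _ _).trans ?_
        refine (Finset.sum_le_sum fun z hz => hB2 x z hx ?_ ?_).trans ?_
        · simpa using (Finset.mem_filter.1 hz).1
        · exact (Finset.mem_filter.1 hz).2
        · rw [Finset.sum_const, nsmul_eq_mul]
          refine mul_le_mul_of_nonneg_right ?_ (Real.exp_pos _).le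
          have := (Finset.card_filter_le (G.neighborFinset x) (fun z => D ≤ G.degree z)).trans_eq
            (G.card_neighborFinset_eq_degree x)
          exact_mod_cast this.trans (hΔ x)
    · simp only [B, if_neg hx]
      have : PP p (∅ : Set (A → Sym2 V → Option (Fin M))) = 0 := by simp [PP, EE]
      rw [this]; exact hq0
  have hdep : ∀ x, DependsOn (· ∈ B x) (T x) := by
    intro x a b hab
    by_cases hx : D ≤ G.degree x
    · have e : ∀ y, G.Adj x y → a (ag s(x, y)) = b (ag s(x, y)) := fun y hy =>
        hab _ ⟨hx, y, hy, rfl⟩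
      have e1 : ∀ i, (a ∈ B1 x i ↔ b ∈ B1 x i) := by
        intro i
        simp only [B1, Set.mem_ofPred_eq]
        rw [Finset.filter_congr fun y hy => by rw [e y ((G.mem_neighborFinset _ _).1 hy)]]
      have e0 : a ∈ B0 x ↔ b ∈ B0 x := by
        simp only [B0, Set.mem_ofPred_eq]
        rw [Finset.filter_congr fun y hy => by rw [e y ((G.mem_neighborFinset _ _).1 hy)]]
      have e2 : ∀ z, (a ∈ B2 x z ↔ b ∈ B2 x z) := by
        intro z
        simp only [B2, Set.mem_ofPred_eq]
        exact forall₂_congr fun y hy => by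
          rw [e y ((G.mem_neighborFinset _ _).1 (Finset.mem_of_mem_erase hy))]
      simp only [B, if_pos hx, Set.mem_union, Set.mem_iUnion, e1, e0, e2]
    · simp only [B, if_neg hx, Set.mem_empty_iff_false]
  obtain ⟨ω, hω0, hω⟩ := local_lemma hp B T hdep (g := ((Δ : ℝ) + 1) ^ 2) (q := q)
    (ncard_close_le hΔ T fun u u' hd => by
      rw [Set.not_disjoint_iff] at hd
      obtain ⟨a, ⟨h1, y, h2, h3⟩, ⟨h1', y', h2', h3'⟩⟩ := hd
      exact hloc u y u' y' h1 h1' h2 h2' (h3.symm.trans h3')) hPB (by linarith) (by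
        have h1 : (1 : ℝ) ≤ Δ := by exact_mod_cast hΔ1
        have : (1 : ℝ) ≤ ((Δ : ℝ) + 1) ^ 2 := one_le_pow₀ (by linarith)
        nlinarith)
  refine ⟨ω, hω0, fun x hx => ?_⟩
  have hx' := hω x
  simp only [B, if_pos hx, Set.mem_union, Set.mem_iUnion, not_or, not_exists] at hx'
  refine ⟨fun i => not_le.1 (hx'.1.1 i (Finset.mem_univ i)), not_le.1 hx'.1.2, fun z hxz hz => ?_⟩
  have := hx'.2 z (Finset.mem_filter.2 ⟨(G.mem_neighborFinset _ _).2 hxz, hz⟩)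
  simp only [B2, Set.mem_ofPred_eq] at this
  push Not at this
  obtain ⟨y, hy, i, h1, h2⟩ := this
  exact ⟨y, i, (G.mem_neighborFinset _ _).1 (Finset.mem_of_mem_erase hy), h1, h2⟩

end StageOne

/-! ### The laws of the agents -/

section Rich

variable {V : Type*} [DecidableEq V] {M : ℕ} {τ : V → Fin M → Bool} {N : Finset V} {ε : ℝ}

theorem Rich.card_le (h : Rich τ N ε) {k : ℕ} (hk : k ≤ 4) (g : Fin k → V)
    (hg : Function.Injective g) (hN : ∀ j, g j ∈ N) (P : (Fin k → Bool) → Prop)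
    [DecidablePred P] :
    ((Finset.univ.filter fun i => P (fun j => τ (g j) i)).card : ℝ) ≤
      M - ((Finset.univ.filter fun π => ¬ P π).card : ℝ) * ((1 - ε) * M / 2 ^ k) := by
  have h1 := h.card_ge hk g hg hN (fun π => ¬ P π)
  have h2 := Finset.card_filter_add_card_filter_not (s := (Finset.univ : Finset (Fin M)))
    (fun i => P (fun j => τ (g j) i))
  simp only [Finset.card_univ, Fintype.card_fin] at h2
  have h3 : ((Finset.univ.filter fun i => P (fun j => τ (g j) i)).card : ℝ) +
    ((Finset.univ.filter fun i => ¬ P (fun j => τ (g j) i)).card : ℝ) = M := by exact_mod_cast h2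
  linarith

theorem injective_two {x y : V} (h : x ≠ y) : Function.Injective ![x, y] := by
  intro a b
  fin_cases a <;> fin_cases b <;> simp [h, h.symm]

theorem injective_three {x y z : V} (h : x ≠ y) (h' : x ≠ z) (hyz : y ≠ z) :
    Function.Injective ![x, y, z] := by
  intro a b
  fin_cases a <;> fin_cases b <;> simp [h, h', hyz, h.symm, h'.symm, hyz.symm]

theorem Rich.false_ge (h : Rich τ N ε) {x : V} (hx : x ∈ N) :
    (1 - ε) * M / 2 ≤ ((Finset.univ.filter fun i => τ x i = false).card : ℝ) := by
  have := h.card_ge (k := 1) (by norm_num) ![x] (fun a b _ => Subsingleton.elim _ _)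
    (fun j => by fin_cases j; exact hx) (fun π => π 0 = false)
  have key : (Finset.univ.filter fun π : Fin 1 → Bool => π 0 = false).card = 1 := by decide
  rw [key] at this
  refine le_trans (le_of_eq ?_) this
  push_cast; ring

theorem Rich.split_ge (h : Rich τ N ε) {x y : V} (hx : x ∈ N) (hy : y ∈ N) (hxy : x ≠ y) :
    (1 - ε) * M / 4 ≤ ((Finset.univ.filter fun i => τ x i = false ∧ τ y i = true).card : ℝ) := by
  have := h.card_ge (k := 2) (by norm_num) ![x, y] (injective_two hxy)
    (fun j => by fin_cases j; exacts [hx, hy]) (fun π => π 0 = false ∧ π 1 = true)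
  have key : (Finset.univ.filter fun π : Fin 2 → Bool => π 0 = false ∧ π 1 = true).card = 1 := by
    decide
  rw [key] at this
  refine le_trans (le_of_eq ?_) this
  push_cast; ring

theorem Rich.agree_ge (h : Rich τ N ε) {x y : V} (hx : x ∈ N) (hy : y ∈ N) (hxy : x ≠ y) :
    (1 - ε) * M / 2 ≤ ((Finset.univ.filter fun i => τ x i = τ y i).card : ℝ) := by
  have := h.card_ge (k := 2) (by norm_num) ![x, y] (injective_two hxy)
    (fun j => by fin_cases j; exacts [hx, hy]) (fun π => π 0 = π 1)
  have key : (Finset.univ.filter fun π : Fin 2 → Bool => π 0 = π 1).card = 2 := by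
    decide
  rw [key] at this
  refine le_trans (le_of_eq ?_) this
  push_cast; ring

theorem Rich.agree_le (h : Rich τ N ε) {x y : V} (hx : x ∈ N) (hy : y ∈ N) (hxy : x ≠ y) :
    ((Finset.univ.filter fun i => τ x i = τ y i).card : ℝ) ≤ (1 + ε) * M / 2 := by
  have := h.card_le (k := 2) (by norm_num) ![x, y] (injective_two hxy)
    (fun j => by fin_cases j; exacts [hx, hy]) (fun π => π 0 = π 1)
  have key : (Finset.univ.filter fun π : Fin 2 → Bool => ¬ π 0 = π 1).card = 2 := by
    decide
  rw [key] at this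
  refine le_trans this (le_of_eq ?_)
  push_cast; ring

theorem Rich.false_agree_le (h : Rich τ N ε) {x y z : V} (hx : x ∈ N) (hy : y ∈ N) (hz : z ∈ N)
    (hxy : x ≠ y) (hxz : x ≠ z) (hyz : y ≠ z) :
    ((Finset.univ.filter fun i => τ y i = false ∧ τ x i = τ z i).card : ℝ) ≤
      (1 + 3 * ε) * M / 4 := by
  have := h.card_le (k := 3) (by norm_num) ![x, y, z] (injective_three hxy hxz hyz)
    (fun j => by fin_cases j; exacts [hx, hy, hz]) (fun π => π 1 = false ∧ π 0 = π 2)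
  have key : (Finset.univ.filter fun π : Fin 3 → Bool => ¬ (π 1 = false ∧ π 0 = π 2)).card = 6 := by
    decide
  rw [key] at this
  refine le_trans this (le_of_eq ?_)
  push_cast; ring

theorem Rich.all_agree_le (h : Rich τ N ε) {x y z : V} (hx : x ∈ N) (hy : y ∈ N) (hz : z ∈ N)
    (hxy : x ≠ y) (hxz : x ≠ z) (hyz : y ≠ z) :
    ((Finset.univ.filter fun i => τ x i = τ y i ∧ τ x i = τ z i).card : ℝ) ≤
      (1 + 3 * ε) * M / 4 := by
  have := h.card_le (k := 3) (by norm_num) ![x, y, z] (injective_three hxy hxz hyz)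
    (fun j => by fin_cases j; exacts [hx, hy, hz]) (fun π => π 0 = π 1 ∧ π 0 = π 2)
  have key : (Finset.univ.filter fun π : Fin 3 → Bool => ¬ (π 0 = π 1 ∧ π 0 = π 2)).card = 6 := by
    decide
  rw [key] at this
  refine le_trans this (le_of_eq ?_)
  push_cast; ring

/-- The probability that an edge is not assigned a block with property `P`. -/
theorem not_hit_le {E : Type*} [Fintype E] [DecidableEq E] {r : (E → Option (Fin M)) → ℝ}
    (e : E) (P : Fin M → Prop) [DecidablePred P]
    (cap : Fin M → ℝ) {f B : ℝ} (hc : ∀ i, marg r (fun ω => ω) e (some i) ≤ cap i)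
    (hn : marg r (fun ω => ω) e none ≤ 1 - f) (hB : ∑ i, (if P i then 0 else cap i) ≤ B) :
    ∑ k, r k * (if (∃ i, k e = some i ∧ P i) then 0 else 1) ≤ 1 - f + B := by
  have e1 : ∀ k : E → Option (Fin M), (if (∃ i, k e = some i ∧ P i) then (0 : ℝ) else 1) =
      (if k e = none then 1 else 0) + ∑ i, if P i then 0 else if k e = some i then 1 else 0 := by
    intro k
    rcases hk : k e with _ | j
    · simp
    · simp only [Option.some.injEq, reduceCtorEq, if_false, zero_add]
      rw [Finset.sum_eq_single j]
      · simp
      · intro i _ hi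
        rw [if_neg (Ne.symm hi), ite_self]
      · simp
  have e2 : ∑ k, r k * (if (∃ i, k e = some i ∧ P i) then (0 : ℝ) else 1) =
      marg r (fun ω => ω) e none + ∑ i, if P i then 0 else marg r (fun ω => ω) e (some i) := by
    simp only [e1, mul_add, Finset.sum_add_distrib, Finset.mul_sum]
    rw [Finset.sum_comm]
    congr 1
    refine Finset.sum_congr rfl fun i _ => ?_
    by_cases h : P i
    · simp [h]
    · simp only [h, if_false]; rfl
  rw [e2]
  refine add_le_add hn (le_trans (Finset.sum_le_sum fun i _ => ?_) hB)
  split_ifs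
  · exact le_rfl
  · exact hc i

theorem sum_ite_const_le (P : Fin M → Prop) [DecidablePred P] (κ : ℝ) :
    ∑ i, (if P i then κ else 0) = ((Finset.univ.filter P).card : ℝ) * κ := by
  rw [← Finset.sum_filter, Finset.sum_const, nsmul_eq_mul]

end Rich

section Laws

variable {V : Type*} [Fintype V] [DecidableEq V] {G : SimpleGraph V} [DecidableRel G.Adj]
  {M D δ : ℕ} {τ : V → Fin M → Bool} {c f : ℝ}

theorem pointLaw_exists : ∃ r : (Sym2 V → Option (Fin M)) → ℝ, IsLaw r := by
  obtain ⟨r, hr, -⟩ := free_law (V := V) (M := M) (fun _ => 0) (fun _ => le_rfl) 0 le_rfl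
    zero_le_one (by simp)
  exact ⟨r, hr⟩

/-- The numerical relations between the minimum degree `δ`, the normalised block capacity `c` and
the fraction `f` of the edges that are put in blocks. The constants reflect the deviation `1 / 50`
allowed in the richness of the types; `d` stands for the number of large neighbours of a small
vertex. -/
structure Params (δ : ℕ) (c f : ℝ) : Prop where
  c_pos : 0 < c
  f_le_one : f ≤ 1
  f_le : f ≤ 49 / 50 * c
  le_f : 4 / 5 * c ≤ f
  three : δ = 3 → f = 1
  four : ∀ d : ℕ, 4 ≤ d → δ ≤ d → 16 / (5 * (1 - 1 / 50) * (d : ℝ)) ≤ f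
  leaf_cap : ∀ d : ℕ, δ ≤ d + 1 → 200 / 49 / (d : ℝ) ≤ 2 * c
  leaf_f : ∀ d : ℕ, δ ≤ d + 1 → 1 / (d : ℝ) ≤ f

/-- The law of the agent at a small vertex `y`. If all neighbours of `y` are large, it tells each of
them from another one by the block of an edge at `y`, and loads all blocks alike. Otherwise it uses
only blocks in which `y` has bit `false`, and if there is just one small neighbour `v`, some edge of
`y` gets a block in which `v` has bit `true`. -/
theorem small_law (h3 : 3 ≤ δ) (hδ : ∀ v, δ ≤ G.degree v) (hM : 0 < M) (hP : Params δ c f)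
    (hR : ∀ u, Rich τ (closedNbhd G u) (1 / 50)) (y : V) :
    ∃ r : (Sym2 V → Option (Fin M)) → ℝ, IsLaw r ∧
      (∀ e, marg r (fun ω => ω) e none ≤ 1 - f) ∧
      ((∀ w, G.Adj y w → D ≤ G.degree w) →
        (∀ e i, marg r (fun ω => ω) e (some i) ≤ c / M) ∧
        ∀ ω, 0 < r ω → ∀ v, G.Adj y v → ∃ x i, G.Adj y x ∧ ω s(y, x) = some i ∧ τ x i ≠ τ v i) ∧
      (¬ (∀ w, G.Adj y w → D ≤ G.degree w) →
        (∀ e i, marg r (fun ω => ω) e (some i) ≤ if τ y i = false then 2 * c / M else 0) ∧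
        ∀ ω, 0 < r ω → ∀ v, G.Adj y v → G.degree v < D →
          (∀ w, G.Adj y w → G.degree w < D → w = v) →
          ∃ x i, G.Adj y x ∧ D ≤ G.degree x ∧ ω s(y, x) = some i ∧ τ v i = true) := by
  have hM' : (0 : ℝ) < M := by exact_mod_cast hM
  have hf0 : 0 ≤ f := le_trans (by have := hP.c_pos; positivity) hP.le_f
  have hc := hP.c_pos
  have hyN : y ∈ closedNbhd G y := mem_closedNbhd.2 (.inl rfl)
  by_cases hall : ∀ w, G.Adj y w → D ≤ G.degree w
  · have hRN : Rich τ (G.neighborFinset y) (1 / 50) := (hR y).mono (Finset.subset_insert _ _)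
    have hcard := G.card_neighborFinset_eq_degree y
    have key : ∃ r : (Sym2 V → Option (Fin M)) → ℝ, IsLaw r ∧
        (∀ ω, 0 < r ω → ∀ v ∈ G.neighborFinset y,
          ∃ x i, x ∈ G.neighborFinset y ∧ ω s(y, x) = some i ∧ τ x i ≠ τ v i) ∧
        (∀ e i, marg r (fun ω => ω) e (some i) ≤ c / M) ∧
        (∀ e, marg r (fun ω => ω) e none ≤ 1 - f) := by
      by_cases hd : 4 ≤ G.degree y
      · exact config_law_four y hRN (hcard ▸ hd) hM (by norm_num) c f
          (by rw [hcard]; exact hP.four _ hd (hδ y)) (by linarith [hP.f_le]) hP.f_le_one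
      · have hy := hδ y
        have hf := hP.three (by omega)
        have hfl := hP.f_le
        subst hf
        exact config_law_three y hRN (by omega) hM (by norm_num) (by norm_num) c
          (by norm_num; linarith)
    obtain ⟨r, hr, hs, hcap, hn⟩ := key
    refine ⟨r, hr, hn, fun _ => ⟨hcap, fun ω hω v hv => ?_⟩, fun h => absurd hall h⟩
    obtain ⟨x, i, h1, h2⟩ := hs ω hω v (by simpa using hv)
    exact ⟨x, i, by simpa using h1, h2⟩
  · set cap : Fin M → ℝ := fun i => if τ y i = false then 2 * c / M else 0 with hcapdef
    have hcap0 : ∀ i, 0 ≤ cap i := fun i => by simp only [cap]; split_ifs <;> positivity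
    have hcapf : f ≤ ∑ i, cap i := by
      simp only [cap]
      rw [sum_ite_const_le]
      have h1 := (hR y).false_ge hyN
      calc f ≤ 49 / 50 * c := hP.f_le
        _ = ((1 - 1 / 50) * M / 2) * (2 * c / M) := by field_simp; norm_num
        _ ≤ _ := mul_le_mul_of_nonneg_right h1 (by positivity)
    by_cases huniq : ∃ v, G.Adj y v ∧ G.degree v < D ∧ ∀ w, G.Adj y w → G.degree w < D → w = v
    · obtain ⟨v, hyv, hv, hu⟩ := huniq
      set A := Finset.univ.filter fun i => τ y i = false ∧ τ v i = true with hA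
      have hAc : (1 - 1 / 50) * M / 4 ≤ (A.card : ℝ) :=
        (hR y).split_ge hyN (mem_closedNbhd.2 (.inr hyv)) hyv.ne
      have hA0 : (0 : ℝ) < A.card := lt_of_lt_of_le (by positivity) hAc
      set N := (G.neighborFinset y).erase v with hN
      have hNc : N.card + 1 = G.degree y := by
        have := Finset.card_erase_add_one ((G.mem_neighborFinset y v).2 hyv)
        rwa [SimpleGraph.card_neighborFinset_eq_degree] at this
      have hδN : δ ≤ N.card + 1 := hNc ▸ hδ y
      have hN1 : 0 < N.card := by omega
      have hN0 : (0 : ℝ) < N.card := by exact_mod_cast hN1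
      obtain ⟨r, hr, hs, hc', hn⟩ := leaf_law (V := V) y A
        (Finset.card_pos.1 (by exact_mod_cast hA0)) (Finset.card_pos.1 hN1)
        cap hcap0 f hP.f_le_one hcapf (by
          intro i hi
          have hi' : τ y i = false := ((Finset.mem_filter.1 hi).2).1
          simp only [cap, if_pos hi']
          have h1 := hP.leaf_cap N.card hδN
          calc 1 / ((N.card : ℝ) * A.card) ≤ 1 / (N.card * ((1 - 1 / 50) * M / 4)) := by
                gcongr
            _ = 200 / 49 / N.card / M := by field_simp; norm_num
            _ ≤ _ := by gcongr) (hP.leaf_f N.card hδN)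
      refine ⟨r, hr, hn, fun h => absurd h hall, fun _ => ⟨hc', fun ω hω v' hv' hd' hu' => ?_⟩⟩
      obtain ⟨x, i, h1, h2, h4⟩ := hs ω hω
      have hvv : v = v' := hu' v hyv hv
      have hx : x ≠ v ∧ G.Adj y x := by simpa [hN] using h1
      refine ⟨x, i, hx.2, ?_, h4, hvv ▸ ((Finset.mem_filter.1 h2).2).2⟩
      by_contra hlt
      exact hx.1 (hu x hx.2 (by omega))
    · obtain ⟨r, hr, hc', hn⟩ := free_law (V := V) cap hcap0 f hf0 hP.f_le_one hcapf
      refine ⟨r, hr, hn, fun h => absurd h hall, fun _ => ⟨hc', fun ω hω v hv hd hu => ?_⟩⟩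
      exact absurd ⟨v, hv, hd, hu⟩ huniq

/-- The law of the agent at an edge between two large vertices: only blocks in which the two bits
agree are used. -/
theorem large_law (hM : 0 < M) (hP : Params δ c f)
    (hR : ∀ u, Rich τ (closedNbhd G u) (1 / 50)) (e : Sym2 V) :
    ∃ r : (Sym2 V → Option (Fin M)) → ℝ, IsLaw r ∧ ∀ x z, e = s(x, z) → G.Adj x z →
      (∀ e, marg r (fun ω => ω) e none ≤ 1 - f) ∧
      (∀ e i, marg r (fun ω => ω) e (some i) ≤ if τ x i = τ z i then 2 * c / M else 0) := by
  have hM' : (0 : ℝ) < M := by exact_mod_cast hM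
  have hc := hP.c_pos
  have hf0 : 0 ≤ f := le_trans (by positivity) hP.le_f
  induction e using Sym2.ind with
  | _ x z =>
  by_cases hxz : G.Adj x z
  · set cap : Fin M → ℝ := fun i => if τ x i = τ z i then 2 * c / M else 0 with hcapdef
    obtain ⟨r, hr, hc', hn⟩ := free_law (V := V) cap
      (fun i => by simp only [cap]; split_ifs <;> positivity) f hf0 hP.f_le_one (by
        simp only [cap]
        rw [sum_ite_const_le]
        have h1 := (hR x).agree_ge (mem_closedNbhd.2 (.inl rfl)) (mem_closedNbhd.2 (.inr hxz))
          hxz.ne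
        calc f ≤ 49 / 50 * c := hP.f_le
          _ = ((1 - 1 / 50) * M / 2) * (2 * c / M) := by field_simp; norm_num
          _ ≤ _ := mul_le_mul_of_nonneg_right h1 (by positivity))
    refine ⟨r, hr, fun x' z' he _ => ⟨hn, fun e i => (hc' e i).trans (le_of_eq ?_)⟩⟩
    simp only [cap]
    rcases Sym2.eq_iff.1 he with ⟨rfl, rfl⟩ | ⟨rfl, rfl⟩
    · rfl
    · simp only [eq_comm]
  · obtain ⟨r, hr⟩ := pointLaw_exists (V := V) (M := M)
    refine ⟨r, hr, fun x' z' he h => absurd ?_ hxz⟩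
    rcases Sym2.eq_iff.1 he with ⟨rfl, rfl⟩ | ⟨rfl, rfl⟩
    exacts [h, h.symm]

end Laws

/-! ### The bound in terms of the parameters -/

section Assembly

variable {V : Type*} [Fintype V] [DecidableEq V] {G : SimpleGraph V} [DecidableRel G.Adj]
  {M D δ Δ : ℕ} {c f θ : ℝ}

open Classical in
/-- The agent choosing the block of an edge: a small endpoint if there is one, and the edge itself
otherwise. -/
noncomputable def agent (G : SimpleGraph V) [DecidableRel G.Adj] (D : ℕ) (e : Sym2 V) :
    V ⊕ Sym2 V :=
  if h : ∃ y, y ∈ e ∧ G.degree y < D then .inl h.choose else .inr e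

theorem agent_small {x y : V} (hx : D ≤ G.degree x) (hy : G.degree y < D) :
    agent G D s(x, y) = .inl y := by
  have h : ∃ w, w ∈ s(x, y) ∧ G.degree w < D := ⟨y, by simp, hy⟩
  rw [agent, dif_pos h]
  obtain ⟨h1, h2⟩ := h.choose_spec
  rcases Sym2.mem_iff.1 h1 with h3 | h3
  · rw [h3] at h2; omega
  · rw [h3]

theorem agent_large {x y : V} (hx : D ≤ G.degree x) (hy : D ≤ G.degree y) :
    agent G D s(x, y) = .inr s(x, y) := by
  rw [agent, dif_neg]
  rintro ⟨w, h1, h2⟩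
  rcases Sym2.mem_iff.1 h1 with rfl | rfl <;> omega

theorem agent_inj {x y y' : V} (hx : D ≤ G.degree x)
    (h : agent G D s(x, y) = agent G D s(x, y')) : y = y' := by
  rcases lt_or_ge (G.degree y) D with hy | hy <;> rcases lt_or_ge (G.degree y') D with hy' | hy'
  · rw [agent_small hx hy, agent_small hx hy'] at h
    exact Sum.inl.inj h
  · rw [agent_small hx hy, agent_large hx hy'] at h; cases h
  · rw [agent_large hx hy, agent_small hx hy'] at h; cases h
  · rw [agent_large hx hy, agent_large hx hy'] at h
    exact Sym2.congr_right.1 (Sum.inr.inj h)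

theorem agent_local {x y x' y' : V} (hx : D ≤ G.degree x) (hx' : D ≤ G.degree x')
    (hxy : G.Adj x y) (hxy' : G.Adj x' y') (h : agent G D s(x, y) = agent G D s(x', y')) :
    ∃ w, w ∈ closedNbhd G x ∧ w ∈ closedNbhd G x' := by
  rcases lt_or_ge (G.degree y) D with hy | hy <;> rcases lt_or_ge (G.degree y') D with hy' | hy'
  · rw [agent_small hx hy, agent_small hx' hy'] at h
    cases Sum.inl.inj h
    exact ⟨y, mem_closedNbhd.2 (.inr hxy), mem_closedNbhd.2 (.inr hxy')⟩
  · rw [agent_small hx hy, agent_large hx' hy'] at h; cases h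
  · rw [agent_large hx hy, agent_small hx' hy'] at h; cases h
  · rw [agent_large hx hy, agent_large hx' hy'] at h
    refine ⟨x, mem_closedNbhd.2 (.inl rfl), mem_closedNbhd.2 ?_⟩
    rcases Sym2.eq_iff.1 (Sum.inr.inj h) with ⟨rfl, rfl⟩ | ⟨rfl, rfl⟩
    · exact .inl rfl
    · exact .inr hxy'

open Classical in
/-- The share of the block capacity `2 * c / M` at a vertex with bit `β` that an edge to its
neighbour `y` may use when `y` has bit `γ`. -/
noncomputable def share (G : SimpleGraph V) [DecidableRel G.Adj] (D : ℕ) (y : V) (β γ : Bool) : ℝ :=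
  if D ≤ G.degree y then (if β = γ then 1 else 0)
  else if ∀ w, G.Adj y w → D ≤ G.degree w then 1 / 2 else if γ = false then 1 else 0

set_option maxHeartbeats 1000000 in
/-- The bound on the index in terms of the parameters of the construction, as long as these meet
the conditions of the two applications of the local lemma. -/
theorem index_le_of_params (h3 : 3 ≤ δ) (hδ : ∀ v, δ ≤ G.degree v) (hΔ : ∀ v, G.degree v ≤ Δ)
    (hΔ1 : 1 ≤ Δ) (hM : 1 ≤ M) (hD : 2 ≤ D) (hP : Params δ c f) (hc : c ≤ 17 / 15)
    (hθ : 0 < θ) (hθ1 : θ ≤ 1 / 300)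
    (hnum : 4 * ((Δ : ℝ) + 1) ^ 2 * (80 * ((Δ : ℝ) + 1) ^ 4 *
      Real.exp (-((1 / 50) ^ 2 * M / 1024)) + 2 * M * Real.exp (-(θ ^ 2 * Δ / 4))) ≤ 1)
    (hnum' : 4 * ((Δ : ℝ) + 1) ^ 2 * (M * Real.exp (-(θ ^ 2 * Δ / (8 * M))) +
      Real.exp (-(θ ^ 2 * Δ / 4)) + Δ * Real.exp (-((c / 4) ^ 2 * ((D : ℝ) - 1) / 4))) ≤ 1)
    (hDW : (D : ℝ) ≤ θ * Δ / M) :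
    inclusionChromaticIndex G ≤ (⌊(1 - f) * Δ + θ * Δ⌋₊ + 1) +
      (M * (2 * (⌊2 * c / M * ((1 / 2 + θ) * Δ) + θ * Δ / M⌋₊ + 1)) + (D ^ 2 + 1) ^ 2) := by
  have hM' : (1 : ℝ) ≤ M := by exact_mod_cast hM
  have hΔ' : (1 : ℝ) ≤ Δ := by exact_mod_cast hΔ1
  have hc0 := hP.c_pos
  have hf0 : 0 < f := lt_of_lt_of_le (by positivity) hP.le_f
  obtain ⟨τ, hR, hload⟩ := exists_types hΔ hΔ1 M hM (1 / 50) θ (by norm_num) (by norm_num) hθ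
    (by linarith) (share G D) (fun y β γ => by unfold share; split_ifs <;> norm_num)
    (fun y β γ => by unfold share; split_ifs <;> norm_num)
    (fun y β => by unfold share; cases β <;> split_ifs <;> simp_all <;> norm_num) hnum
  have hR : ∀ u, Rich τ (closedNbhd G u) (1 / 50) := by
    intro u s hs h4 t ht
    convert hR u s hs h4 t ht
  choose rs hrs hrs0 hrsC hrsL using small_law (D := D) h3 hδ hM hP hR
  choose rl hrl hrl' using large_law hM hP hR
  set p : V ⊕ Sym2 V → (Sym2 V → Option (Fin M)) → ℝ := Sum.elim rs rl with hp
  have hps : ∀ {x y}, D ≤ G.degree x → G.degree y < D → p (agent G D s(x, y)) = rs y :=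
    fun hx hy => by rw [agent_small hx hy]; rfl
  have hpl : ∀ {x y}, D ≤ G.degree x → D ≤ G.degree y → p (agent G D s(x, y)) = rl s(x, y) :=
    fun hx hy => by rw [agent_large hx hy]; rfl
  have hnone : ∀ x y, D ≤ G.degree x → G.Adj x y →
      marg (p (agent G D s(x, y))) (fun ω => ω) s(x, y) none ≤ 1 - f := by
    intro x y hx hxy
    rcases lt_or_ge (G.degree y) D with hy | hy
    · rw [hps hx hy]; exact hrs0 y _
    · rw [hpl hx hy]; exact (hrl' _ x y rfl hxy).1 _
  have hsome : ∀ x y i, D ≤ G.degree x → G.Adj x y →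
      marg (p (agent G D s(x, y))) (fun ω => ω) s(x, y) (some i) ≤
        2 * c / M * share G D y (τ x i) (τ y i) := by
    intro x y i hx hxy
    rcases lt_or_ge (G.degree y) D with hy | hy
    · rw [hps hx hy, share, if_neg (not_le.2 hy)]
      split_ifs with h1 h2
      · refine ((hrsC y h1).1 _ i).trans (le_of_eq ?_); ring
      · refine ((hrsL y h1).1 _ i).trans (le_of_eq ?_); rw [if_pos h2, mul_one]
      · refine ((hrsL y h1).1 _ i).trans (le_of_eq ?_); rw [if_neg h2, mul_zero]
    · rw [hpl hx hy, share, if_pos hy]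
      refine ((hrl' _ x y rfl hxy).2 _ i).trans (le_of_eq ?_)
      split_ifs <;> simp
  have hcert : ∀ x y z, D ≤ G.degree x → D ≤ G.degree z → G.Adj x y → G.Adj x z → y ≠ z →
      ∑ k, p (agent G D s(x, y)) k *
        (if (∃ i, k s(x, y) = some i ∧ τ x i ≠ τ z i) then 0 else 1) ≤ 1 - c / 4 := by
    intro x y z hx hz hxy hxz hyz
    have mx : x ∈ closedNbhd G x := mem_closedNbhd.2 (.inl rfl)
    have my : y ∈ closedNbhd G x := mem_closedNbhd.2 (.inr hxy)
    have mz : z ∈ closedNbhd G x := mem_closedNbhd.2 (.inr hxz)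
    have hle := hP.le_f
    have h2c : (0 : ℝ) ≤ 2 * c / M := by positivity
    have hbig : (1 + 3 * (1 / 50)) * (M : ℝ) / 4 * (2 * c / M) = 53 / 100 * c := by
      field_simp; norm_num
    rcases lt_or_ge (G.degree y) D with hy | hy
    · rw [hps hx hy]
      by_cases h1 : ∀ w, G.Adj y w → D ≤ G.degree w
      · have := not_hit_le s(x, y) (fun i => τ x i ≠ τ z i) (fun _ => c / M)
          (fun i => (hrsC y h1).1 _ i) (hrs0 y _) (B := 51 / 100 * c) (by
            simp only [ne_eq, ite_not]
            rw [sum_ite_const_le]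
            refine (mul_le_mul_of_nonneg_right ((hR x).agree_le mx mz hxz.ne)
              (by positivity)).trans (le_of_eq ?_)
            field_simp; norm_num)
        linarith
      · have := not_hit_le s(x, y) (fun i => τ x i ≠ τ z i)
          (fun i => if τ y i = false then 2 * c / M else 0)
          (fun i => (hrsL y h1).1 _ i) (hrs0 y _) (B := 53 / 100 * c) (by
            have e : ∀ i, (if τ x i ≠ τ z i then 0 else if τ y i = false then 2 * c / M else 0) =
                if τ y i = false ∧ τ x i = τ z i then 2 * c / M else 0 := by
              intro i; split_ifs <;> tauto
            rw [Finset.sum_congr rfl fun i _ => e i, sum_ite_const_le, ← hbig]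
            exact mul_le_mul_of_nonneg_right
              ((hR x).false_agree_le mx my mz hxy.ne hxz.ne hyz) h2c)
        linarith
    · rw [hpl hx hy]
      have := not_hit_le s(x, y) (fun i => τ x i ≠ τ z i)
        (fun i => if τ x i = τ y i then 2 * c / M else 0)
        (fun i => (hrl' _ x y rfl hxy).2 _ i) ((hrl' _ x y rfl hxy).1 _) (B := 53 / 100 * c) (by
          have e : ∀ i, (if τ x i ≠ τ z i then 0 else if τ x i = τ y i then 2 * c / M else 0) =
              if τ x i = τ y i ∧ τ x i = τ z i then 2 * c / M else 0 := by
            intro i; split_ifs <;> tauto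
          rw [Finset.sum_congr rfl fun i _ => e i, sum_ite_const_le, ← hbig]
          exact mul_le_mul_of_nonneg_right
            ((hR x).all_agree_le mx my mz hxy.ne hxz.ne hyz) h2c)
      linarith
  have hm1N : 2 * c / M * ((1 / 2 + θ) * Δ) ≤ 2 * Δ / M := by
    have e : 2 * c / M * ((1 / 2 + θ) * Δ) = c * (1 + 2 * θ) * Δ / M := by ring
    rw [e]
    have : c * (1 + 2 * θ) ≤ 2 := by nlinarith
    exact div_le_div_of_nonneg_right (mul_le_mul_of_nonneg_right this (by positivity))
      (by positivity)
  have hdeg : ∀ x, ((G.neighborFinset x).card : ℝ) ≤ Δ := fun x => by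
    rw [SimpleGraph.card_neighborFinset_eq_degree]; exact_mod_cast hΔ x
  obtain ⟨ω, hω0, hω⟩ := exists_blocks hΔ hΔ1 hD τ (agent G D) p
    (by rintro (y | e); exacts [hrs y, hrl e])
    (fun x y y' hx _ _ h => agent_inj hx h)
    (fun x y x' y' hx hx' hxy hxy' h => agent_local hx hx' hxy hxy' h)
    (m1 := 2 * c / M * ((1 / 2 + θ) * Δ)) (t1 := θ * Δ / M) (N1 := 2 * Δ / M)
    (m0 := (1 - f) * Δ) (t0 := θ * Δ) (η := c / 4) hm1N (by positivity)
    (by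
      rw [← mul_div_assoc]
      exact div_le_div_of_nonneg_right (by nlinarith) (by positivity))
    (fun x i hx => by
      refine (Finset.sum_le_sum fun y hy => hsome x y i hx (by simpa using hy)).trans ?_
      rw [← Finset.mul_sum]
      exact mul_le_mul_of_nonneg_left (hload x i (τ x i)) (by positivity))
    (by nlinarith) (by positivity) (by nlinarith)
    (fun x hx => by
      refine (Finset.sum_le_sum fun y hy => hnone x y hx (by simpa using hy)).trans ?_
      rw [Finset.sum_const, nsmul_eq_mul, mul_comm]
      exact mul_le_mul_of_nonneg_left (hdeg x) (by linarith [hP.f_le_one]))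
    (by positivity) (by linarith) hcert
    (by
      have e1 : (θ * Δ / M) ^ 2 / (4 * (2 * Δ / M)) = θ ^ 2 * Δ / (8 * M) := by
        field_simp; norm_num
      have e2 : (θ * Δ) ^ 2 / (4 * (Δ : ℝ)) = θ ^ 2 * Δ / 4 := by field_simp
      rw [e1, e2]; exact hnum')
  have hbs : ∀ {x y}, D ≤ G.degree x → G.degree y < D →
      ω (agent G D s(x, y)) = ω (.inl y) := fun hx hy => by rw [agent_small hx hy]
  have hzero : ∀ a e i, marg (p a) (fun ω => ω) e (some i) ≤ 0 → ω a e ≠ some i := by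
    intro a e i hle heq
    have hpa : IsLaw (p a) := by rcases a with y | e; exacts [hrs y, hrl e]
    have h1 : p a (ω a) * (if ω a e = some i then 1 else 0) ≤
        marg (p a) (fun ω => ω) e (some i) :=
      Finset.single_le_sum (f := fun k : Sym2 V → Option (Fin M) =>
        p a k * (if k e = some i then (1 : ℝ) else 0))
        (fun k _ => mul_nonneg (hpa.nonneg k) (by split_ifs <;> simp)) (Finset.mem_univ (ω a))
    rw [if_pos heq, mul_one] at h1
    linarith [hω0 a]
  have hncard : ∀ x a, {y | G.Adj x y ∧ ω (agent G D s(x, y)) s(x, y) = a}.ncard =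
      ((G.neighborFinset x).filter fun y => ω (agent G D s(x, y)) s(x, y) = a).card := by
    intro x a
    rw [← Set.ncard_coe_finset]
    congr 1
    ext y; simp
  have hDθ : (D : ℝ) ≤ θ * Δ := hDW.trans (div_le_self (by positivity) hM')
  refine index_le_of_blocks G D M _ _ ?_ ?_ τ (fun e => ω (agent G D e) e) ?_ ?_ ?_ ?_ ?_ ?_ ?_
  · refine Nat.le_floor (hDW.trans (le_add_of_nonneg_left (by positivity)))
  · refine Nat.le_floor (hDθ.trans (le_add_of_nonneg_left ?_))
    exact mul_nonneg (by linarith [hP.f_le_one]) (by positivity)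
  · intro x y i hxy hx hy hb
    by_contra hne
    refine hzero _ _ i ?_ hb
    rw [hpl hx hy]
    refine ((hrl' _ x y rfl hxy).2 _ i).trans (le_of_eq (if_neg hne))
  · intro x i hx
    rw [hncard]
    exact Nat.le_floor ((hω x hx).1 i).le
  · intro x hx
    rw [hncard]
    exact Nat.le_floor (hω x hx).2.1.le
  · intro u hu hall v huv
    obtain ⟨x, i, h1, h2, h4⟩ := (hrsC u hall).2 (ω (.inl u)) (hω0 (.inl u)) v huv
    refine ⟨x, i, h1, ?_, h4⟩
    rw [Sym2.eq_swap, hbs (hall x h1) hu, Sym2.eq_swap, h2]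
  · intro u w x i hu huw hw hux hx hb
    by_contra hne
    have hnall : ¬ ∀ w, G.Adj u w → D ≤ G.degree w := fun h => absurd (h w huw) (not_le.2 hw)
    rw [Sym2.eq_swap] at hb
    refine hzero _ _ i ?_ hb
    rw [hps hx hu]
    exact ((hrsL u hnall).1 _ i).trans (le_of_eq (if_neg hne))
  · intro u v hu huv hv huniq
    have hnall : ¬ ∀ w, G.Adj u w → D ≤ G.degree w := fun h => absurd (h v huv) (not_le.2 hv)
    obtain ⟨x, i, h1, h2, h4, h5⟩ :=
      (hrsL u hnall).2 (ω (.inl u)) (hω0 (.inl u)) v huv hv huniq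
    refine ⟨x, i, h1, h2, ?_, h5⟩
    rw [Sym2.eq_swap, hbs h2 hu, Sym2.eq_swap, h4]
  · intro x z hxz hx hz
    exact (hω x hx).2.2 z hxz hz

end Assembly

/-! ### Choice of the parameters -/

/-- The choice of parameters: `c = 17 / (5 δ)` and `f = min 1 (49 c / 50)`. -/
theorem params_hold {δ : ℕ} (h3 : 3 ≤ δ) :
    Params δ (17 / (5 * (δ : ℝ))) (min 1 (49 / 50 * (17 / (5 * (δ : ℝ))))) := by
  have hδ : (3 : ℝ) ≤ δ := by exact_mod_cast h3
  have hc : 17 / (5 * (δ : ℝ)) ≤ 17 / 15 := by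
    rw [div_le_div_iff₀ (by positivity) (by norm_num)]; linarith
  have hf : 49 / 50 * (17 / (5 * (δ : ℝ))) = 833 / 250 / δ := by field_simp; norm_num
  have hc0 : 0 < 17 / (5 * (δ : ℝ)) := by positivity
  refine ⟨hc0, min_le_left _ _, min_le_right _ _, le_min (by linarith) (by linarith), ?_, ?_, ?_, ?_⟩
  · rintro rfl
    refine min_eq_left ?_
    norm_num
  · intro d h4 hd
    have h4' : (4 : ℝ) ≤ d := by exact_mod_cast h4
    have hd' : (δ : ℝ) ≤ d := by exact_mod_cast hd
    rw [hf]
    refine le_min ?_ ?_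
    · rw [div_le_one (by nlinarith)]; linarith
    · rw [div_le_div_iff₀ (by nlinarith) (by positivity)]
      nlinarith
  · intro d hd
    have hd' : (δ : ℝ) ≤ d + 1 := by exact_mod_cast hd
    have hd0 : (0 : ℝ) < d := by linarith
    rw [← mul_div_assoc, div_le_div_iff₀ hd0 (by positivity)]
    nlinarith
  · intro d hd
    have hd' : (δ : ℝ) ≤ d + 1 := by exact_mod_cast hd
    have hd0 : (0 : ℝ) < d := by linarith
    rw [hf]
    refine le_min ?_ ?_
    · rw [div_le_one hd0]; linarith
    · rw [div_le_div_iff₀ hd0 (by positivity)]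
      nlinarith

/-- With these parameters the leading coefficient stays below `1 + 4 / δ` by a margin of
`1 / (10 * δ)`. -/
theorem leading_coeff_le {δ : ℕ} (h3 : 3 ≤ δ) :
    (1 - min 1 (49 / 50 * (17 / (5 * (δ : ℝ))))) + 1 / (100 * (δ : ℝ)) +
      2 * (2 * (17 / (5 * (δ : ℝ))) * (1 / 2 + 1 / (100 * (δ : ℝ))) + 1 / (100 * (δ : ℝ))) +
      1 / (10 * (δ : ℝ)) ≤ 1 + 4 / (δ : ℝ) := by
  rcases h3.eq_or_lt with rfl | h4
  · rw [min_eq_left (by norm_num)]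
    norm_num
  · have hδ : (4 : ℝ) ≤ δ := by exact_mod_cast h4
    have hx : (δ : ℝ)⁻¹ ≤ 1 / 4 := by rw [inv_le_comm₀ (by positivity) (by norm_num)]; linarith
    have hx0 : 0 < (δ : ℝ)⁻¹ := by positivity
    have e : ∀ a b : ℝ, a / (b * (δ : ℝ)) = a / b * (δ : ℝ)⁻¹ := fun a b => by
      rw [← div_div, div_eq_mul_inv (a / b)]
    simp only [e, div_eq_mul_inv 4 (δ : ℝ)]
    rw [min_eq_right (by linarith)]
    nlinarith

theorem eventually_exp_small (κ : ℝ) (hκ : 0 < κ) :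
    ∃ n₀ : ℕ, ∀ n : ℕ, n₀ ≤ n → 328 * (2 * (n : ℝ)) ^ 96 * Real.exp (-(κ * n)) ≤ 1 := by
  have h1 := tendsto_rpow_mul_exp_neg_mul_atTop_nhds_zero 96 κ hκ
  have h2 : Filter.Tendsto (fun n : ℕ => 328 * 2 ^ 96 *
      ((n : ℝ) ^ (96 : ℝ) * Real.exp (-κ * n))) Filter.atTop (nhds (328 * 2 ^ 96 * 0)) :=
    (h1.comp tendsto_natCast_atTop_atTop).const_mul _
  rw [mul_zero] at h2
  obtain ⟨n₀, hn⟩ := Filter.eventually_atTop.1 (h2.eventually (ge_mem_nhds one_pos))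
  refine ⟨n₀, fun n h => le_trans (le_of_eq ?_) (hn n h)⟩
  have : (n : ℝ) ^ (96 : ℝ) = (n : ℝ) ^ 96 := by exact_mod_cast Real.rpow_natCast (n : ℝ) 96
  rw [this, mul_pow, neg_mul]; ring

theorem exists_root (Δ : ℕ) (N : ℕ) (hN : N ^ 16 ≤ Δ) :
    ∃ n, N ≤ n ∧ n ^ 16 ≤ Δ ∧ Δ < (n + 1) ^ 16 := by
  refine ⟨Nat.findGreatest (fun n => n ^ 16 ≤ Δ) Δ, Nat.le_findGreatest
    ((Nat.le_self_pow (by norm_num) N).trans hN) hN,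
    Nat.findGreatest_spec (P := fun n => n ^ 16 ≤ Δ) (Nat.zero_le Δ) (by simp), ?_⟩
  by_contra h
  push Not at h
  exact Nat.findGreatest_is_greatest (P := fun n => n ^ 16 ≤ Δ) (Nat.lt_succ_self _)
    ((Nat.le_self_pow (by norm_num) _).trans h) h

theorem pow_six_le {x y : ℝ} (hx : 0 ≤ x) (h : x ≤ y ^ 16) : x ^ 6 ≤ y ^ 96 :=
  (pow_le_pow_left₀ hx h 6).trans (le_of_eq (pow_mul y 16 6).symm)

/-- The scale `n`, roughly `Δ ^ (1 / 16)`: powers of `n` up to the sixteenth stay below `Δ`, while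
`exp (-κ n)` beats every polynomial in `Δ` that occurs in the two applications of the local
lemma. -/
theorem exists_scale (δ : ℕ) (κ : ℝ) (hκ : 0 < κ) :
    ∃ Δ₀ : ℕ, ∀ Δ : ℕ, Δ₀ ≤ Δ → ∃ n : ℕ, 100 * δ ≤ n ∧ n ^ 16 ≤ Δ ∧
      4 * ((Δ : ℝ) + 1) ^ 2 * (82 * ((Δ : ℝ) + 1) ^ 4 * Real.exp (-(κ * n))) ≤ 1 := by
  obtain ⟨n₀, hn₀⟩ := eventually_exp_small κ hκ
  refine ⟨(max n₀ (100 * δ + 1)) ^ 16, fun Δ hΔ => ?_⟩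
  obtain ⟨n, hn, hnΔ, hΔn⟩ := exists_root Δ _ hΔ
  have hnE := hn₀ n (le_of_max_le_left hn)
  have hn1 := le_of_max_le_right hn
  refine ⟨n, (Nat.le_succ _).trans hn1, hnΔ, ?_⟩
  have h1 : (n : ℝ) + 1 ≤ 2 * n := by
    have : 1 ≤ n := (Nat.le_add_left _ _).trans hn1
    exact_mod_cast (by omega : n + 1 ≤ 2 * n)
  have h2 : (Δ : ℝ) + 1 ≤ ((n : ℝ) + 1) ^ 16 := by exact_mod_cast hΔn
  have h3 := pow_six_le (by positivity) (h2.trans (pow_le_pow_left₀ (by positivity) h1 16))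
  refine le_trans (le_of_eq_of_le ?_ (mul_le_mul_of_nonneg_right
    (mul_le_mul_of_nonneg_left h3 (by norm_num)) (Real.exp_nonneg _))) hnE
  generalize (Δ : ℝ) + 1 = x
  ring

set_option maxHeartbeats 1000000 in
theorem main_bound_large_Delta (δ : ℕ) (h3 : 3 ≤ δ) :
    ∃ Δ₀ : ℕ, ∀ (V : Type) [Fintype V] (G : SimpleGraph V) [DecidableRel G.Adj] (Δ : ℕ),
      G.minDegree = δ → G.maxDegree = Δ → Δ₀ ≤ Δ →
      (inclusionChromaticIndex G : ℝ) ≤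
        (1 + 4 / (δ : ℝ)) * Δ + 4 * (Δ : ℝ) ^ ((2 : ℝ) / 3) * Real.log Δ ^ 4 := by
  have hδ : (3 : ℝ) ≤ δ := by exact_mod_cast h3
  -- `κ * n` is a lower bound for all exponents in the two applications of the local lemma
  obtain ⟨κ, hκdef⟩ : ∃ κ : ℝ, κ = 1 / (3000000 * (δ : ℝ) ^ 2) := ⟨_, rfl⟩
  have hκ : 0 < κ := by rw [hκdef]; positivity
  obtain ⟨Δ₀, hΔ₀⟩ := exists_scale δ κ hκ
  refine ⟨Δ₀, fun V _ G _ Δ hmin hmax hΔ => ?_⟩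
  classical
  obtain ⟨n, hnδ', hnΔ, hmainE⟩ := hΔ₀ Δ hΔ
  have hnδ : 100 * (δ : ℝ) ≤ n := by exact_mod_cast hnδ'
  have hpow : ∀ k ≤ 16, (n : ℝ) ^ k ≤ Δ := fun k hk =>
    (pow_le_pow_right₀ (by linarith) hk).trans (by exact_mod_cast hnΔ)
  clear hnΔ
  have hn1 : (300 : ℝ) ≤ n := by linarith
  have hn0 : (0 : ℝ) < n := by linarith
  have hn1' : 300 ≤ n := by exact_mod_cast hn1
  have hnΔ1 : (n : ℝ) ≤ Δ := by simpa using hpow 1 (by norm_num)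
  have hΔ1 : (1 : ℝ) ≤ Δ := by linarith
  obtain ⟨E, hE⟩ : ∃ E : ℝ, E = Real.exp (-(κ * n)) := ⟨_, rfl⟩
  have hE0 : 0 ≤ E := by rw [hE]; positivity
  rw [← hE] at hmainE
  have hexp : ∀ a : ℝ, κ * n ≤ a → Real.exp (-a) ≤ E := fun a ha => by
    rw [hE, Real.exp_le_exp]; linarith
  have hκn : κ * n = n / (3000000 * (δ : ℝ) ^ 2) := by rw [hκdef]; ring
  obtain ⟨θ, hθdef⟩ : ∃ θ : ℝ, θ = 1 / (100 * (δ : ℝ)) := ⟨_, rfl⟩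
  have hθ : 0 < θ := by rw [hθdef]; positivity
  have hθ2 : θ ^ 2 = 1 / (10000 * (δ : ℝ) ^ 2) := by rw [hθdef, div_pow]; ring
  obtain ⟨c, hcdef⟩ : ∃ c : ℝ, c = 17 / (5 * (δ : ℝ)) := ⟨_, rfl⟩
  obtain ⟨f, hfdef⟩ : ∃ f : ℝ, f = min 1 (49 / 50 * c) := ⟨_, rfl⟩
  have hP : Params δ c f := by rw [hfdef, hcdef]; exact params_hold h3
  have x1 : κ * n ≤ (1 / 50) ^ 2 * ((n ^ 2 : ℕ) : ℝ) / 1024 := by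
    have : κ ≤ 1 / 3000000 := by
      rw [hκdef]
      exact one_div_le_one_div_of_le (by norm_num) (by nlinarith)
    push_cast
    nlinarith
  have x3 : κ * n ≤ θ ^ 2 * Δ / (8 * ((n ^ 2 : ℕ) : ℝ)) := by
    have := hpow 3 (by norm_num)
    rw [hκn, hθ2]
    push_cast
    calc (n : ℝ) / (3000000 * (δ : ℝ) ^ 2) ≤ n / (80000 * (δ : ℝ) ^ 2) := by
          gcongr; norm_num
      _ = 1 / (10000 * (δ : ℝ) ^ 2) * (n : ℝ) ^ 3 / (8 * (n : ℝ) ^ 2) := by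
          field_simp; norm_num
      _ ≤ _ := by gcongr
  have x2 : κ * n ≤ θ ^ 2 * Δ / 4 := by
    refine x3.trans ?_
    have : (1 : ℝ) ≤ (n : ℝ) ^ 2 := one_le_pow₀ (by linarith)
    push_cast
    gcongr
    linarith
  have x4 : κ * n ≤ (c / 4) ^ 2 * ((n : ℝ) - 1) / 4 := by
    rw [hκn]
    have e : (c / 4) ^ 2 * ((n : ℝ) - 1) / 4 = 289 / 1600 * (n - 1) / (δ : ℝ) ^ 2 := by
      rw [hcdef]; field_simp; ring
    rw [e, ← div_div]
    gcongr
    linarith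
  have hM1 : ((n ^ 2 : ℕ) : ℝ) ≤ (Δ : ℝ) + 1 := by
    push_cast; linarith [hpow 2 (by norm_num)]
  have hM0 : (0 : ℝ) ≤ ((n ^ 2 : ℕ) : ℝ) := by positivity
  have hΔ4 : (Δ : ℝ) + 1 ≤ ((Δ : ℝ) + 1) ^ 4 := le_self_pow₀ (by linarith) (by norm_num)
  have hidx := index_le_of_params (G := G) (D := n) (M := n ^ 2) (δ := δ) (Δ := Δ) (c := c) (f := f)
    (θ := θ) h3 (fun v => hmin ▸ G.minDegree_le_degree v) (fun v => hmax ▸ G.degree_le_maxDegree v)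
    (by exact_mod_cast hΔ1) (Nat.one_le_pow _ _ (by omega)) (by omega) hP
    (by rw [hcdef, div_le_div_iff₀ (by positivity) (by norm_num)]; linarith) hθ
    (by rw [hθdef]; exact one_div_le_one_div_of_le (by norm_num) (by linarith))
    (by
      refine le_trans ?_ hmainE
      gcongr 4 * ((Δ : ℝ) + 1) ^ 2 * ?_
      calc _ ≤ 80 * ((Δ : ℝ) + 1) ^ 4 * E + 2 * ((Δ : ℝ) + 1) ^ 4 * E := by
            have := hexp _ x1
            have := hexp _ x2
            have := hM1.trans hΔ4
            gcongr
        _ = _ := by ring)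
    (by
      refine le_trans ?_ hmainE
      gcongr 4 * ((Δ : ℝ) + 1) ^ 2 * ?_
      calc _ ≤ ((Δ : ℝ) + 1) * E + E + Δ * E := by
            have := hexp _ x3
            have := hexp _ x2
            have := hexp _ x4
            gcongr
        _ = 2 * (((Δ : ℝ) + 1) * E) := by ring
        _ ≤ 2 * (((Δ : ℝ) + 1) ^ 4 * E) := by gcongr
        _ ≤ _ := by nlinarith [show (0 : ℝ) ≤ ((Δ : ℝ) + 1) ^ 4 * E by positivity])
    (by
      have h4 := hpow 4 (by norm_num)
      rw [hθdef, le_div_iff₀ (by positivity)]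
      push_cast
      rw [one_div_mul_eq_div, le_div_iff₀ (by positivity)]
      calc (n : ℝ) * n ^ 2 * (100 * δ) ≤ n * n ^ 2 * n := by gcongr
        _ = (n : ℝ) ^ 4 := by ring
        _ ≤ Δ := h4)
  have hidx' : (inclusionChromaticIndex G : ℝ) ≤ (⌊(1 - f) * Δ + θ * Δ⌋₊ + 1) +
      ((n : ℝ) ^ 2 * (2 * (⌊2 * c / ((n ^ 2 : ℕ) : ℝ) * ((1 / 2 + θ) * Δ) +
        θ * Δ / ((n ^ 2 : ℕ) : ℝ)⌋₊ + 1)) + ((n : ℝ) ^ 2 + 1) ^ 2) := by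
    exact_mod_cast hidx
  have hc0 := hP.c_pos
  have hW0 : (⌊(1 - f) * Δ + θ * Δ⌋₊ : ℝ) ≤ (1 - f) * Δ + θ * Δ :=
    Nat.floor_le (add_nonneg (mul_nonneg (by linarith [hP.f_le_one]) (by positivity))
      (by positivity))
  have hW : (n : ℝ) ^ 2 * (⌊2 * c / ((n ^ 2 : ℕ) : ℝ) * ((1 / 2 + θ) * Δ) +
      θ * Δ / ((n ^ 2 : ℕ) : ℝ)⌋₊ : ℝ) ≤ 2 * c * ((1 / 2 + θ) * Δ) + θ * Δ := by
    refine (mul_le_mul_of_nonneg_left (Nat.floor_le (by positivity)) (by positivity)).trans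
      (le_of_eq ?_)
    push_cast
    field_simp
  have hlow : 1 + 2 * (n : ℝ) ^ 2 + ((n : ℝ) ^ 2 + 1) ^ 2 ≤ 1 / (10 * (δ : ℝ)) * Δ := by
    have h5 := hpow 5 (by norm_num)
    rw [one_div_mul_eq_div, le_div_iff₀ (by positivity)]
    have h1 : (1 : ℝ) ≤ (n : ℝ) ^ 2 := one_le_pow₀ (by linarith)
    calc (1 + 2 * (n : ℝ) ^ 2 + ((n : ℝ) ^ 2 + 1) ^ 2) * (10 * δ) ≤
          (10 * (n : ℝ) ^ 4) * (10 * δ) := by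
            gcongr
            nlinarith
      _ = (n : ℝ) ^ 4 * (100 * δ) := by ring
      _ ≤ (n : ℝ) ^ 4 * n := by gcongr
      _ = (n : ℝ) ^ 5 := by ring
      _ ≤ Δ := h5
  have hlead := mul_le_mul_of_nonneg_right (leading_coeff_le h3) (by linarith : (0 : ℝ) ≤ Δ)
  rw [← hcdef, ← hfdef, ← hθdef] at hlead
  have hlog : 0 ≤ 4 * (Δ : ℝ) ^ ((2 : ℝ) / 3) * Real.log Δ ^ 4 := by positivity
  refine le_add_of_le_of_nonneg ?_ hlog
  refine hidx'.trans (le_trans ?_ hlead)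
  linarith
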